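/- arXiv:2403.17079 — 3 statements merged into one kernel-verified Lean document; each statement's English description precedes it below -/
import Mathlib

section
/- Let (Q, m, k) be a commutative Noetherian local ring, let f_1, …, f_n be a Q-regular sequence contained in m, set I = (f_1, …, f_n) and R = Q/I. Then for every finitely generated R-module M and every integer i ≥ 0 one has the coefficient-wise inequality β_i^R(M) ≤ Σ_{j ≥ 0, 2j ≤ i} C(n−1+j, n−1) · β_{i−2j}^Q(M), where C(a,b) denotes the binomial coefficient. (Equivalently, P_M^R(t) ≼ P_M^Q(t)·(1−t²)^{−n} coefficient-wise.) -/
open CategoryTheory TensorProduct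

/-- The `i`-th Betti number of a module `M` over a local ring `A`:
`β_i^A(M) = dim_k Tor_i^A(M, k)`, computed as the `k`-dimension of
`k ⊗_A Tor_i^A(M, k)` (the two agree since `Tor_i^A(M, k)` is a `k`-vector
space, being annihilated by the maximal ideal of `A`). -/
noncomputable def bettiNumber (A : Type) [CommRing A] [IsLocalRing A]
    (M : Type) [AddCommGroup M] [Module A M] (i : ℕ) : ℕ :=
  Module.finrank (IsLocalRing.ResidueField A)
    (IsLocalRing.ResidueField A ⊗[A]
      (((Tor (ModuleCat A) i).obj (ModuleCat.of A M)).obj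
        (ModuleCat.of A (IsLocalRing.ResidueField A))))

lemma exact_conj_equiv {A X Y Z X' Y' Z' : Type*} [CommRing A] [AddCommGroup X] [AddCommGroup Y]
    [AddCommGroup Z] [AddCommGroup X'] [AddCommGroup Y'] [AddCommGroup Z'] [Module A X] [Module A Y]
    [Module A Z] [Module A X'] [Module A Y'] [Module A Z'] (jX : X ≃ₗ[A] X') (jY : Y ≃ₗ[A] Y')
    (jZ : Z ≃ₗ[A] Z') (f : X' →ₗ[A] Y') (g : Y' →ₗ[A] Z') (h : Function.Exact f g) :
    Function.Exact (jY.symm.toLinearMap ∘ₗ f ∘ₗ jX.toLinearMap)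
      (jZ.symm.toLinearMap ∘ₗ g ∘ₗ jY.toLinearMap) := by
  intro y
  constructor
  · intro hy
    have : g (jY y) = 0 := by simpa using hy
    obtain ⟨x, hx⟩ := (h _).mp this
    exact ⟨jX.symm x, by simp [hx]⟩
  · rintro ⟨x, rfl⟩
    simp [h.apply_apply_eq_zero]

lemma length_mid_le {A X Y Z : Type*} [CommRing A] [AddCommGroup X] [AddCommGroup Y]
    [AddCommGroup Z] [Module A X] [Module A Y] [Module A Z] (f : X →ₗ[A] Y) (g : Y →ₗ[A] Z)
    (h : Function.Exact f g) : Module.length A Y ≤ Module.length A X + Module.length A Z := by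
  rw [Module.length_eq_add_of_exact (LinearMap.ker g).subtype g.rangeRestrict
    (Submodule.subtype_injective _) (LinearMap.surjective_rangeRestrict _)
    (by intro x; simp [Subtype.ext_iff])]
  refine add_le_add ?_ (Module.length_le_of_injective _ (Submodule.subtype_injective _))
  rw [h.linearMap_ker_eq]
  exact Module.length_le_of_surjective _ (LinearMap.surjective_rangeRestrict f)

/-- Tor module. -/
noncomputable abbrev torK (A : Type) [CommRing A] [IsLocalRing A]
    (M : Type) [AddCommGroup M] [Module A M] (i : ℕ) : ModuleCat A :=
  ((Tor (ModuleCat A) i).obj (ModuleCat.of A M)).obj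
        (ModuleCat.of A (IsLocalRing.ResidueField A))

section
variable (A : Type) [CommRing A] [IsLocalRing A]

noncomputable abbrev resK : ProjectiveResolution (ModuleCat.of A (IsLocalRing.ResidueField A)) :=
  projectiveResolution _

noncomputable abbrev cplxK (M : ModuleCat A) : ChainComplex (ModuleCat A) ℕ :=
  (((MonoidalCategory.tensoringLeft (ModuleCat A)).obj M).mapHomologicalComplex _).obj
    (resK A).complex

noncomputable abbrev cplxKMap {M N : ModuleCat A} (g : M ⟶ N) : cplxK A M ⟶ cplxK A N :=
  (NatTrans.mapHomologicalComplex ((MonoidalCategory.tensoringLeft (ModuleCat A)).map g) _).app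
    (resK A).complex

noncomputable def torIso (M : Type) [AddCommGroup M] [Module A M] (i : ℕ) :
    torK A M i ≅ (cplxK A (ModuleCat.of A M)).homology i :=
  (resK A).isoLeftDerivedObj _ i

noncomputable def torZeroEquiv (M : Type) [AddCommGroup M] [Module A M] :
    torK A M 0 ≃ₗ[A] M ⊗[A] (IsLocalRing.ResidueField A) :=
  (((MonoidalCategory.tensoringLeft (ModuleCat A)).obj (ModuleCat.of A M)).leftDerivedZeroIsoSelf.app
    (ModuleCat.of A (IsLocalRing.ResidueField A))).toLinearEquiv

lemma flat_res (i : ℕ) : Module.Flat A ((resK A).complex.X i) := by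
  have : Projective ((resK A).complex.X i) := (resK A).projective i
  have : Module.Projective A ((resK A).complex.X i) := by
    exact (IsProjective.iff_projective _).mpr this
  infer_instance

lemma torK_flat_subsingleton (M : Type) [AddCommGroup M] [Module A M] [Module.Flat A M] (i : ℕ) :
    Subsingleton (torK A M (i+1)) := by
  have e := torIso A M (i+1)
  suffices h : Limits.IsZero ((cplxK A (ModuleCat.of A M)).homology (i+1)) from
    ModuleCat.subsingleton_of_isZero (h.of_iso e)
  rw [← HomologicalComplex.exactAt_iff_isZero_homology]
  have hP : (resK A).complex.ExactAt (i+1) := (resK A).complex_exactAt_succ i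
  rw [HomologicalComplex.exactAt_iff' _ (i+2) (i+1) i (by simp) (by simp),
    ShortComplex.ShortExact.moduleCat_exact_iff_function_exact] at hP ⊢
  exact Module.Flat.lTensor_exact M hP

variable {N F M : Type} [AddCommGroup N] [AddCommGroup F] [AddCommGroup M]
  [Module A N] [Module A F] [Module A M] (g : N →ₗ[A] F) (h : F →ₗ[A] M)

noncomputable def sesK (hgh : h ∘ₗ g = 0) : ShortComplex (ChainComplex (ModuleCat A) ℕ) :=
  ShortComplex.mk (cplxKMap A (ModuleCat.ofHom g)) (cplxKMap A (ModuleCat.ofHom h)) (by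
    ext i : 1
    ext : 1
    change (LinearMap.rTensor _ h) ∘ₗ (LinearMap.rTensor _ g) = 0
    rw [← LinearMap.rTensor_comp, hgh, LinearMap.rTensor_zero])

lemma sesK_shortExact (hg : Function.Injective g) (hh : Function.Surjective h)
    (hgh : Function.Exact g h) : (sesK A g h hgh.linearMap_comp_eq_zero).ShortExact := by
  apply HomologicalComplex.shortExact_of_degreewise_shortExact
  intro i
  have := flat_res A i
  apply ModuleCat.shortComplex_shortExact
  · exact rTensor_exact ((resK A).complex.X i) hgh hh
  · exact Module.Flat.rTensor_preserves_injective_linearMap (M := (resK A).complex.X i) g hg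
  · exact LinearMap.rTensor_surjective ((resK A).complex.X i) hh

lemma tor_les (hg : Function.Injective g) (hh : Function.Surjective h)
    (hgh : Function.Exact g h) (i : ℕ) :
    ∃ (b : torK A F (i+1) →ₗ[A] torK A M (i+1)) (d : torK A M (i+1) →ₗ[A] torK A N i)
      (c : torK A N i →ₗ[A] torK A F i) (e : torK A F i →ₗ[A] torK A M i),
      Function.Exact b d ∧ Function.Exact d c ∧ Function.Exact c e ∧
        (i = 0 → Function.Surjective e) := by
  have hS := sesK_shortExact A g h hg hh hgh
  set S := sesK A g h hgh.linearMap_comp_eq_zero with hSdef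
  have e1 := hS.homology_exact₃ (i+1) i (by simp)
  have e2 := hS.homology_exact₁ (i+1) i (by simp)
  have e3 := hS.homology_exact₂ i
  have e4 : i = 0 → Epi (HomologicalComplex.homologyMap S.g i) := by
    rintro rfl
    have := hS.epi_g
    have h1 := ChainComplex.isoHomologyι₀_inv_naturality S.g
    have : HomologicalComplex.homologyMap S.g 0 = S.X₂.isoHomologyι₀.hom ≫
       HomologicalComplex.opcyclesMap S.g 0 ≫ S.X₃.isoHomologyι₀.inv := by
      rw [← h1, Iso.hom_inv_id_assoc]
    rw [this]
    infer_instance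
  rw [ShortComplex.ShortExact.moduleCat_exact_iff_function_exact] at e1 e2 e3
  let jF := (torIso A F (i+1)).toLinearEquiv
  let jM := (torIso A M (i+1)).toLinearEquiv
  let jN' := (torIso A N i).toLinearEquiv
  let jF' := (torIso A F i).toLinearEquiv
  let jM' := (torIso A M i).toLinearEquiv
  let b := (HomologicalComplex.homologyMap S.g (i+1)).hom
  let d := (hS.δ (i+1) i (by simp)).hom
  let c := (HomologicalComplex.homologyMap S.f i).hom
  let e := (HomologicalComplex.homologyMap S.g i).hom
  refine ⟨jM.symm.toLinearMap ∘ₗ b ∘ₗ jF.toLinearMap, jN'.symm.toLinearMap ∘ₗ d ∘ₗ jM.toLinearMap,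
    jF'.symm.toLinearMap ∘ₗ c ∘ₗ jN'.toLinearMap,
    jM'.symm.toLinearMap ∘ₗ e ∘ₗ jF'.toLinearMap, ?_, ?_, ?_, ?_⟩
  · exact exact_conj_equiv jF jM jN' b d e1
  · exact exact_conj_equiv jM jN' jF' d c e2
  · exact exact_conj_equiv jN' jF' jM' c e e3
  · intro hi
    have := e4 hi
    have he : Function.Surjective e := (ModuleCat.epi_iff_surjective _).mp this
    exact jM'.symm.surjective.comp (he.comp jF'.surjective)

lemma torK_mid1 (hg : Function.Injective g) (hh : Function.Surjective h)
    (hgh : Function.Exact g h) (i : ℕ) :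
    Module.length A (torK A M (i+1)) ≤
      Module.length A (torK A F (i+1)) + Module.length A (torK A N i) := by
  obtain ⟨b, d, c, e, h1, h2, h3, h4⟩ := tor_les A g h hg hh hgh i
  exact length_mid_le b d h1

lemma torK_mid2 (hg : Function.Injective g) (hh : Function.Surjective h)
    (hgh : Function.Exact g h) (i : ℕ) :
    Module.length A (torK A N i) ≤
      Module.length A (torK A M (i+1)) + Module.length A (torK A F i) := by
  obtain ⟨b, d, c, e, h1, h2, h3, h4⟩ := tor_les A g h hg hh hgh i
  exact length_mid_le d c h2

lemma torK_min (hg : Function.Injective g) (hh : Function.Surjective h)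
    (hgh : Function.Exact g h)
    (hm : Module.length A (torK A F 0) ≤ Module.length A (torK A M 0))
    (hfin : Module.length A (torK A M 0) ≠ ⊤) :
    Module.length A (torK A N 0) ≤ Module.length A (torK A M 1) := by
  obtain ⟨b, d, c, e, h1, h2, h3, h4⟩ := tor_les A g h hg hh hgh 0
  have he := h4 rfl
  have key := Module.length_eq_add_of_exact (LinearMap.ker e).subtype e
    (Submodule.subtype_injective _) he (by intro x; simp)
  rw [key] at hm
  have h0 : Module.length A (LinearMap.ker e) = 0 := by
    generalize Module.length A (LinearMap.ker e) = u at hm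
    generalize Module.length A (torK A M 0) = v at hm hfin
    lift v to ℕ using hfin
    cases u with
    | top => simp at hm
    | coe u => norm_cast at hm ⊢; omega
  rw [Module.length_eq_zero_iff] at h0
  have hc : ∀ x, c x = 0 := by
    intro x
    have : (⟨c x, h3.apply_apply_eq_zero x⟩ : LinearMap.ker e) = 0 := Subsingleton.elim _ _
    exact congrArg Subtype.val this
  have hd : Function.Surjective d := fun x => (h2 x).mp (hc x)
  exact Module.length_le_of_surjective d hd

lemma torK_flat_length (M : Type) [AddCommGroup M] [Module A M] [Module.Flat A M] (i : ℕ) :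
    Module.length A (torK A M (i+1)) = 0 := by
  have := torK_flat_subsingleton A M i
  exact Module.length_eq_zero

lemma length_residue : Module.length A (IsLocalRing.ResidueField A) = 1 := by
  have h : Function.Surjective (algebraMap A (IsLocalRing.ResidueField A)) :=
    Ideal.Quotient.mk_surjective
  rw [Module.length_eq_of_surjective (R := IsLocalRing.ResidueField A) h]
  exact Module.length_eq_one _ _

lemma torK_zero_free (b : ℕ) : Module.length A (torK A (Fin b → A) 0) = b := by
  rw [(torZeroEquiv A (Fin b → A)).length_eq]
  have e : ((Fin b → A) ⊗[A] IsLocalRing.ResidueField A) ≃ₗ[A]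
      (Fin b → IsLocalRing.ResidueField A) :=
    TensorProduct.comm _ _ _ ≪≫ₗ TensorProduct.piScalarRight A A _ _
  rw [e.length_eq, Module.length_pi, length_residue]
  simp

/-- The modules `Tor_i(M, k)` are killed by the maximal ideal. -/
lemma torK_killed : ∀ (i : ℕ) (M : Type) [AddCommGroup M] [Module A M]
    (a : A) (_ : a ∈ IsLocalRing.maximalIdeal A) (x : torK A M i), a • x = 0 := by
  intro i
  induction i with
  | zero =>
    intro M _ _ a ha x
    apply (torZeroEquiv A M).injective
    rw [map_smul, map_zero]
    induction (torZeroEquiv A M x) using TensorProduct.induction_on with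
    | zero => simp
    | add x y hx hy => rw [smul_add, hx, hy, add_zero]
    | tmul m k =>
      rw [← TensorProduct.tmul_smul, Algebra.smul_def]
      have : algebraMap A (IsLocalRing.ResidueField A) a = 0 :=
        (IsLocalRing.residue_eq_zero_iff a).mpr ha
      rw [this, zero_mul, TensorProduct.tmul_zero]
  | succ i ih =>
    intro M _ _ a ha x
    obtain ⟨F, _, _, _, h, hh⟩ : ∃ (F : Type) (_ : AddCommGroup F) (_ : Module A F)
        (_ : Module.Flat A F) (h : F →ₗ[A] M), Function.Surjective h :=
      ⟨M →₀ A, inferInstance, inferInstance, inferInstance,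
        Finsupp.linearCombination A id, Finsupp.linearCombination_id_surjective A M⟩
    have hx := h.exact_subtype_ker_map
    obtain ⟨b, d, c, e, h1, h2, h3, h4⟩ := tor_les A (Submodule.subtype (LinearMap.ker h)) h
      (Submodule.subtype_injective _) hh hx i
    have := torK_flat_subsingleton A F i
    have hx : d (a • x) = 0 := by rw [map_smul]; exact ih _ a ha _
    obtain ⟨y, hy⟩ := (h1 _).mp hx
    rw [← hy, Subsingleton.elim y 0, map_zero]

lemma torK_finite [IsNoetherianRing A] : ∀ (i : ℕ) (M : Type) [AddCommGroup M] [Module A M]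
    [Module.Finite A M], Module.length A (torK A M i) ≠ ⊤ := by
  intro i
  induction i with
  | zero =>
    intro M _ _ _
    obtain ⟨b, h, hh⟩ := Module.Finite.exists_fin' A M
    rw [(torZeroEquiv A M).length_eq]
    have h1 : Module.length A (M ⊗[A] IsLocalRing.ResidueField A) ≤ b := by
      rw [← torK_zero_free A b, (torZeroEquiv A _).length_eq]
      exact Module.length_le_of_surjective _ (LinearMap.rTensor_surjective _ hh)
    exact ne_top_of_le_ne_top (ENat.natCast_ne_top b) h1
  | succ i ih =>
    intro M _ _ _
    obtain ⟨b, h, hh⟩ := Module.Finite.exists_fin' A M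
    have := torK_mid1 A (LinearMap.ker h).subtype h
      (Submodule.subtype_injective _) hh (by intro x; simp) i
    rw [torK_flat_length A (Fin b → A), zero_add] at this
    exact ne_top_of_le_ne_top (ih _) this

lemma length_tensor_killed (T : Type) [AddCommGroup T] [Module A T]
    (hT : ∀ a ∈ IsLocalRing.maximalIdeal A, ∀ x : T, a • x = 0) :
    Module.length (IsLocalRing.ResidueField A) (IsLocalRing.ResidueField A ⊗[A] T) =
      Module.length A T := by
  have h : Function.Surjective (algebraMap A (IsLocalRing.ResidueField A)) :=
    Ideal.Quotient.mk_surjective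
  rw [← Module.length_eq_of_surjective (R := IsLocalRing.ResidueField A) h]
  have e1 : (IsLocalRing.ResidueField A ⊗[A] T) ≃ₗ[A]
    T ⧸ (IsLocalRing.maximalIdeal A • (⊤ : Submodule A T)) :=
    TensorProduct.quotTensorEquivQuotSMul T (IsLocalRing.maximalIdeal A)
  have h0 : IsLocalRing.maximalIdeal A • (⊤ : Submodule A T) = ⊥ := by
    rw [eq_bot_iff, Submodule.smul_le]
    intro a ha x _
    simp [hT a ha x]
  rw [e1.length_eq, (Submodule.quotEquivOfEqBot _ h0).length_eq]

end

lemma betti_eq (A : Type) [CommRing A] [IsLocalRing A] (M : Type) [AddCommGroup M] [Module A M]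
    (i : ℕ) : bettiNumber A M i = (Module.length A (torK A M i)).toNat := by
  rw [← length_tensor_killed A (torK A M i) (torK_killed A i M), Module.length_eq_rank]
  rw [bettiNumber, Module.finrank]
  exact (Cardinal.toNat_toENat _).symm

lemma betti_cast (A : Type) [CommRing A] [IsLocalRing A] [IsNoetherianRing A]
    (M : Type) [AddCommGroup M] [Module A M] [Module.Finite A M] (i : ℕ) :
    (bettiNumber A M i : ℕ∞) = Module.length A (torK A M i) := by
  rw [betti_eq, ENat.natCast_toNat (torK_finite A i M)]

lemma exists_min_cover (R : Type) [CommRing R] [IsLocalRing R]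
    (M : Type) [AddCommGroup M] [Module R M] [Module.Finite R M] :
    ∃ (b : ℕ) (h : (Fin b → R) →ₗ[R] M), Function.Surjective h ∧
      Module.length R (torK R M 0) = b := by
  let k := IsLocalRing.ResidueField R
  let w := Module.finBasis k (k ⊗[R] M)
  obtain ⟨v, hv⟩ := (TensorProduct.mk_surjective R M k Ideal.Quotient.mk_surjective).comp_left w
  have hs := IsLocalRing.span_eq_top_of_tmul_eq_basis v w (congr_fun hv)
  refine ⟨Module.finrank k (k ⊗[R] M), Fintype.linearCombination R v, ?_, ?_⟩
  · rw [← LinearMap.range_eq_top, Fintype.range_linearCombination, hs]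
  · rw [(torZeroEquiv R M).length_eq, (TensorProduct.comm R M k).length_eq,
      Module.length_eq_of_surjective (R := k) (S := R) Ideal.Quotient.mk_surjective,
      Module.length_eq_finrank]

section
variable (Q R : Type) [CommRing Q] [IsLocalRing Q]
  [CommRing R] [IsLocalRing R] [Algebra Q R]

lemma torK_zero_le (hsurj : Function.Surjective (algebraMap Q R))
    (M : Type) [AddCommGroup M] [Module Q M] [Module R M] [IsScalarTower Q R M] :
    Module.length R (torK R M 0) ≤ Module.length Q (torK Q M 0) := by
  have hloc : IsLocalHom (algebraMap Q R) := IsLocalHom.of_surjective _ hsurj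
  have eA : ∀ (A : Type) [CommRing A] [IsLocalRing A] [Module A M],
      Module.length A (torK A M 0) =
        Module.length A (M ⧸ (IsLocalRing.maximalIdeal A • (⊤ : Submodule A M))) := by
    intro A _ _ _
    rw [(torZeroEquiv A M).length_eq]
    exact (TensorProduct.comm A M _ ≪≫ₗ
      (TensorProduct.quotTensorEquivQuotSMul M (IsLocalRing.maximalIdeal A) :
        (IsLocalRing.ResidueField A ⊗[A] M) ≃ₗ[A] _)).length_eq
  rw [eA R, eA Q, ← Module.length_eq_of_surjective (R := R) (S := Q) hsurj]
  set P : Submodule R M := IsLocalRing.maximalIdeal R • (⊤ : Submodule R M) with hP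
  let q : M →ₗ[Q] M ⧸ P := P.mkQ.restrictScalars Q
  have hq : Function.Surjective q := P.mkQ_surjective
  have hle : IsLocalRing.maximalIdeal Q • (⊤ : Submodule Q M) ≤ LinearMap.ker q := by
    rw [Submodule.smul_le]
    intro a ha x _
    rw [LinearMap.mem_ker]
    refine (Submodule.Quotient.mk_eq_zero P).mpr ?_
    rw [← algebraMap_smul R a x]
    refine Submodule.smul_mem_smul ?_ trivial
    exact (IsLocalRing.mem_maximalIdeal _).mpr
      (fun hu => (IsLocalRing.mem_maximalIdeal _).mp ha (isUnit_of_map_unit (algebraMap Q R) a hu))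
  refine Module.length_le_of_surjective (Submodule.liftQ _ q hle) ?_
  rw [← LinearMap.range_eq_top, Submodule.range_liftQ, LinearMap.range_eq_top]
  exact hq

lemma torK_zero_pi_le (hsurj : Function.Surjective (algebraMap Q R))
    (b : ℕ) : Module.length Q (torK Q (Fin b → R) 0) ≤ b := by
  rw [← torK_zero_free Q b, (torZeroEquiv Q _).length_eq, (torZeroEquiv Q _).length_eq]
  refine Module.length_le_of_surjective
    (LinearMap.rTensor _ (LinearMap.compLeft (Algebra.linearMap Q R) (Fin b))) ?_
  exact LinearMap.rTensor_surjective _ hsurj.comp_left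

lemma pi_exact (f : Q) (hker : RingHom.ker (algebraMap Q R) = Ideal.span {f}) (b : ℕ) :
    Function.Exact (f • (LinearMap.id : (Fin b → Q) →ₗ[Q] (Fin b → Q)))
      (LinearMap.compLeft (Algebra.linearMap Q R) (Fin b)) := by
  intro x
  constructor
  · intro hx
    have h1 : ∀ j, ∃ c, f * c = x j := by
      intro j
      have : x j ∈ RingHom.ker (algebraMap Q R) := congrFun hx j
      rw [hker, Ideal.mem_span_singleton] at this
      obtain ⟨c, hc⟩ := this
      exact ⟨c, hc.symm⟩
    choose c hc using h1
    exact ⟨c, funext hc⟩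
  · rintro ⟨c, rfl⟩
    funext j
    have : f * c j ∈ RingHom.ker (algebraMap Q R) := by
      rw [hker]; exact Ideal.mul_mem_right _ _ (Ideal.mem_span_singleton_self f)
    exact this

lemma torK_one_pi_le (hsurj : Function.Surjective (algebraMap Q R))
    (f : Q) (hker : RingHom.ker (algebraMap Q R) = Ideal.span {f})
    (hf : ∀ x, f * x = 0 → x = 0) (b : ℕ) :
    Module.length Q (torK Q (Fin b → R) 1) ≤ b ∧
    ∀ i, Module.length Q (torK Q (Fin b → R) (i+2)) = 0 := by
  have hex := pi_exact Q R f hker b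
  have hinj : Function.Injective (f • (LinearMap.id : (Fin b → Q) →ₗ[Q] (Fin b → Q))) := by
    rw [injective_iff_map_eq_zero]
    intro x hx
    funext j
    exact hf _ (congrFun hx j)
  have hs : Function.Surjective (LinearMap.compLeft (Algebra.linearMap Q R) (Fin b)) :=
    hsurj.comp_left
  constructor
  · have := torK_mid1 Q _ _ hinj hs hex 0
    rw [torK_flat_length Q (Fin b → Q), torK_zero_free, zero_add] at this
    simpa using this
  · intro i
    have := torK_mid1 Q _ _ hinj hs hex (i+1)
    rw [torK_flat_length Q (Fin b → Q), torK_flat_length Q (Fin b → Q)] at this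
    simpa using this

/-- The case of zero kernel -/
lemma torK_bij_le [IsNoetherianRing Q] (hsurj : Function.Surjective (algebraMap Q R))
    (hker : RingHom.ker (algebraMap Q R) = ⊥) : ∀ (i : ℕ)
    (M : Type) [AddCommGroup M] [Module Q M] [Module R M] [IsScalarTower Q R M]
    [Module.Finite R M], Module.length R (torK R M i) ≤ Module.length Q (torK Q M i) := by
  have hR : IsNoetherianRing R := isNoetherianRing_of_surjective Q R _ hsurj
  have hQR : Module.Finite Q R := Module.Finite.of_surjective (Algebra.linearMap Q R) hsurj
  intro i
  induction i with
  | zero => intro M _ _ _ _ _; exact torK_zero_le Q R hsurj M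
  | succ i ih =>
    intro M _ _ _ _ _
    have : Module.Finite Q M := Module.Finite.trans R M
    obtain ⟨b, h, hh, hb⟩ := exists_min_cover R M
    have h1 := torK_mid1 R (LinearMap.ker h).subtype h
      (Submodule.subtype_injective _) hh h.exact_subtype_ker_map i
    rw [torK_flat_length R (Fin b → R), zero_add] at h1
    refine h1.trans ((ih (LinearMap.ker h)).trans ?_)
    let gQ : LinearMap.ker h →ₗ[Q] (Fin b → R) := (LinearMap.ker h).subtype.restrictScalars Q
    let hQ : (Fin b → R) →ₗ[Q] M := h.restrictScalars Q
    have gi : Function.Injective gQ := Submodule.subtype_injective _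
    have hs : Function.Surjective hQ := hh
    have hex : Function.Exact gQ hQ := h.exact_subtype_ker_map
    cases i with
    | zero =>
      refine torK_min Q gQ hQ gi hs hex ?_ (torK_finite Q 0 M)
      refine (torK_zero_pi_le Q R hsurj b).trans ?_
      rw [← hb]
      exact torK_zero_le Q R hsurj M
    | succ i =>
      have h5 := torK_mid2 Q gQ hQ gi hs hex (i+1)
      have e : Q ≃ₗ[Q] R := LinearEquiv.ofBijective (Algebra.linearMap Q R)
        ⟨(RingHom.injective_iff_ker_eq_bot (algebraMap Q R)).mpr hker, hsurj⟩
      have : Module.Flat Q R := Module.Flat.of_linearEquiv e.symm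
      have : Module.Flat Q (Fin b → R) :=
        Module.Flat.of_linearEquiv (LinearEquiv.piCongrRight (fun _ : Fin b => e)).symm
      rwa [torK_flat_length Q (Fin b → R), add_zero] at h5

/-- The one-element case -/
lemma torK_step [IsNoetherianRing Q] (hsurj : Function.Surjective (algebraMap Q R))
    (f : Q) (hker : RingHom.ker (algebraMap Q R) = Ideal.span {f})
    (hf : ∀ x, f * x = 0 → x = 0) : ∀ (i : ℕ)
    (M : Type) [AddCommGroup M] [Module Q M] [Module R M] [IsScalarTower Q R M]
    [Module.Finite R M], Module.length R (torK R M i) ≤ Module.length Q (torK Q M i) +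
      if 2 ≤ i then Module.length R (torK R M (i-2)) else 0 := by
  have hR : IsNoetherianRing R := isNoetherianRing_of_surjective Q R _ hsurj
  have hQR : Module.Finite Q R := Module.Finite.of_surjective (Algebra.linearMap Q R) hsurj
  intro i
  induction i with
  | zero => intro M _ _ _ _ _; simpa using torK_zero_le Q R hsurj M
  | succ i ih =>
    intro M _ _ _ _ _
    have : Module.Finite Q M := Module.Finite.trans R M
    obtain ⟨b, h, hh, hb⟩ := exists_min_cover R M
    have h1 := torK_mid1 R (LinearMap.ker h).subtype h
      (Submodule.subtype_injective _) hh h.exact_subtype_ker_map i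
    rw [torK_flat_length R (Fin b → R), zero_add] at h1
    refine h1.trans ((ih (LinearMap.ker h)).trans ?_)
    let gQ : LinearMap.ker h →ₗ[Q] (Fin b → R) := (LinearMap.ker h).subtype.restrictScalars Q
    let hQ : (Fin b → R) →ₗ[Q] M := h.restrictScalars Q
    have gi : Function.Injective gQ := Submodule.subtype_injective _
    have hs : Function.Surjective hQ := hh
    have hex : Function.Exact gQ hQ := h.exact_subtype_ker_map
    obtain ⟨t1, t2⟩ := torK_one_pi_le Q R hsurj f hker hf b
    match i with
    | 0 =>
      simp only [Nat.not_ofNat_le_one, zero_add, if_false, add_zero, nonpos_iff_eq_zero,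
        OfNat.ofNat_ne_zero]
      refine torK_min Q gQ hQ gi hs hex ?_ (torK_finite Q 0 M)
      refine (torK_zero_pi_le Q R hsurj b).trans ?_
      rw [← hb]
      exact torK_zero_le Q R hsurj M
    | 1 =>
      have := torK_mid2 Q gQ hQ gi hs hex 1
      simp only [Nat.not_ofNat_le_one, if_false, add_zero, Nat.reduceAdd, le_refl, if_true]
      rw [hb]
      exact this.trans (add_le_add le_rfl t1)
    | j + 2 =>
      have h3 := torK_mid2 Q gQ hQ gi hs hex (j+2)
      rw [t2, add_zero] at h3
      rw [if_pos (by omega), if_pos (by omega)]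
      refine add_le_add h3 ?_
      change Module.length R (torK R (LinearMap.ker h) j) ≤ Module.length R (torK R M (j+1))
      cases j with
      | zero =>
        refine torK_min R _ h (Submodule.subtype_injective _) hh h.exact_subtype_ker_map ?_
          (torK_finite R 0 M)
        rw [hb, torK_zero_free]
      | succ j =>
        have := torK_mid2 R _ h (Submodule.subtype_injective _) hh h.exact_subtype_ker_map (j+1)
        rwa [torK_flat_length R (Fin b → R), add_zero] at this
end

/-- The right hand side of the inequality. -/
def shamashSum (β : ℕ → ℕ) (n i : ℕ) : ℕ :=
  ∑ j ∈ Finset.range (i / 2 + 1), Nat.choose (n + j - 1) j * β (i - 2 * j)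

lemma shamashSum_zero (β : ℕ → ℕ) (i : ℕ) : shamashSum β 0 i = β i := by
  rw [shamashSum, Finset.sum_range_succ', Finset.sum_eq_zero]
  · simp
  · intro j _
    rw [Nat.choose_eq_zero_of_lt (by omega), zero_mul]

lemma shamashSum_succ (β : ℕ → ℕ) (n i : ℕ) : shamashSum β (n+1) i =
    shamashSum β n i + if 2 ≤ i then shamashSum β (n+1) (i-2) else 0 := by
  split_ifs with h
  · obtain ⟨i, rfl⟩ := Nat.exists_eq_add_of_le' h
    have e : (i + 2) / 2 = i / 2 + 1 := by omega
    simp only [shamashSum, e, Nat.add_sub_cancel]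
    rw [Finset.sum_range_succ' _ (i/2+1), Finset.sum_range_succ' _ (i/2+1)]
    simp only [Nat.choose_zero_right]
    rw [add_right_comm, ← Finset.sum_add_distrib]
    congr 1
    refine Finset.sum_congr rfl fun j _ => ?_
    have e1 : n + 1 + (j + 1) - 1 = (n + j) + 1 := by omega
    have e2 : n + (j + 1) - 1 = n + j := by omega
    have e3 : n + 1 + j - 1 = n + j := by omega
    have e4 : i + 2 - 2 * (j + 1) = i - 2 * j := by omega
    rw [e1, e2, e3, e4, Nat.choose_succ_succ]
    ring
  · have e : i / 2 = 0 := by omega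
    simp [shamashSum, e]

lemma betti_list (Q : Type) [CommRing Q] [IsNoetherianRing Q] [IsLocalRing Q] (rs : List Q)
    (hreg : RingTheory.Sequence.IsWeaklyRegular Q rs)
    (hm : ∀ r ∈ rs, r ∈ IsLocalRing.maximalIdeal Q) (n : ℕ) : n ≤ rs.length →
    ∀ (R : Type) [CommRing R] [IsLocalRing R] [Algebra Q R]
    (_ : Function.Surjective (algebraMap Q R))
    (_ : RingHom.ker (algebraMap Q R) = Ideal.ofList (rs.take n))
    (M : Type) [AddCommGroup M] [Module Q M] [Module R M] [IsScalarTower Q R M]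
    [Module.Finite R M] (i : ℕ), bettiNumber R M i ≤ shamashSum (bettiNumber Q M) n i := by
  induction n with
  | zero =>
    intro _ R _ _ _ hsurj hker M _ _ _ _ _ i
    have hR : IsNoetherianRing R := isNoetherianRing_of_surjective Q R _ hsurj
    have hQR : Module.Finite Q R := Module.Finite.of_surjective (Algebra.linearMap Q R) hsurj
    have : Module.Finite Q M := Module.Finite.trans R M
    rw [shamashSum_zero]
    have := torK_bij_le Q R hsurj (by simpa using hker) i M
    rw [← betti_cast, ← betti_cast] at this
    exact_mod_cast this
  | succ n ih =>
    intro hn R _ _ _ hsurj hker M _ _ _ _ _ i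
    have hR : IsNoetherianRing R := isNoetherianRing_of_surjective Q R _ hsurj
    set J := Ideal.ofList (rs.take n) with hJ
    have htake : Ideal.ofList (rs.take (n+1)) = J ⊔ Ideal.span {rs[n]} := by
      rw [List.take_succ_eq_append_getElem (by omega), Ideal.ofList_append, Ideal.ofList_singleton]
    have hJm : J ≤ IsLocalRing.maximalIdeal Q := by
      rw [hJ, Ideal.span_le]
      intro r hr
      exact hm r (List.mem_of_mem_take hr)
    have hnt : Nontrivial (Q ⧸ J) := Ideal.Quotient.nontrivial_iff.mpr
      (fun h => (IsLocalRing.maximalIdeal.isMaximal Q).ne_top (top_le_iff.mp (h ▸ hJm)))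
    have hloc : IsLocalRing (Q ⧸ J) :=
      IsLocalRing.of_surjective' (Ideal.Quotient.mk J) Ideal.Quotient.mk_surjective
    let φ : (Q ⧸ J) →+* R := Ideal.Quotient.lift J (algebraMap Q R) (fun a ha => by
      have : a ∈ RingHom.ker (algebraMap Q R) := by
        rw [hker, htake]; exact Ideal.mem_sup_left ha
      exact this)
    let _ : Algebra (Q ⧸ J) R := φ.toAlgebra
    let _ : Module (Q ⧸ J) M := Module.compHom M φ
    have t1 : IsScalarTower (Q ⧸ J) R M := ⟨fun a r m => by
      rw [Algebra.smul_def, mul_smul]; rfl⟩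
    have t2 : IsScalarTower Q (Q ⧸ J) M := ⟨fun a r m => by
      obtain ⟨r, rfl⟩ := Ideal.Quotient.mk_surjective r
      change algebraMap Q R (a * r) • m = a • (algebraMap Q R r) • m
      rw [map_mul, mul_smul, algebraMap_smul]⟩
    have hsurj' : Function.Surjective (algebraMap (Q ⧸ J) R) := by
      intro r
      obtain ⟨q, rfl⟩ := hsurj r
      exact ⟨Ideal.Quotient.mk J q, rfl⟩
    have hQR : Module.Finite (Q ⧸ J) R :=
      Module.Finite.of_surjective (Algebra.linearMap (Q ⧸ J) R) hsurj'
    have hfin : Module.Finite (Q ⧸ J) M := Module.Finite.trans R M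
    have hker' : RingHom.ker (algebraMap (Q ⧸ J) R) =
        Ideal.span {Ideal.Quotient.mk J rs[n]} := by
      ext x
      obtain ⟨q, rfl⟩ := Ideal.Quotient.mk_surjective x
      have h1 : Ideal.Quotient.mk J q ∈ RingHom.ker (algebraMap (Q ⧸ J) R) ↔
        q ∈ RingHom.ker (algebraMap Q R) := Iff.rfl
      rw [h1, hker, htake, ← Set.image_singleton, ← Ideal.map_span,
        ← Ideal.mem_comap, Ideal.comap_map_of_surjective' _ Ideal.Quotient.mk_surjective,
        Ideal.mk_ker, sup_comm]
    have hf : ∀ x : Q ⧸ J, Ideal.Quotient.mk J rs[n] * x = 0 → x = 0 := by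
      intro x hx
      obtain ⟨q, rfl⟩ := Ideal.Quotient.mk_surjective x
      have hr := hreg.regular_mod_prev n (by omega)
      rw [← map_mul, Ideal.Quotient.eq_zero_iff_mem] at hx
      rw [Ideal.Quotient.eq_zero_iff_mem]
      have e : (Ideal.ofList (rs.take n) • ⊤ : Submodule Q Q) = J := by
        rw [smul_eq_mul, Ideal.mul_top]
      rw [e] at hr
      have : rs[n] • (Submodule.Quotient.mk q : Q ⧸ J) = rs[n] • (0 : Q ⧸ J) := by
        rw [smul_zero, ← Submodule.Quotient.mk_smul, Submodule.Quotient.mk_eq_zero]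
        exact hx
      exact (Submodule.Quotient.mk_eq_zero _).mp (hr this)
    have key : ∀ i, bettiNumber R M i ≤ bettiNumber (Q ⧸ J) M i +
        if 2 ≤ i then bettiNumber R M (i-2) else 0 := by
      intro i
      have := torK_step (Q ⧸ J) R hsurj' _ hker' hf i M
      simp only [← betti_cast] at this
      split_ifs at this ⊢ <;> exact_mod_cast this
    have hprev := ih (by omega) (Q ⧸ J) Ideal.Quotient.mk_surjective Ideal.mk_ker M
    induction i using Nat.strong_induction_on with
    | _ i ihi =>
      rw [shamashSum_succ]
      refine (key i).trans (add_le_add (hprev i) ?_)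
      split_ifs with h
      · exact ihi _ (by omega)
      · exact le_rfl

/-- **Shamash's inequality.** If `f₁, …, fₙ` is a `Q`-regular sequence contained in
the maximal ideal of a Noetherian local ring `Q`, `I = (f₁, …, fₙ)`, `R = Q/I`, then
for every finitely generated `R`-module `M` and all `i ≥ 0`,
`β_i^R(M) ≤ ∑_{2j ≤ i} C(n−1+j, n−1) · β_{i−2j}^Q(M)`, i.e.
`P_M^R(t) ≼ P_M^Q(t)·(1−t²)^{−n}` coefficient-wise. -/
theorem betti_quotient_le_of_regular_sequence
    (Q : Type) [CommRing Q] [IsNoetherianRing Q] [IsLocalRing Q]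
    (n : ℕ) (f : Fin n → Q)
    (hreg : RingTheory.Sequence.IsRegular Q (List.ofFn f))
    (hfm : ∀ j, f j ∈ IsLocalRing.maximalIdeal Q)
    (I : Ideal Q) (hI : I = Ideal.span (Set.range f))
    [IsLocalRing (Q ⧸ I)]
    (M : Type) [AddCommGroup M] [Module Q M] [Module (Q ⧸ I) M]
    [IsScalarTower Q (Q ⧸ I) M] [Module.Finite (Q ⧸ I) M]
    (i : ℕ) :
    bettiNumber (Q ⧸ I) M i ≤
      ∑ j ∈ Finset.range (i / 2 + 1),
        Nat.choose (n + j - 1) j * bettiNumber Q M (i - 2 * j) := by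
  subst hI
  have hker : RingHom.ker (algebraMap Q (Q ⧸ Ideal.span (Set.range f))) =
      Ideal.ofList ((List.ofFn f).take n) := by
    rw [List.take_of_length_le (by simp)]
    refine Ideal.mk_ker.trans ?_
    congr 1
    ext x
    simp [List.mem_ofFn]
  exact betti_list Q (List.ofFn f) hreg.toIsWeaklyRegular
    (by intro r hr; obtain ⟨j, rfl⟩ := List.mem_ofFn.mp hr; exact hfm j) n (by simp)
    (Q ⧸ Ideal.span (Set.range f)) Ideal.Quotient.mk_surjective hker M i
end

section
/- Let (Q, m, k) be a commutative Noetherian local ring, let f_1, …, f_n be a Q-regular sequence contained in m, set I = (f_1, …, f_n) and R = Q/I. If M is a finitely generated R-module with I ⊆ m·ann_Q(M), then for every integer i ≥ 0 one has the equality β_i^R(M) = Σ_{j ≥ 0, 2j ≤ i} C(n−1+j, n−1) · β_{i−2j}^Q(M), where C(a,b) denotes the binomial coefficient. (Equivalently, P_M^R(t) = P_M^Q(t)·(1−t²)^{−n}.) -/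
open CategoryTheory TensorProduct

section Shamash

/-- Degree `z` part of the graded module `ι →₀ N`. -/
def Sh.gr {ι : Type} (deg : ι → ℤ) (A N : Type) [CommRing A] [AddCommGroup N] [Module A N] (z : ℤ) :
    Submodule A (ι →₀ N) := Finsupp.supported N A {i | deg i = z}

/-- Homogeneous endomorphism of degree `q`. -/
def Sh.IsHom {ι : Type} (deg : ι → ℤ) {A N : Type} [CommRing A] [AddCommGroup N] [Module A N]
    (e : Module.End A (ι →₀ N)) (q : ℤ) : Prop :=
  ∀ z, ∀ v ∈ Sh.gr deg A N z, e v ∈ Sh.gr deg A N (z + q)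

namespace Sh

section basic
variable {ι : Type} {deg : ι → ℤ} {A N : Type} [CommRing A] [AddCommGroup N] [Module A N]

lemma mem_gr {z : ℤ} {v : ι →₀ N} : v ∈ gr deg A N z ↔ ∀ i, v i ≠ 0 → deg i = z := by
  simp [gr, Finsupp.mem_supported, Set.subset_def]

lemma single_mem_gr {i : ι} {z : ℤ} (h : deg i = z) (x : N) :
    Finsupp.single i x ∈ gr deg A N z := Finsupp.single_mem_supported A x h

lemma gr_neg (hdeg : ∀ i, 0 ≤ deg i) {z : ℤ} (hz : z < 0) {v : ι →₀ N}
    (hv : v ∈ gr deg A N z) : v = 0 := by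
  ext i
  by_contra h
  have := mem_gr.1 hv i h
  have := hdeg i
  omega

/-- Induction on homogeneous elements. -/
lemma gr_induction {z : ℤ} {P : (ι →₀ N) → Prop} (h0 : P 0) (hadd : ∀ v w, P v → P w → P (v + w))
    (hs : ∀ i x, deg i = z → P (Finsupp.single i x)) {v : ι →₀ N} (hv : v ∈ gr deg A N z) : P v := by
  have : v = ∑ i ∈ v.support, Finsupp.single i (v i) := (Finsupp.sum_single v).symm
  rw [this]
  refine Finset.sum_induction _ P hadd h0 ?_
  intro i hi
  exact hs i _ (mem_gr.1 hv i (by simpa using hi))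

lemma IsHom.of_single {e : Module.End A (ι →₀ N)} {q : ℤ}
    (h : ∀ i x, e (Finsupp.single i x) ∈ gr deg A N (deg i + q)) : IsHom deg e q := by
  intro z v hv
  refine gr_induction (P := fun v => e v ∈ gr deg A N (z + q)) ?_ ?_ ?_ hv
  · simp
  · intro v w hv hw; rw [map_add]; exact add_mem hv hw
  · intro i x hi; subst hi; exact h i x

lemma IsHom.of_single_one {e : Module.End A (ι →₀ A)} {q : ℤ}
    (h : ∀ i, e (Finsupp.single i 1) ∈ gr deg A A (deg i + q)) : IsHom deg e q := by
  refine IsHom.of_single fun i x => ?_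
  have : Finsupp.single i x = x • Finsupp.single i (1 : A) := by simp
  rw [this, map_smul]
  exact Submodule.smul_mem _ _ (h i)

lemma IsHom.mul {e e' : Module.End A (ι →₀ N)} {q q' : ℤ} (h : IsHom deg e q)
    (h' : IsHom deg e' q') : IsHom deg (e * e') (q + q') := by
  intro z v hv
  have := h _ _ (h' _ _ hv)
  rwa [show z + q' + q = z + (q + q') by ring] at this

lemma IsHom.add {e e' : Module.End A (ι →₀ N)} {q : ℤ} (h : IsHom deg e q)
    (h' : IsHom deg e' q) : IsHom deg (e + e') q := fun z v hv => add_mem (h z v hv) (h' z v hv)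

lemma IsHom.sub {e e' : Module.End A (ι →₀ N)} {q : ℤ} (h : IsHom deg e q)
    (h' : IsHom deg e' q) : IsHom deg (e - e') q := fun z v hv => sub_mem (h z v hv) (h' z v hv)

lemma IsHom.smul {e : Module.End A (ι →₀ N)} {q : ℤ} (a : A) (h : IsHom deg e q) :
    IsHom deg (a • e) q := fun z v hv => Submodule.smul_mem _ _ (h z v hv)

lemma IsHom.sum {κ : Type} {s : Finset κ} {e : κ → Module.End A (ι →₀ N)} {q : ℤ}
    (h : ∀ k ∈ s, IsHom deg (e k) q) : IsHom deg (∑ k ∈ s, e k) q := by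
  intro z v hv
  rw [LinearMap.sum_apply]
  exact Submodule.sum_mem _ fun k hk => h k hk z v hv

lemma IsHom.one : IsHom deg (1 : Module.End A (ι →₀ N)) 0 := by
  intro z v hv; simpa using hv

end basic

section homotopy
variable {ι : Type} {A : Type} [CommRing A]

/-- Columns of a homotopy, built recursively on the degree. -/
noncomputable def hcol (deg : ι → ℤ) (pick : ι → (ι →₀ A) → (ι →₀ A))
    (c d : Module.End A (ι →₀ A)) (i : ι) : ι →₀ A :=
  open Classical in
  pick i (c (Finsupp.single i 1) - ∑ s ∈ (d (Finsupp.single i 1)).support,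
    if _ : (deg s).toNat < (deg i).toNat then
      (d (Finsupp.single i 1)) s • hcol deg pick c d s else 0)
termination_by (deg i).toNat

/-- A complex of free modules which resolves `A / J` (with one generator in degree zero). -/
structure Res (deg : ι → ℤ) (d : Module.End A (ι →₀ A)) (i0 : ι) (J : Ideal A) : Prop where
  nonneg : ∀ i, 0 ≤ deg i
  deg0 : ∀ i, deg i = 0 ↔ i = i0
  hom : IsHom deg d (-1)
  sq : d * d = 0
  exact : ∀ z : ℤ, 1 ≤ z → ∀ v ∈ gr deg A A z, d v = 0 → ∃ w ∈ gr deg A A (z + 1), d w = v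
  aug : ∀ a : A, a ∈ J ↔ ∃ w ∈ gr deg A A 1, d w = Finsupp.single i0 a

variable {deg : ι → ℤ} {d : Module.End A (ι →₀ A)} {i0 : ι} {J : Ideal A}

lemma Res.mem_gr_zero (H : Res deg d i0 J) {v : ι →₀ A} (hv : v ∈ gr deg A A 0) :
    v = Finsupp.single i0 (v i0) := by
  ext i
  by_cases h : i = i0
  · subst h; simp
  · rw [Finsupp.single_eq_of_ne h]
    by_contra h'
    exact h ((H.deg0 i).1 (mem_gr.1 hv i h'))

lemma Res.homotopy (H : Res deg d i0 J) {c : Module.End A (ι →₀ A)} {q : ℤ} (hq : 0 ≤ q)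
    (hc : IsHom deg c q) (hcd : d * c = c * d)
    (h0 : ∀ v ∈ gr deg A A 0, ∃ w ∈ gr deg A A (q + 1), d w = c v) :
    ∃ h : Module.End A (ι →₀ A), IsHom deg h (q + 1) ∧ d * h + h * d = c := by
  classical
  have hp : ∀ (i : ι) (v : ι →₀ A), ∃ w : ι →₀ A,
      (∃ w ∈ gr deg A A (deg i + (q + 1)), d w = v) → w ∈ gr deg A A (deg i + (q + 1)) ∧ d w = v := by
    intro i v
    by_cases h : ∃ w ∈ gr deg A A (deg i + (q + 1)), d w = v
    · obtain ⟨w, hw⟩ := h; exact ⟨w, fun _ => hw⟩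
    · exact ⟨0, fun h' => (h h').elim⟩
  choose pick hpick using hp
  let h : Module.End A (ι →₀ A) := Finsupp.linearCombination A (hcol deg pick c d)
  have hs : ∀ i, h (Finsupp.single i 1) = hcol deg pick c d i := fun i => by simp [h]
  have hdi : ∀ i, d (Finsupp.single i 1) ∈ gr deg A A (deg i + -1) :=
    fun i => H.hom _ _ (single_mem_gr rfl 1)
  have heq : ∀ i, hcol deg pick c d i =
      pick i (c (Finsupp.single i 1) - h (d (Finsupp.single i 1))) := by
    intro i
    rw [hcol]
    congr 2
    simp only [h, Finsupp.linearCombination_apply, Finsupp.sum]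
    refine Finset.sum_congr rfl fun s hs => ?_
    have h1 := mem_gr.1 (hdi i) s (by simpa using hs)
    have := H.nonneg s
    have := H.nonneg i
    rw [dif_pos (by omega)]
  have key : ∀ n : ℕ, ∀ i, deg i = n → h (Finsupp.single i 1) ∈ gr deg A A (deg i + (q + 1)) ∧
      d (h (Finsupp.single i 1)) = c (Finsupp.single i 1) - h (d (Finsupp.single i 1)) := by
    intro n
    induction n using Nat.strong_induction_on with
    | _ n ih =>
    intro i hi
    rw [hs, heq]
    apply hpick
    rcases Nat.eq_zero_or_pos n with rfl | hn
    · have : d (Finsupp.single i 1) = 0 := gr_neg H.nonneg (by rw [hi]; simp) (hdi i)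
      rw [this, map_zero, sub_zero, hi]
      simpa using h0 _ (single_mem_gr (by simpa using hi) 1)
    · have ih' : ∀ v ∈ gr deg A A (deg i + -1), h v ∈ gr deg A A (deg i + q) ∧
          d (h v) = c v - h (d v) := by
        intro v hv
        refine gr_induction (P := fun v => h v ∈ gr deg A A (deg i + q) ∧
          d (h v) = c v - h (d v)) ?_ ?_ ?_ hv
        · simp
        · rintro v w ⟨h1, h2⟩ ⟨h3, h4⟩
          refine ⟨by rw [map_add]; exact add_mem h1 h3, ?_⟩
          simp only [map_add, h2, h4]; abel
        · intro j x hj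
          have : Finsupp.single j x = x • Finsupp.single j (1 : A) := by simp
          obtain ⟨h1, h2⟩ := ih (n - 1) (by omega) j (by omega)
          rw [this]
          simp only [map_smul, h2, smul_sub, and_true]
          rw [show deg i + q = deg j + (q + 1) by omega]
          exact Submodule.smul_mem _ _ h1
      obtain ⟨h1, h2⟩ := ih' _ (hdi i)
      have h3 : d (d (Finsupp.single i 1)) = 0 := by
        rw [← Module.End.mul_apply, H.sq]; rfl
      have := H.exact (deg i + q) (by omega) (c (Finsupp.single i 1) - h (d (Finsupp.single i 1)))
        (sub_mem (hc _ _ (single_mem_gr rfl 1)) h1) (by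
          rw [map_sub, h2, h3, ← Module.End.mul_apply, hcd]; simp)
      rwa [show deg i + q + 1 = deg i + (q + 1) by ring] at this
  have key' : ∀ i, _ := fun i => key (deg i).toNat i (by have := H.nonneg i; omega)
  refine ⟨h, IsHom.of_single_one fun i => (key' i).1, ?_⟩
  refine Finsupp.lhom_ext' fun i => LinearMap.ext_ring ?_
  simp only [LinearMap.coe_comp, Function.comp_apply, Finsupp.lsingle_apply, LinearMap.add_apply,
    Module.End.mul_apply, (key' i).2]
  abel

end homotopy
end Sh
end Shamash

section Shamash
namespace Sh
section higher
variable {ι : Type} {A : Type} [CommRing A]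

/-- A system of higher homotopies indexed by multi-indices, built recursively. -/
noncomputable def sig {κ : Type} {E : Type} [Ring E] (F : (κ →₀ ℕ) → E)
    (pick : ℕ → E → E) (d : E) (γ : κ →₀ ℕ) : E :=
  open Classical in
  if γ = 0 then d else
    pick γ.degree (F γ - ∑ x ∈ Finset.HasAntidiagonal.antidiagonal γ,
      if _ : x.1.degree < γ.degree ∧ x.2.degree < γ.degree then
        sig F pick d x.1 * sig F pick d x.2 else 0)
termination_by γ.degree
decreasing_by
  all_goals (rename_i h; first | exact h.1 | exact h.2)


lemma degree_antidiag {κ : Type} [DecidableEq κ] {γ : κ →₀ ℕ} {x : (κ →₀ ℕ) × (κ →₀ ℕ)}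
    (hx : x ∈ Finset.HasAntidiagonal.antidiagonal γ) : x.1.degree + x.2.degree = γ.degree := by
  rw [← Finset.HasAntidiagonal.mem_antidiagonal.1 hx, map_add]

/-- The obstruction class for extending a system of higher homotopies. -/
noncomputable def obs {κ : Type} [DecidableEq κ] {E : Type} [Ring E] (F σ : (κ →₀ ℕ) → E)
    (γ : κ →₀ ℕ) : E :=
  F γ - ∑ x ∈ Finset.HasAntidiagonal.antidiagonal γ,
      if x.1.degree < γ.degree ∧ x.2.degree < γ.degree then σ x.1 * σ x.2 else 0

lemma obs_one {κ : Type} [DecidableEq κ] {E : Type} [Ring E] (F σ : (κ →₀ ℕ) → E)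
    (γ : κ →₀ ℕ) (hγ : γ.degree = 1) : obs F σ γ = F γ := by
  rw [obs, Finset.sum_eq_zero, sub_zero]
  intro x hx
  have := degree_antidiag hx
  rw [if_neg (by omega)]

lemma split_aux {κ : Type} [DecidableEq κ] {E : Type} [Ring E] (F σ : (κ →₀ ℕ) → E)
    (γ : κ →₀ ℕ) (hγ : γ ≠ 0) (h : σ 0 * σ γ + σ γ * σ 0 = obs F σ γ) :
    ∑ x ∈ Finset.HasAntidiagonal.antidiagonal γ, σ x.1 * σ x.2 = F γ := by
  have hγ' : γ.degree ≠ 0 := by rwa [Ne, Finsupp.degree_eq_zero_iff]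
  have h1 : ∀ x ∈ Finset.HasAntidiagonal.antidiagonal γ, σ x.1 * σ x.2 =
      (if x = (0, γ) then σ 0 * σ γ else 0) + (if x = (γ, 0) then σ γ * σ 0 else 0) +
      (if x.1.degree < γ.degree ∧ x.2.degree < γ.degree then σ x.1 * σ x.2 else 0) := by
    rintro ⟨x, y⟩ hx
    have h2 := degree_antidiag hx
    have h3 := Finset.HasAntidiagonal.mem_antidiagonal.1 hx
    simp only at h2 h3
    by_cases hx0 : x = 0
    · subst hx0
      simp only [zero_add] at h3
      subst h3
      simp [hγ, Ne.symm hγ]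
    by_cases hy0 : y = 0
    · subst hy0
      simp only [add_zero] at h3
      subst h3
      simp [hγ]
    have hx' : x.degree ≠ 0 := by rwa [Ne, Finsupp.degree_eq_zero_iff]
    have hy' : y.degree ≠ 0 := by rwa [Ne, Finsupp.degree_eq_zero_iff]
    rw [if_neg (by simp [hx0]), if_neg (by simp [hy0]), if_pos (by dsimp only; omega)]
    simp
  rw [Finset.sum_congr rfl h1, Finset.sum_add_distrib, Finset.sum_add_distrib,
    Finset.sum_ite_eq', Finset.sum_ite_eq', if_pos (by simp), if_pos (by simp), h, obs]
  abel

lemma comm_aux {κ : Type} [DecidableEq κ] {E : Type} [Ring E] (F σ : (κ →₀ ℕ) → E)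
    (hFc : ∀ α x, x * F α = F α * x) (γ : κ →₀ ℕ) (hγ : γ ≠ 0)
    (ih : ∀ α : κ →₀ ℕ, α.degree < γ.degree →
      ∑ x ∈ Finset.HasAntidiagonal.antidiagonal α, σ x.1 * σ x.2 = F α) :
    σ 0 * obs F σ γ = obs F σ γ * σ 0 := by
  have hp0 : γ.degree ≠ 0 := by rwa [Ne, Finsupp.degree_eq_zero_iff]
  let S : MvPowerSeries κ E := fun α => if α.degree < γ.degree then σ α else 0
  let Fs : MvPowerSeries κ E := fun α => F α
  have hS : ∀ α, MvPowerSeries.coeff α S = if α.degree < γ.degree then σ α else 0 := fun α => rfl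
  have hFs : ∀ α, MvPowerSeries.coeff α Fs = F α := fun α => rfl
  have hSF : S * Fs = Fs * S := by
    ext1 α
    rw [MvPowerSeries.coeff_mul, MvPowerSeries.coeff_mul]
    refine Finset.sum_equiv (Equiv.prodComm _ _) (by intro x; simp [add_comm]) ?_
    intro x hx
    exact hFc _ _
  let C := Fs - S * S
  have hSC : S * C = C * S := by
    simp only [C, mul_sub, sub_mul, hSF, mul_assoc]
  have hC0 : ∀ α : κ →₀ ℕ, α.degree < γ.degree → MvPowerSeries.coeff α C = 0 := by
    intro α hα
    simp only [C, map_sub, hFs, MvPowerSeries.coeff_mul, hS]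
    rw [← ih α hα, sub_eq_zero]
    refine Finset.sum_congr rfl fun x hx => ?_
    have := degree_antidiag hx
    rw [if_pos (by omega), if_pos (by omega)]
  have hCγ : MvPowerSeries.coeff γ C = obs F σ γ := by
    simp only [C, map_sub, hFs, MvPowerSeries.coeff_mul, hS, obs]
    congr 1
    refine Finset.sum_congr rfl fun x hx => ?_
    by_cases h1 : x.1.degree < γ.degree <;> by_cases h2 : x.2.degree < γ.degree <;> simp [h1, h2]
  have h1 : MvPowerSeries.coeff γ (S * C) = σ 0 * obs F σ γ := by
    rw [MvPowerSeries.coeff_mul, Finset.sum_eq_single (0, γ)]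
    · rw [hCγ, hS, if_pos (by simpa using Nat.pos_of_ne_zero hp0)]
    · rintro ⟨x, y⟩ hx hne
      have h2 := degree_antidiag hx
      have h3 := Finset.HasAntidiagonal.mem_antidiagonal.1 hx
      have hx0 : x.degree ≠ 0 := by
        rw [Ne, Finsupp.degree_eq_zero_iff]
        rintro rfl
        simp at h3; simp [h3] at hne
      simp only at h2
      rw [hC0 y (by omega), mul_zero]
    · simp
  have h2 : MvPowerSeries.coeff γ (C * S) = obs F σ γ * σ 0 := by
    rw [MvPowerSeries.coeff_mul, Finset.sum_eq_single (γ, 0)]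
    · rw [hCγ, hS, if_pos (by simpa using Nat.pos_of_ne_zero hp0)]
    · rintro ⟨x, y⟩ hx hne
      have h2 := degree_antidiag hx
      have h3 := Finset.HasAntidiagonal.mem_antidiagonal.1 hx
      have hx0 : y.degree ≠ 0 := by
        rw [Ne, Finsupp.degree_eq_zero_iff]
        rintro rfl
        simp at h3; simp [h3] at hne
      simp only at h2
      rw [hC0 x (by omega), zero_mul]
    · simp
  rw [← h1, hSC, h2]

lemma sig_zero {κ : Type} {E : Type} [Ring E] (F : (κ →₀ ℕ) → E)
    (pick : ℕ → E → E) (d : E) : sig F pick d 0 = d := by rw [sig]; simp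

lemma sig_ne {κ : Type} [DecidableEq κ] {E : Type} [Ring E] (F : (κ →₀ ℕ) → E)
    (pick : ℕ → E → E) (d : E) (γ : κ →₀ ℕ) (hγ : γ ≠ 0) :
    sig F pick d γ = pick γ.degree (obs F (sig F pick d) γ) := by
  conv_lhs => rw [sig, if_neg hγ]
  rw [obs]
  congr!

variable {deg : ι → ℤ} {d : Module.End A (ι →₀ A)} {i0 : ι} {J : Ideal A}

lemma Res.higher (H : Res deg d i0 J) {κ : Type} [DecidableEq κ] (Fc : (κ →₀ ℕ) → A)
    (hFJ : ∀ γ, Fc γ ∈ J) (hF : ∀ γ, γ.degree ≠ 1 → Fc γ = 0) :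
    ∃ σ : (κ →₀ ℕ) → Module.End A (ι →₀ A), σ 0 = d ∧
      (∀ γ, IsHom deg (σ γ) (2 * (γ.degree : ℤ) - 1)) ∧
      ∀ γ, ∑ x ∈ Finset.HasAntidiagonal.antidiagonal γ, σ x.1 * σ x.2 = Fc γ • 1 := by
  classical
  have hp : ∀ (p : ℕ) (c : Module.End A (ι →₀ A)), ∃ h : Module.End A (ι →₀ A),
      (∃ h, IsHom deg h (2 * (p : ℤ) - 1) ∧ d * h + h * d = c) →
        IsHom deg h (2 * (p : ℤ) - 1) ∧ d * h + h * d = c := by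
    intro p c
    by_cases h : ∃ h, IsHom deg h (2 * (p : ℤ) - 1) ∧ d * h + h * d = c
    · obtain ⟨w, hw⟩ := h; exact ⟨w, fun _ => hw⟩
    · exact ⟨0, fun h' => (h h').elim⟩
  choose pick hpick using hp
  let σ := sig (fun γ => Fc γ • (1 : Module.End A (ι →₀ A))) pick d
  have hσ0 : σ 0 = d := sig_zero _ _ _
  let F : (κ →₀ ℕ) → Module.End A (ι →₀ A) := fun γ => Fc γ • 1
  have hσ : ∀ γ, γ ≠ 0 → σ γ = pick γ.degree (obs F σ γ) := sig_ne F pick d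
  have key : ∀ p : ℕ, ∀ γ, γ.degree = p → IsHom deg (σ γ) (2 * (γ.degree : ℤ) - 1) ∧
      ∑ x ∈ Finset.HasAntidiagonal.antidiagonal γ, σ x.1 * σ x.2 = Fc γ • 1 := by
    intro p
    induction p using Nat.strong_induction_on with
    | _ p ih =>
    intro γ hγp
    by_cases hγ : γ = 0
    · subst hγ
      simp only [hσ0, map_zero, Finset.HasAntidiagonal.antidiagonal_zero, Finset.sum_singleton]
      refine ⟨by simpa using H.hom, ?_⟩
      rw [H.sq, hF 0 (by simp), zero_smul]
    have hp0 : p ≠ 0 := by rw [← hγp]; rwa [Ne, Finsupp.degree_eq_zero_iff]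
    suffices hh : ∃ h, IsHom deg h (2 * (γ.degree : ℤ) - 1) ∧ d * h + h * d = obs F σ γ by
      have := hpick _ _ hh
      rw [← hσ γ hγ] at this
      refine ⟨this.1, ?_⟩
      exact split_aux F σ γ hγ (by rw [hσ0]; exact this.2)
    -- homogeneity
    have hchom : IsHom deg (obs F σ γ) (2 * (p : ℤ) - 2) := by
      refine IsHom.sub ?_ (IsHom.sum fun x hx => ?_)
      · by_cases hp1 : p = 1
        · subst hp1; simpa using IsHom.smul (Fc γ) IsHom.one
        · have hFγ : F γ = 0 := by simp only [F]; rw [hF γ (by omega), zero_smul]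
          rw [hFγ]; intro z v hv; simp
      · split_ifs with h
        · have h1 := (ih _ (by omega) x.1 rfl).1.mul (ih _ (by omega) x.2 rfl).1
          have h2 := degree_antidiag hx
          convert h1 using 1
          omega
        · intro z v hv; simp
    -- commutation
    have hcomm : d * obs F σ γ = obs F σ γ * d := by
      have := comm_aux F σ (fun α x => by simp [F]) γ hγ
        (fun α hα => (ih _ (by omega) α rfl).2)
      rwa [hσ0] at this
    have := H.homotopy (q := 2 * (p : ℤ) - 2) (by omega) hchom hcomm ?_
    · rw [hγp]
      rwa [show 2 * (p : ℤ) - 2 + 1 = 2 * (p : ℤ) - 1 by ring] at this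
    · intro v hv
      by_cases hp1 : p = 1
      · have hc1 : obs F σ γ = Fc γ • 1 := by
          exact obs_one F σ γ (by omega)
        obtain ⟨w, hw, hw'⟩ := (H.aug (v i0 * Fc γ)).1 (J.mul_mem_left _ (hFJ γ))
        refine ⟨w, by simpa [hp1] using hw, ?_⟩
        rw [hw', hc1, H.mem_gr_zero hv]
        simp [mul_comm]
      · refine H.exact _ (by omega) _ (by simpa using hchom _ _ hv) ?_
        rw [← Module.End.mul_apply, hcomm, Module.End.mul_apply,
          gr_neg H.nonneg (by omega) (H.hom _ _ hv), map_zero]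
  exact ⟨σ, hσ0, fun γ => (key _ γ rfl).1, fun γ => (key _ γ rfl).2⟩

/-- Higher homotopies for `f ∈ J * 𝔞` with coefficients in `𝔞`. -/
lemma Res.higher' (H : Res deg d i0 J) {f : A} {𝔞 : Ideal A} (hf : f ∈ J * 𝔞) :
    ∃ s : ℕ → Module.End A (ι →₀ A), s 0 = d ∧
      (∀ p, IsHom deg (s p) (2 * (p : ℤ) - 1)) ∧
      (∀ r, ∑ x ∈ Finset.HasAntidiagonal.antidiagonal r, s x.1 * s x.2 = if r = 1 then f • 1 else 0) ∧
      (∀ p, p ≠ 0 → ∀ i t, s p (Finsupp.single i 1) t ∈ 𝔞) := by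
  classical
  have h𝔞 : 𝔞 = Ideal.span (Set.range (Subtype.val : 𝔞 → A)) := by
    simp
  have hf' : f ∈ J • Submodule.span A (Set.range (Subtype.val : 𝔞 → A)) := by
    rw [Ideal.span] at h𝔞
    rw [← h𝔞]; exact hf
  obtain ⟨a, haJ, hsum⟩ := (Submodule.mem_ideal_smul_span_iff_exists_sum J _ f).1 hf'
  let κ := {x // x ∈ a.support}
  let b : κ → A := fun l => ((l : 𝔞) : A)
  have hb : ∀ l, b l ∈ 𝔞 := fun l => l.1.2
  have hab : ∑ l : κ, a l.1 * b l = f := by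
    rw [← hsum, Finsupp.sum, ← Finset.sum_coe_sort a.support]
    rfl
  let Fc : (κ →₀ ℕ) → A := fun γ => ∑ l : κ, if γ = Finsupp.single l 1 then a l.1 else 0
  obtain ⟨σ, h0, hhom, hσ⟩ := H.higher Fc
    (fun γ => Ideal.sum_mem _ fun l _ => by split_ifs; exacts [haJ _, zero_mem _])
    (fun γ hγ => Finset.sum_eq_zero fun l _ => by
      rw [if_neg]; rintro rfl; simp at hγ)
  let G : ℕ → Finset (κ →₀ ℕ) := fun p => Finset.finsuppAntidiag Finset.univ p
  have hG : ∀ p γ, γ ∈ G p ↔ γ.degree = p := by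
    intro p γ
    simp [G, Finset.mem_finsuppAntidiag, Finsupp.degree_eq_sum]
  let B : (κ →₀ ℕ) → A := fun γ => γ.prod fun l k => b l ^ k
  have hB0 : B 0 = 1 := by simp [B]
  have hBadd : ∀ α β, B (α + β) = B α * B β := fun α β =>
    Finsupp.prod_add_index' (by simp) (by simp [pow_add])
  have hBmem : ∀ γ, γ ≠ 0 → B γ ∈ 𝔞 := by
    intro γ hγ
    obtain ⟨l, hl⟩ := Finsupp.ne_iff.1 hγ
    have hl' : l ∈ γ.support := by simpa using hl
    refine Ideal.mem_of_dvd _ (Finset.dvd_prod_of_mem _ hl') ?_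
    exact Ideal.pow_mem_of_mem _ (hb l) _ (Nat.pos_of_ne_zero (by simpa using hl))
  refine ⟨fun p => ∑ γ ∈ G p, B γ • σ γ, ?_, ?_, ?_, ?_⟩
  · have : G 0 = {0} := by
      ext γ; rw [hG, Finset.mem_singleton]; exact Finsupp.degree_eq_zero_iff γ
    simp [this, hB0, h0]
  · intro p
    refine IsHom.sum fun γ hγ => IsHom.smul _ ?_
    have := hhom γ
    rwa [(hG p γ).1 hγ] at this
  · intro r
    have h1 : ∑ x ∈ Finset.HasAntidiagonal.antidiagonal r, (∑ γ ∈ G x.1, B γ • σ γ) * (∑ γ ∈ G x.2, B γ • σ γ) =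
        ∑ δ ∈ G r, ∑ x ∈ Finset.HasAntidiagonal.antidiagonal δ, B δ • (σ x.1 * σ x.2) := by
      simp only [Finset.sum_mul_sum]
      simp only [← Finset.sum_product']
      rw [Finset.sum_sigma', Finset.sum_sigma']
      refine Finset.sum_bij' (fun x _ => ⟨x.2.1 + x.2.2, x.2⟩)
        (fun x _ => ⟨(x.2.1.degree, x.2.2.degree), x.2⟩) ?_ ?_ ?_ ?_ ?_
      · rintro ⟨⟨p, q⟩, ⟨α, β⟩⟩ hx
        simp only [Finset.mem_sigma, Finset.HasAntidiagonal.mem_antidiagonal, Finset.mem_product, hG] at hx ⊢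
        simp [hx]
      · rintro ⟨δ, ⟨α, β⟩⟩ hx
        simp only [Finset.mem_sigma, Finset.HasAntidiagonal.mem_antidiagonal, Finset.mem_product, hG] at hx ⊢
        simp [← hx.1, ← hx.2]
      · rintro ⟨⟨p, q⟩, ⟨α, β⟩⟩ hx
        simp only [Finset.mem_sigma, Finset.HasAntidiagonal.mem_antidiagonal, Finset.mem_product, hG] at hx ⊢
        simp [hx]
      · rintro ⟨δ, ⟨α, β⟩⟩ hx
        simp only [Finset.mem_sigma, Finset.HasAntidiagonal.mem_antidiagonal, Finset.mem_product, hG] at hx ⊢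
        simp [← hx.2]
      · rintro ⟨⟨p, q⟩, ⟨α, β⟩⟩ hx
        simp [hBadd, smul_smul, mul_comm]
    rw [h1]
    simp only [← Finset.smul_sum, hσ, smul_smul, ← Finset.sum_smul]
    split_ifs with hr
    · subst hr
      congr 1
      simp only [Fc, Finset.mul_sum]
      rw [Finset.sum_comm, ← hab]
      refine Finset.sum_congr rfl fun l _ => ?_
      rw [Finset.sum_eq_single (Finsupp.single l 1)]
      · have : B (Finsupp.single l 1) = b l := by
          simp only [B]; rw [Finsupp.prod_single_index] <;> simp
        rw [this, if_pos rfl, mul_comm]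
      · intro γ _ h; simp [h]
      · intro h; simp [hG] at h
    · rw [Finset.sum_eq_zero, zero_smul]
      intro γ hγ
      simp only [Fc]
      rw [Finset.sum_eq_zero, mul_zero]
      intro l _
      rw [if_neg]
      rintro rfl
      simp [hG] at hγ
      exact hr hγ.symm
  · intro p hp i t
    rw [LinearMap.sum_apply, Finsupp.finsetSum_apply]
    refine Ideal.sum_mem _ fun γ hγ => ?_
    have : γ ≠ 0 := by rintro rfl; simp [hG] at hγ; exact hp hγ.symm
    simpa using 𝔞.mul_mem_right _ (hBmem γ this)

end higher
end Sh
end Shamash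

section Shamash
namespace Sh
section act
variable {ι : Type} {Q : Type} [CommRing Q] (R : Type) [CommRing R] [Algebra Q R]
  (N : Type) [AddCommGroup N] [Module Q N] [Module R N] [IsScalarTower Q R N]

/-- Coefficient extension along `a ↦ a • x`. -/
noncomputable def kap (ι : Type) (Q : Type) [CommRing Q] {N : Type} [AddCommGroup N] [Module Q N]
    (x : N) : (ι →₀ Q) →ₗ[Q] (ι →₀ N) :=
  Finsupp.mapRange.linearMap (LinearMap.toSpanSingleton Q N x)

/-- The endomorphism of `ι →₀ N` with the same matrix as `e`. -/
noncomputable def act (e : Module.End Q (ι →₀ Q)) : Module.End R (ι →₀ N) :=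
  Finsupp.lsum R (fun i => (e (Finsupp.single i 1)).sum fun t a =>
    (algebraMap Q R a) • (Finsupp.lsingle t : N →ₗ[R] ι →₀ N))

variable {N}

lemma kap_apply (x : N) (v : ι →₀ Q) (i : ι) : kap ι Q x v i = v i • x := by
  simp [kap]

lemma kap_single (x : N) (i : ι) (a : Q) :
    kap ι Q x (Finsupp.single i a) = Finsupp.single i (a • x) := by
  simp [kap]

lemma kap_gr {deg : ι → ℤ} {z : ℤ} {v : ι →₀ Q} (hv : v ∈ gr deg Q Q z) (x : N) :
    kap ι Q x v ∈ gr deg R N z := by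
  rw [mem_gr] at hv ⊢
  intro i hi
  apply hv
  rintro h
  rw [kap_apply, h, zero_smul] at hi
  exact hi rfl

lemma act_single (e : Module.End Q (ι →₀ Q)) (i : ι) (x : N) :
    act R N e (Finsupp.single i x) = kap ι Q x (e (Finsupp.single i 1)) := by
  classical
  ext t
  rw [act, Finsupp.lsum_single, kap_apply, Finsupp.sum, LinearMap.sum_apply,
    Finsupp.finsetSum_apply]
  simp [Finsupp.single_apply]
  intro h
  simp [h]

lemma act_kap (e : Module.End Q (ι →₀ Q)) (x : N) (v : ι →₀ Q) :
    act R N e (kap ι Q x v) = kap ι Q x (e v) := by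
  induction v using Finsupp.induction_linear with
  | zero => simp
  | add v w hv hw => simp only [map_add, hv, hw]
  | single i a =>
    have : Finsupp.single i a = a • Finsupp.single i (1 : Q) := by simp
    rw [this, map_smul e, map_smul (kap ι Q x), map_smul (kap ι Q x),
      ← algebraMap_smul R a (kap ι Q x (Finsupp.single i 1)), map_smul, kap_single, one_smul,
      act_single]
    exact algebraMap_smul R a _

lemma act_ext {P : Type} [AddCommGroup P] {g h : (ι →₀ N) →+ P}
    (H : ∀ (x : N) (v : ι →₀ Q), g (kap ι Q x v) = h (kap ι Q x v)) : g = h := by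
  refine Finsupp.addHom_ext fun i x => ?_
  have := H x (Finsupp.single i 1)
  rwa [kap_single, one_smul] at this

lemma act_eq {e : Module.End Q (ι →₀ Q)} {g : Module.End R (ι →₀ N)}
    (H : ∀ (x : N) (v : ι →₀ Q), kap ι Q x (e v) = g (kap ι Q x v)) : act R N e = g := by
  have : (act R N e).toAddMonoidHom = g.toAddMonoidHom := by
    refine act_ext (Q := Q) fun x v => ?_
    exact (act_kap R e x v).trans (H x v)
  ext1 i
  ext1 x
  exact DFunLike.congr_fun this (Finsupp.single i x)

lemma act_mul (e e' : Module.End Q (ι →₀ Q)) : act R N (e * e') = act R N e * act R N e' :=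
  act_eq R fun x v => by simp [act_kap]

lemma act_add (e e' : Module.End Q (ι →₀ Q)) : act R N (e + e') = act R N e + act R N e' :=
  act_eq R fun x v => by simp [act_kap]

lemma act_zero : act R N (0 : Module.End Q (ι →₀ Q)) = 0 :=
  act_eq R fun x v => by simp

lemma act_smul_one (a : Q) : act R N (a • (1 : Module.End Q (ι →₀ Q))) = algebraMap Q R a • 1 :=
  act_eq R fun x v => by simp

lemma act_hom {deg : ι → ℤ} {e : Module.End Q (ι →₀ Q)} {q : ℤ} (h : IsHom deg e q) :
    IsHom deg (act R N e) q := by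
  refine IsHom.of_single fun i x => ?_
  rw [act_single]
  exact kap_gr R (h _ _ (single_mem_gr rfl _)) x

lemma act_act (e : Module.End Q (ι →₀ Q)) : act R N (act R R e) = act R N e := by
  symm
  refine act_eq R fun x v => ?_
  have h : ∀ v : ι →₀ Q, kap ι Q x v = kap ι R x (kap ι Q 1 v) := by
    intro v; ext i; simp [kap_apply]
  rw [h, h, act_kap, act_kap]

lemma act_restrict (e : Module.End Q (ι →₀ Q)) (v : ι →₀ N) : act R N e v = act Q N e v := by
  have : (act R N e).toAddMonoidHom = (act Q N e).toAddMonoidHom := by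
    refine act_ext (Q := Q) fun x v => ?_
    exact (act_kap R e x v).trans (act_kap Q e x v).symm
  exact DFunLike.congr_fun this v

lemma act_self (e : Module.End Q (ι →₀ Q)) : act Q Q e = e := by
  refine act_eq Q fun x v => ?_
  have h : ∀ v : ι →₀ Q, kap ι Q x v = x • v := by
    intro v; ext i; simp [kap_apply, mul_comm]
  rw [h, h, map_smul]

end act

section Y
variable {ι : Type} {Q : Type} [CommRing Q]

/-- Inclusion of the `j`-th copy. -/
noncomputable def inc (ι Q N : Type) [CommRing Q] [AddCommGroup N] [Module Q N] (j : ℕ) :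
    (ι →₀ N) →ₗ[Q] (ℕ × ι →₀ N) := Finsupp.lmapDomain N Q (Prod.mk j)

/-- The `j`-th component. -/
noncomputable def cmp (ι Q N : Type) [CommRing Q] [AddCommGroup N] [Module Q N] (j : ℕ) :
    (ℕ × ι →₀ N) →ₗ[Q] (ι →₀ N) := Finsupp.lcomapDomain (Prod.mk j) (Prod.mk_right_injective j)

/-- The degree function of the Shamash construction. -/
def yd (deg : ι → ℤ) : ℕ × ι → ℤ := fun x => 2 * (x.1 : ℤ) + deg x.2

/-- The differential of the Shamash construction. -/
noncomputable def yD (s : ℕ → Module.End Q (ι →₀ Q)) : Module.End Q (ℕ × ι →₀ Q) :=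
  Finsupp.linearCombination Q fun x => ∑ y ∈ Finset.HasAntidiagonal.antidiagonal x.1,
    inc ι Q Q y.2 (s y.1 (Finsupp.single x.2 1))

section
variable {N : Type} [AddCommGroup N] [Module Q N]

lemma inc_single (j : ℕ) (i : ι) (x : N) :
    inc ι Q N j (Finsupp.single i x) = Finsupp.single (j, i) x := by
  simp [inc]

lemma cmp_apply (j : ℕ) (i : ι) (v : ℕ × ι →₀ N) : cmp ι Q N j v i = v (j, i) := rfl

lemma inc_apply (j k : ℕ) (i : ι) (v : ι →₀ N) :
    inc ι Q N j v (k, i) = if k = j then v i else 0 := by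
  split_ifs with h
  · subst h
    exact Finsupp.mapDomain_apply (Prod.mk_right_injective k) v i
  · refine Finsupp.mapDomain_of_notMem_range _ _ ?_
    rintro ⟨a, ha⟩
    simp at ha
    exact h ha.1.symm

lemma cmp_inc (j k : ℕ) (v : ι →₀ N) : cmp ι Q N k (inc ι Q N j v) = if k = j then v else 0 := by
  ext i
  rw [cmp_apply, inc_apply]
  split_ifs <;> rfl

lemma inc_gr {deg : ι → ℤ} {z : ℤ} (j : ℕ) {v : ι →₀ N} (hv : v ∈ gr deg Q N z) :
    inc ι Q N j v ∈ gr (yd deg) Q N (2 * (j : ℤ) + z) := by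
  rw [mem_gr] at hv ⊢
  rintro ⟨k, i⟩ h
  rw [inc_apply] at h
  split_ifs at h with hk
  · rw [yd, hv i h, hk]
  · exact (h rfl).elim

lemma cmp_gr {deg : ι → ℤ} {z : ℤ} (j : ℕ) {v : ℕ × ι →₀ N} (hv : v ∈ gr (yd deg) Q N z) :
    cmp ι Q N j v ∈ gr deg Q N (z - 2 * j) := by
  rw [mem_gr] at hv ⊢
  intro i hi
  have := hv (j, i) hi
  simp only [yd] at this
  omega

lemma sum_inc_cmp {J : ℕ} {v : ℕ × ι →₀ N} (hv : ∀ x, v x ≠ 0 → x.1 < J) :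
    v = ∑ j ∈ Finset.range J, inc ι Q N j (cmp ι Q N j v) := by
  ext ⟨k, i⟩
  simp only [Finsupp.finsetSum_apply, inc_apply, cmp_apply, Finset.sum_ite_eq, Finset.mem_range]
  split_ifs with h
  · rfl
  · by_contra h'; exact h (hv _ h')

lemma exists_bound (v : ℕ × ι →₀ N) : ∃ J : ℕ, ∀ x, v x ≠ 0 → x.1 < J := by
  refine ⟨v.support.sup Prod.fst + 1, fun x hx => Nat.lt_succ_of_le ?_⟩
  exact Finset.le_sup (f := Prod.fst) (by simpa using hx)

end

lemma yD_inc (s : ℕ → Module.End Q (ι →₀ Q)) (j : ℕ) (v : ι →₀ Q) :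
    yD s (inc ι Q Q j v) = ∑ y ∈ Finset.HasAntidiagonal.antidiagonal j, inc ι Q Q y.2 (s y.1 v) := by
  induction v using Finsupp.induction_linear with
  | zero => simp
  | add v w hv hw => simp only [map_add, hv, hw, Finset.sum_add_distrib]
  | single i a =>
    have : Finsupp.single i a = a • Finsupp.single i (1 : Q) := by simp
    rw [this]
    simp only [map_smul, ← Finset.smul_sum]
    rw [inc_single, yD, Finsupp.linearCombination_single, one_smul]

lemma cmp_yD (s : ℕ → Module.End Q (ι →₀ Q)) {J : ℕ} {v : ℕ × ι →₀ Q}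
    (hv : ∀ x, v x ≠ 0 → x.1 < J) (k : ℕ) : cmp ι Q Q k (yD s v) =
    ∑ j ∈ Finset.range J, if k ≤ j then s (j - k) (cmp ι Q Q j v) else 0 := by
  conv_lhs => rw [sum_inc_cmp (Q := Q) hv]
  rw [map_sum, map_sum]
  refine Finset.sum_congr rfl fun j _ => ?_
  rw [yD_inc, map_sum]
  simp only [cmp_inc]
  split_ifs with h
  · rw [Finset.sum_eq_single (j - k, k)]
    · simp
    · rintro ⟨a, b⟩ hab hne
      rw [if_neg]
      rintro rfl
      have := Finset.HasAntidiagonal.mem_antidiagonal.1 hab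
      simp at this
      apply hne
      simp; omega
    · intro h'; exfalso; apply h'; simp; omega
  · refine Finset.sum_eq_zero fun x hx => ?_
    rw [if_neg]
    have := Finset.HasAntidiagonal.mem_antidiagonal.1 hx
    omega

lemma yD_hom {deg : ι → ℤ} {s : ℕ → Module.End Q (ι →₀ Q)}
    (hs : ∀ p, IsHom deg (s p) (2 * (p : ℤ) - 1)) : IsHom (yd deg) (yD s) (-1) := by
  refine IsHom.of_single_one ?_
  rintro ⟨j, i⟩
  rw [← inc_single (Q := Q), yD_inc]
  refine Submodule.sum_mem _ fun x hx => ?_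
  have h1 := inc_gr x.2 (hs x.1 _ _ (single_mem_gr (deg := deg) (i := i) rfl 1))
  have h2 := Finset.HasAntidiagonal.mem_antidiagonal.1 hx
  have : yd deg (j, i) + -1 = 2 * (x.2 : ℤ) + (deg i + (2 * (x.1 : ℤ) - 1)) := by
    simp only [yd]; omega
  rw [this]
  exact h1

lemma triple_aux {E : Type} [AddCommMonoid E] (g : ℕ → ℕ → ℕ → E) (j : ℕ) :
    ∑ x ∈ Finset.HasAntidiagonal.antidiagonal j,
      ∑ y ∈ Finset.HasAntidiagonal.antidiagonal x.2, g x.1 y.1 y.2 =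
    ∑ x ∈ Finset.HasAntidiagonal.antidiagonal j,
      ∑ y ∈ Finset.HasAntidiagonal.antidiagonal x.1, g y.2 y.1 x.2 := by
  rw [Finset.sum_sigma', Finset.sum_sigma']
  refine Finset.sum_bij' (fun x _ => ⟨(x.1.1 + x.2.1, x.2.2), (x.2.1, x.1.1)⟩)
    (fun x _ => ⟨(x.2.2, x.2.1 + x.1.2), (x.2.1, x.1.2)⟩) ?_ ?_ ?_ ?_ ?_
  all_goals
    rintro ⟨⟨a, b⟩, ⟨c, e⟩⟩ hx
    simp only [Finset.mem_sigma, Finset.HasAntidiagonal.mem_antidiagonal] at hx ⊢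
  · omega
  · exact ⟨by omega, trivial⟩
  · obtain ⟨h1, h2⟩ := hx
    subst h2
    rfl
  · obtain ⟨h1, h2⟩ := hx
    subst h2
    simp [add_comm]

lemma yD_sq_inc {f : Q} {s : ℕ → Module.End Q (ι →₀ Q)}
    (hs : ∀ r, ∑ x ∈ Finset.HasAntidiagonal.antidiagonal r, s x.1 * s x.2 =
      if r = 1 then f • 1 else 0) (j : ℕ) (v : ι →₀ Q) :
    ∃ y, yD s (yD s (inc ι Q Q j v)) = f • y := by
  rw [yD_inc, map_sum]
  simp only [yD_inc]
  rw [triple_aux (fun p q l => inc ι Q Q l (s q (s p v)))]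
  have h : ∀ x ∈ Finset.HasAntidiagonal.antidiagonal j,
      ∃ y, ∑ y ∈ Finset.HasAntidiagonal.antidiagonal x.1, inc ι Q Q x.2 (s y.1 (s y.2 v)) =
        f • y := by
    intro x _
    have h1 := congrArg (inc ι Q Q x.2) (LinearMap.congr_fun (hs x.1) v)
    rw [LinearMap.sum_apply, map_sum] at h1
    simp only [Module.End.mul_apply] at h1
    rw [h1]
    split_ifs
    · exact ⟨inc ι Q Q x.2 v, by simp⟩
    · exact ⟨0, by simp⟩
  choose! y hy using h
  exact ⟨∑ x ∈ Finset.HasAntidiagonal.antidiagonal j, y x, by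
    rw [Finset.smul_sum]; exact Finset.sum_congr rfl hy⟩

lemma yD_sq {f : Q} {s : ℕ → Module.End Q (ι →₀ Q)}
    (hs : ∀ r, ∑ x ∈ Finset.HasAntidiagonal.antidiagonal r, s x.1 * s x.2 =
      if r = 1 then f • 1 else 0) (v : ℕ × ι →₀ Q) :
    ∃ y, yD s (yD s v) = f • y := by
  induction v using Finsupp.induction_linear with
  | zero => exact ⟨0, by simp⟩
  | add v w hv hw =>
    obtain ⟨a, ha⟩ := hv
    obtain ⟨b, hb⟩ := hw
    exact ⟨a + b, by simp only [map_add, ha, hb, smul_add]⟩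
  | single x a =>
    obtain ⟨j, i⟩ := x
    rw [← inc_single (Q := Q)]
    exact yD_sq_inc hs j _

end Y
end Sh
end Shamash

section Shamash
namespace Sh
section Yexact
variable {ι : Type} {Q : Type} [CommRing Q]
variable {deg : ι → ℤ} {d : Module.End Q (ι →₀ Q)} {i0 : ι} {J : Ideal Q}

lemma gr_of_smul {f : Q} (hf : ∀ a, f * a = 0 → a = 0) {z : ℤ} {u : ι →₀ Q}
    (hu : f • u ∈ gr deg Q Q z) : u ∈ gr deg Q Q z := by
  rw [mem_gr] at hu ⊢
  intro i hi
  apply hu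
  intro h
  exact hi (hf _ (by simpa using h))

lemma gr_cast {A N : Type} [CommRing A] [AddCommGroup N] [Module A N] {z z' : ℤ} {v : ι →₀ N}
    (h : v ∈ gr deg A N z) (e : z = z') : v ∈ gr deg A N z' := e ▸ h

lemma smul_cancel {f : Q} (hf : ∀ a, f * a = 0 → a = 0) {u v : ι →₀ Q}
    (h : f • u = f • v) : u = v := by
  ext i
  have := DFunLike.congr_fun h i
  simp only [Finsupp.smul_apply, smul_eq_mul] at this
  exact sub_eq_zero.1 (hf _ (by rw [mul_sub, this, sub_self]))

lemma Res.yexact (H : Res deg d i0 J) {f : Q} (hf : ∀ a, f * a = 0 → a = 0)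
    {s : ℕ → Module.End Q (ι →₀ Q)} (h0 : s 0 = d)
    (hhom : ∀ p, IsHom deg (s p) (2 * (p : ℤ) - 1))
    (hs : ∀ r, ∑ x ∈ Finset.HasAntidiagonal.antidiagonal r, s x.1 * s x.2 =
      if r = 1 then f • 1 else 0) (K : ℕ) (z : ℤ) (hz : 1 ≤ z) :
    ∀ v ∈ gr (yd deg) Q Q z, (∀ x, v x ≠ 0 → x.1 < K) → (∃ y, yD s v = f • y) →
      ∃ w ∈ gr (yd deg) Q Q (z + 1), ∃ y, v - yD s w = f • y := by
  have hD := yD_hom hhom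
  have hdd : ∀ v, d (d v) = 0 := fun v => LinearMap.congr_fun H.sq v
  have hd1 : ∀ v, d (s 1 v) + s 1 (d v) = f • v := by
    intro v
    have := LinearMap.congr_fun (hs 1) v
    simpa [Finset.Nat.antidiagonal_succ, h0] using this
  induction K with
  | zero =>
    intro v hv hb _
    have : v = 0 := by
      ext x; by_contra h; exact absurd (hb x h) (by omega)
    exact ⟨0, zero_mem _, 0, by simp [this]⟩
  | succ K ih =>
    intro v hv hb hDv
    obtain ⟨y, hy⟩ := hDv
    -- reduction to subtracting a boundary
    have red : (∃ w ∈ gr (yd deg) Q Q (z + 1), ∀ k, K ≤ k → cmp ι Q Q k (yD s w) = cmp ι Q Q k v) →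
        ∃ w ∈ gr (yd deg) Q Q (z + 1), ∃ y, v - yD s w = f • y := by
      rintro ⟨w, hw, hk⟩
      have hw1 : yD s w ∈ gr (yd deg) Q Q z := by simpa using hD _ _ hw
      obtain ⟨y2, hy2⟩ := yD_sq hs w
      obtain ⟨w', hw', y', hy'⟩ := ih (v - yD s w) (sub_mem hv hw1) (by
        rintro ⟨k, i⟩ hki
        by_contra hcon
        apply hki
        have := DFunLike.congr_fun (hk k (by simpa using hcon)) i
        simp only [cmp_apply] at this
        simp [this]) ⟨y - y2, by rw [map_sub, hy, hy2, smul_sub]⟩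
      exact ⟨w + w', add_mem hw hw', y', by rw [map_add, ← sub_sub, hy']⟩
    have hcmp0 : ∀ k, K + 1 ≤ k → cmp ι Q Q k v = 0 := by
      intro k hk; ext i
      rw [cmp_apply]
      by_contra h
      have := hb _ h
      simp only at this; omega
    set vK := cmp ι Q Q K v with hvK
    have hvKgr : vK ∈ gr deg Q Q (z - 2 * K) := cmp_gr K hv
    have hcK : d vK = f • cmp ι Q Q K y := by
      have := cmp_yD s hb K
      rw [hy, map_smul, Finset.sum_range_succ, Finset.sum_eq_zero] at this
      · simpa [h0] using this.symm
      · intro j hj; rw [if_neg]; simpa using hj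
    apply red
    rcases lt_trichotomy (z - 2 * K) 0 with hlt | heq | hgt
    · refine ⟨0, zero_mem _, fun k hk => ?_⟩
      rcases Nat.eq_or_lt_of_le hk with rfl | hk'
      · rw [← hvK, gr_neg H.nonneg hlt hvKgr]; simp
      · rw [hcmp0 k hk']; simp
    · obtain ⟨L, rfl⟩ : ∃ L, K = L + 1 := ⟨K - 1, by omega⟩
      have hd0 : d vK = 0 := gr_neg H.nonneg (by omega) (H.hom _ _ hvKgr)
      have hcL : d (cmp ι Q Q L v) + s 1 vK = f • cmp ι Q Q L y := by
        have := cmp_yD s hb L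
        rw [hy, map_smul, Finset.sum_range_succ, Finset.sum_range_succ, Finset.sum_eq_zero] at this
        · simpa [h0] using this.symm
        · intro j hj; rw [if_neg]; simpa using hj
      set u := cmp ι Q Q L y
      have hvu : d u = vK := by
        apply smul_cancel hf
        rw [← map_smul, ← hcL, map_add, hdd, zero_add]
        have := hd1 vK
        rwa [hd0, map_zero, add_zero] at this
      have hugr : u ∈ gr deg Q Q 1 := by
        apply gr_of_smul hf
        rw [← hcL]
        refine add_mem ?_ ?_
        · have h1 := H.hom _ _ (cmp_gr L hv)
          refine gr_cast h1 ?_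
          push_cast at heq; omega
        · have := hhom 1 _ _ hvKgr
          refine gr_cast this ?_
          push_cast at heq ⊢; omega
      refine ⟨inc ι Q Q (L + 1) u, ?_, ?_⟩
      · have := inc_gr (L + 1) hugr
        refine gr_cast this ?_
        push_cast at heq ⊢; omega
      · intro k hk
        have hb' : ∀ x, inc ι Q Q (L + 1) u x ≠ 0 → x.1 < L + 1 + 1 := by
          rintro ⟨a, b⟩ h
          rw [inc_apply] at h
          split_ifs at h with h'
          · simp only; omega
          · exact (h rfl).elim
        rw [cmp_yD s hb', Finset.sum_range_succ, Finset.sum_eq_zero, zero_add]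
        · rcases Nat.eq_or_lt_of_le hk with rfl | hk'
          · rw [if_pos le_rfl, cmp_inc, if_pos rfl, Nat.sub_self, h0, hvu]
          · rw [if_neg (by omega), hcmp0 k hk']
        · intro j hj; rw [if_neg]; have := Finset.mem_range.1 hj; omega
    · set u := cmp ι Q Q K y
      have hdu : d u = 0 := by
        apply smul_cancel hf
        rw [← map_smul, ← hcK, hdd, smul_zero]
      have hugr : u ∈ gr deg Q Q (z - 2 * K - 1) := by
        apply gr_of_smul hf
        rw [← hcK]
        exact H.hom _ _ hvKgr
      have hs1u : s 1 u ∈ gr deg Q Q (z - 2 * K) := by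
        have := hhom 1 _ _ hugr
        refine gr_cast this ?_
        push_cast; ring
      obtain ⟨w, hw, hdw⟩ := H.exact (z - 2 * K) (by omega) (vK - s 1 u) (sub_mem hvKgr hs1u) (by
        rw [map_sub, hcK, sub_eq_zero, ← hd1 u, hdu, map_zero, add_zero])
      refine ⟨inc ι Q Q K w + inc ι Q Q (K + 1) u, add_mem ?_ ?_, ?_⟩
      · have := inc_gr K hw
        refine gr_cast this ?_
        ring
      · have := inc_gr (K + 1) hugr
        refine gr_cast this ?_
        push_cast; ring
      · intro k hk
        have hb' : ∀ x, (inc ι Q Q K w + inc ι Q Q (K + 1) u) x ≠ 0 → x.1 < K + 1 + 1 := by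
          rintro ⟨a, b⟩ h
          rw [Finsupp.add_apply, inc_apply, inc_apply] at h
          by_contra hcon
          simp only at hcon
          rw [if_neg (by omega), if_neg (by omega)] at h
          simp at h
        have e1 : cmp ι Q Q K (inc ι Q Q K w + inc ι Q Q (K + 1) u) = w := by
          rw [map_add, cmp_inc, cmp_inc, if_pos rfl, if_neg (by omega), add_zero]
        have e2 : cmp ι Q Q (K + 1) (inc ι Q Q K w + inc ι Q Q (K + 1) u) = u := by
          rw [map_add, cmp_inc, cmp_inc, if_neg (by omega), if_pos rfl, zero_add]
        rw [cmp_yD s hb', Finset.sum_range_succ, Finset.sum_range_succ, Finset.sum_eq_zero,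
          zero_add, e1, e2]
        · rcases Nat.eq_or_lt_of_le hk with rfl | hk'
          · rw [if_pos le_rfl, if_pos (by omega), Nat.sub_self, h0, hdw,
              show K + 1 - K = 1 by omega, sub_add_cancel]
          · rw [if_neg (by omega), hcmp0 k hk', zero_add]
            split_ifs with h
            · have : k = K + 1 := by omega
              subst this
              rw [Nat.sub_self, h0, hdu]
            · rfl
        · intro j hj; rw [if_neg]; have := Finset.mem_range.1 hj; omega

variable (R : Type) [CommRing R] [Algebra Q R]

lemma exists_lift (hsurj : Function.Surjective (algebraMap Q R)) {z : ℤ} {v : ι →₀ R}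
    (hv : v ∈ gr deg R R z) : ∃ w ∈ gr deg Q Q z, kap ι Q (1 : R) w = v := by
  classical
  choose g hg using hsurj
  let g' : R → Q := fun r => if r = 0 then 0 else g r
  have hg' : ∀ r, algebraMap Q R (g' r) = r := by
    intro r
    simp only [g']
    split_ifs with h
    · rw [h, map_zero]
    · exact hg r
  refine ⟨Finsupp.mapRange g' (by simp [g']) v, ?_, ?_⟩
  · rw [mem_gr] at hv ⊢
    intro i hi
    apply hv
    intro h
    apply hi
    simp [g', h]
  · ext i
    rw [kap_apply, Finsupp.mapRange_apply, Algebra.smul_def, hg', mul_one]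

lemma kap_eq_zero {f : Q} (hker : ∀ a : Q, algebraMap Q R a = 0 ↔ ∃ b, a = f * b)
    (v : ι →₀ Q) : kap ι Q (1 : R) v = 0 ↔ ∃ y, v = f • y := by
  classical
  constructor
  · intro h
    have : ∀ i, ∃ b, v i = f * b := by
      intro i
      apply (hker _).1
      have := DFunLike.congr_fun h i
      rwa [kap_apply, Algebra.smul_def, mul_one] at this
    choose g hg using this
    refine ⟨Finsupp.onFinset v.support (fun i => if v i = 0 then 0 else g i) (by
      intro i hi; simp at hi ⊢; exact hi.1), ?_⟩
    ext i
    simp only [Finsupp.smul_apply, Finsupp.onFinset_apply, smul_eq_mul]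
    split_ifs with h
    · rw [h, mul_zero]
    · exact hg i
  · rintro ⟨y, rfl⟩
    ext i
    rw [kap_apply, Finsupp.smul_apply, Algebra.smul_def, smul_eq_mul, (hker _).2 ⟨_, rfl⟩]
    simp

/-- The Shamash construction resolves `R / J_R`. -/
lemma Res.shamash (H : Res deg d i0 J) {f : Q} (hf : ∀ a, f * a = 0 → a = 0)
    (hsurj : Function.Surjective (algebraMap Q R))
    (hker : ∀ a : Q, algebraMap Q R a = 0 ↔ ∃ b, a = f * b)
    {JR : Ideal R} (hJ : ∀ a : Q, algebraMap Q R a ∈ JR ↔ a ∈ J)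
    {s : ℕ → Module.End Q (ι →₀ Q)} (h0 : s 0 = d)
    (hhom : ∀ p, IsHom deg (s p) (2 * (p : ℤ) - 1))
    (hs : ∀ r, ∑ x ∈ Finset.HasAntidiagonal.antidiagonal r, s x.1 * s x.2 =
      if r = 1 then f • 1 else 0) :
    Res (yd deg) (act R R (yD s)) (0, i0) JR where
  nonneg := by
    rintro ⟨j, i⟩
    have := H.nonneg i
    simp only [yd]; omega
  deg0 := by
    rintro ⟨j, i⟩
    have := H.nonneg i
    have h := H.deg0 i
    simp only [yd, Prod.mk.injEq]
    rw [← h]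
    omega
  hom := act_hom R (yD_hom hhom)
  sq := by
    rw [← act_mul]
    refine act_eq R fun x v => ?_
    obtain ⟨y, hy⟩ := yD_sq hs v
    rw [LinearMap.zero_apply, Module.End.mul_apply, hy]
    have h1 := (kap_eq_zero R hker (f • y)).2 ⟨y, rfl⟩
    ext i
    have := DFunLike.congr_fun h1 i
    rw [kap_apply] at this ⊢
    rw [Finsupp.zero_apply] at this ⊢
    calc _ = ((f • y) i • (1 : R)) * x := by simp
      _ = 0 := by rw [this, zero_mul]
  exact := by
    intro z hz v hv hDv
    obtain ⟨v, hv', rfl⟩ := exists_lift R hsurj hv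
    rw [act_kap, kap_eq_zero R hker] at hDv
    obtain ⟨K, hK⟩ := exists_bound v
    obtain ⟨w, hw, y, hy⟩ := H.yexact hf h0 hhom hs K z hz v hv' hK hDv
    refine ⟨kap _ Q 1 w, kap_gr R hw _, ?_⟩
    rw [act_kap]
    have := (kap_eq_zero R hker _).2 ⟨y, hy⟩
    rw [map_sub, sub_eq_zero] at this
    exact this.symm
  aug := by
    intro a
    obtain ⟨a, rfl⟩ := hsurj a
    rw [hJ, H.aug]
    have h1 : ∀ a, kap (ℕ × ι) Q (1 : R) (Finsupp.single (0, i0) a) =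
        Finsupp.single (0, i0) (algebraMap Q R a) := by
      intro a
      rw [kap_single, Algebra.smul_def, mul_one]
    constructor
    · rintro ⟨w, hw, hdw⟩
      refine ⟨kap _ Q 1 (inc ι Q Q 0 w), kap_gr R (by simpa using inc_gr 0 hw) _, ?_⟩
      rw [act_kap, yD_inc]
      simp [h0, hdw, inc_single, h1]
    · rintro ⟨w, hw, hdw⟩
      obtain ⟨w, hw', rfl⟩ := exists_lift R hsurj hw
      have hb : ∀ x, w x ≠ 0 → x.1 < 1 := by
        rintro ⟨j, i⟩ h
        have h1 := mem_gr.1 hw' _ h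
        have := H.nonneg i
        simp only [yd] at h1
        simp only
        omega
      have h2 := sum_inc_cmp (Q := Q) hb
      rw [Finset.sum_range_one] at h2
      have hw0 : cmp ι Q Q 0 w ∈ gr deg Q Q 1 := by simpa using cmp_gr 0 hw'
      have hdw0 : d (cmp ι Q Q 0 w) ∈ gr deg Q Q 0 := by simpa using H.hom _ _ hw0
      set b := d (cmp ι Q Q 0 w) i0 with hbdef
      have h3 : d (cmp ι Q Q 0 w) = Finsupp.single i0 b := H.mem_gr_zero hdw0
      have hbJ : b ∈ J := (H.aug b).2 ⟨_, hw0, h3⟩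
      rw [act_kap, h2, yD_inc] at hdw
      simp [h0, h3, inc_single, h1] at hdw
      have h4 : algebraMap Q R b = algebraMap Q R a := by
        have := DFunLike.congr_fun hdw (0, i0)
        simpa using this
      have : a ∈ J := by rw [← hJ, ← h4, hJ]; exact hbJ
      exact (H.aug a).1 this

end Yexact
end Sh
end Shamash

section Shamash
namespace Sh
section hom

/-- Cycles. -/
noncomputable def Zc {ι : Type} (deg : ι → ℤ) {A N : Type} [CommRing A] [AddCommGroup N] [Module A N]
    (e : Module.End A (ι →₀ N)) (z : ℤ) : Submodule A (ι →₀ N) :=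
  LinearMap.ker e ⊓ gr deg A N z

/-- Boundaries, as a submodule of the cycles. -/
noncomputable def Bc {ι : Type} (deg : ι → ℤ) {A N : Type} [CommRing A] [AddCommGroup N] [Module A N]
    (e : Module.End A (ι →₀ N)) (z : ℤ) : Submodule A (Zc deg e z) :=
  ((gr deg A N (z + 1)).map e).comap (Zc deg e z).subtype

/-- Homology. -/
abbrev Hc {ι : Type} (deg : ι → ℤ) {A N : Type} [CommRing A] [AddCommGroup N] [Module A N]
    (e : Module.End A (ι →₀ N)) (z : ℤ) : Type := Zc deg e z ⧸ Bc deg e z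

lemma length_quot {Q R : Type} [CommRing Q] [CommRing R] [Algebra Q R]
    (hsurj : Function.Surjective (algebraMap Q R)) {Z P : Type} [AddCommGroup Z] [Module R Z]
    [AddCommGroup P] [Module Q P] (B : Submodule R Z) (φ : Z →+ P)
    (hφ : ∀ (q : Q) z, φ (algebraMap Q R q • z) = q • φ z) (hs : Function.Surjective φ)
    (hk : ∀ z, φ z = 0 ↔ z ∈ B) : Module.length R (Z ⧸ B) = Module.length Q P := by
  let _ : Module Q Z := Module.compHom Z (algebraMap Q R)
  have : IsScalarTower Q R Z := ⟨fun q r z => by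
    rw [Algebra.smul_def, mul_smul]; rfl⟩
  rw [← Module.length_eq_of_surjective (S := Q) (R := R) (M := Z ⧸ B) hsurj]
  let φ' : Z →ₗ[Q] P := { φ with map_smul' := hφ }
  have hker : B.restrictScalars Q = LinearMap.ker φ' := by
    ext z
    simp only [Submodule.restrictScalars_mem, LinearMap.mem_ker]
    exact (hk z).symm
  exact ((Submodule.Quotient.restrictScalarsEquiv Q B).symm.trans
    ((Submodule.quotEquivOfEq _ _ hker).trans (φ'.quotKerEquivOfSurjective hs))).length_eq

lemma length_quot_pi {Q R : Type} [CommRing Q] [CommRing R] [Algebra Q R]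
    (hsurj : Function.Surjective (algebraMap Q R)) {Z : Type} [AddCommGroup Z] [Module R Z]
    {κ : Type} [Fintype κ] {P : κ → Type} [∀ j, AddCommGroup (P j)] [∀ j, Module Q (P j)]
    (B : Submodule R Z) (φ : Z →+ (∀ j, P j))
    (hφ : ∀ (q : Q) z j, φ (algebraMap Q R q • z) j = q • φ z j) (hs : Function.Surjective φ)
    (hk : ∀ z, φ z = 0 ↔ z ∈ B) :
    Module.length R (Z ⧸ B) = ∑ j, Module.length Q (P j) := by
  rw [← Module.length_pi_of_fintype]
  exact length_quot hsurj B φ (fun q z => funext fun j => hφ q z j) hs hk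

variable {ι : Type} {Q : Type} [CommRing Q] {deg : ι → ℤ} {d : Module.End Q (ι →₀ Q)}
variable (R : Type) [CommRing R] [Algebra Q R]
variable (M : Type) [AddCommGroup M] [Module Q M] [Module R M] [IsScalarTower Q R M]

lemma kap_inc (j : ℕ) (x : M) (v : ι →₀ Q) :
    kap (ℕ × ι) Q x (inc ι Q Q j v) = inc ι Q M j (kap ι Q x v) := by
  ext ⟨k, i⟩
  rw [kap_apply, inc_apply, inc_apply, kap_apply]
  split_ifs <;> simp

lemma kap_ann {v : ι →₀ Q} (hv : ∀ t, v t ∈ Module.annihilator Q M) (x : M) :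
    kap ι Q x v = 0 := by
  ext i
  rw [kap_apply]
  exact Module.mem_annihilator.1 (hv i) x

lemma act_yD_inc {s : ℕ → Module.End Q (ι →₀ Q)} (h0 : s 0 = d)
    (hs : ∀ p, p ≠ 0 → ∀ i t, s p (Finsupp.single i 1) t ∈ Module.annihilator Q M)
    (j : ℕ) (v : ι →₀ M) :
    act R M (yD s) (inc ι Q M j v) = inc ι Q M j (act Q M d v) := by
  induction v using Finsupp.induction_linear with
  | zero => simp
  | add v w hv hw => simp only [map_add, hv, hw]
  | single i x =>
    have : Finsupp.single i x = kap ι Q x (Finsupp.single i 1) := by rw [kap_single, one_smul]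
    rw [this, ← kap_inc, act_kap, act_kap, yD_inc, map_sum, Finset.sum_eq_single (0, j)]
    · rw [kap_inc, h0]
    · rintro ⟨p, k⟩ hx hne
      rw [kap_inc, kap_ann, map_zero]
      apply hs
      rintro rfl
      have := Finset.HasAntidiagonal.mem_antidiagonal.1 hx
      simp at this
      simp [this] at hne
    · simp

lemma cmp_act_yD {s : ℕ → Module.End Q (ι →₀ Q)} (h0 : s 0 = d)
    (hs : ∀ p, p ≠ 0 → ∀ i t, s p (Finsupp.single i 1) t ∈ Module.annihilator Q M)
    (j : ℕ) (v : ℕ × ι →₀ M) :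
    cmp ι Q M j (act R M (yD s) v) = act Q M d (cmp ι Q M j v) := by
  induction v using Finsupp.induction_linear with
  | zero => simp
  | add v w hv hw => simp only [map_add, hv, hw]
  | single i x =>
    obtain ⟨k, i⟩ := i
    rw [← inc_single (Q := Q), act_yD_inc R M h0 hs, cmp_inc, cmp_inc]
    split_ifs <;> simp

lemma mem_gr_iff {A B N : Type} [CommRing A] [CommRing B] [AddCommGroup N] [Module A N]
    [Module B N] {z : ℤ} {v : ι →₀ N} : v ∈ gr deg A N z ↔ v ∈ gr deg B N z := by
  rw [mem_gr, mem_gr]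

lemma length_compare (hnn : ∀ i, 0 ≤ deg i) (hsurj : Function.Surjective (algebraMap Q R))
    {s : ℕ → Module.End Q (ι →₀ Q)} (h0 : s 0 = d)
    (hs : ∀ p, p ≠ 0 → ∀ i t, s p (Finsupp.single i 1) t ∈ Module.annihilator Q M) (n : ℕ) :
    Module.length R (Hc (yd deg) (act R M (yD s)) n) =
      ∑ j : Fin (n / 2 + 1), Module.length Q (Hc deg (act Q M d) (n - 2 * (j : ℕ) : ℤ)) := by
  have hcz : ∀ (j : ℕ) (z : Zc (yd deg) (act R M (yD s)) (n : ℤ)),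
      cmp ι Q M j z.1 ∈ Zc deg (act Q M d) (n - 2 * (j : ℕ) : ℤ) := by
    rintro j ⟨z, hz, hz'⟩
    refine ⟨?_, cmp_gr j (mem_gr_iff.1 hz')⟩
    rw [SetLike.mem_coe, LinearMap.mem_ker, ← cmp_act_yD R M h0 hs, LinearMap.mem_ker.1 hz, map_zero]
  let φ : Zc (yd deg) (act R M (yD s)) (n : ℤ) →+
      (∀ j : Fin (n / 2 + 1), Hc deg (act Q M d) (n - 2 * (j : ℕ) : ℤ)) :=
    { toFun := fun z j => Submodule.Quotient.mk ⟨cmp ι Q M j z.1, hcz j z⟩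
      map_zero' := by
        funext j
        exact (Submodule.Quotient.mk_eq_zero _).2 ⟨0, zero_mem _, by simp⟩
      map_add' := by
        intro x y
        funext j
        rw [Pi.add_apply, ← Submodule.Quotient.mk_add]
        congr 1
        ext1
        simp }
  have hbd : ∀ (z : ℤ), z ≤ n + 1 → ∀ v ∈ gr (yd deg) Q M z, ∀ x, v x ≠ 0 → 
      z ≤ n → x.1 < n / 2 + 1 := by
    rintro z hz v hv ⟨j, i⟩ h hz'
    have h1 := mem_gr.1 hv _ h
    have := hnn i
    simp only [yd] at h1
    simp only
    omega
  refine length_quot_pi hsurj (Bc (yd deg) (act R M (yD s)) n) φ ?_ ?_ ?_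
  · intro q z j
    refine Eq.trans ?_ (Submodule.Quotient.mk_smul _ _ _)
    refine congrArg Submodule.Quotient.mk (Subtype.ext ?_)
    ext i
    simp [cmp_apply]
  · intro y
    choose x hx using fun j => Submodule.Quotient.mk_surjective _ (y j)
    let v : ℕ × ι →₀ M := ∑ j : Fin (n / 2 + 1), inc ι Q M j (x j).1
    have hv : v ∈ Zc (yd deg) (act R M (yD s)) (n : ℤ) := by
      refine Submodule.sum_mem _ fun j _ => ⟨?_, ?_⟩
      · rw [SetLike.mem_coe, LinearMap.mem_ker, act_yD_inc R M h0 hs,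
          LinearMap.mem_ker.1 (x j).2.1, map_zero]
      · exact mem_gr_iff.1 (gr_cast (inc_gr j (x j).2.2) (by ring))
    refine ⟨⟨v, hv⟩, ?_⟩
    funext j
    rw [← hx j]
    refine congrArg Submodule.Quotient.mk (Subtype.ext ?_)
    simp only [v, map_sum, cmp_inc]
    rw [Finset.sum_eq_single j]
    · simp
    · intro k _ hk
      rw [if_neg]
      intro h
      exact hk (Fin.ext h).symm
    · simp
  · rintro ⟨z, hz⟩
    constructor
    · intro h
      have h1 : ∀ j : Fin (n / 2 + 1), ∃ w ∈ gr deg Q M (n - 2 * (j : ℕ) + 1 : ℤ),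
          act Q M d w = cmp ι Q M j z := by
        intro j
        exact (Submodule.Quotient.mk_eq_zero _).1 (congrFun h j)
      choose w hw hdw using h1
      refine ⟨∑ j : Fin (n / 2 + 1), inc ι Q M j (w j), ?_, ?_⟩
      · refine Submodule.sum_mem _ fun j _ => ?_
        exact mem_gr_iff.1 (gr_cast (inc_gr j (hw j)) (by ring))
      · have h2 := sum_inc_cmp (Q := Q) (fun x hx => hbd n (by omega) z (mem_gr_iff.1 hz.2) x hx le_rfl)
        rw [map_sum]
        simp only [act_yD_inc R M h0 hs, hdw]
        rw [Finset.sum_range] at h2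
        exact h2.symm
    · rintro ⟨w, hw, hdw⟩
      funext j
      refine (Submodule.Quotient.mk_eq_zero _).2 ⟨cmp ι Q M j w, ?_, ?_⟩
      · exact gr_cast (cmp_gr (j : ℕ) (mem_gr_iff.1 hw)) (by ring)
      · rw [← cmp_act_yD R M h0 hs, hdw]; rfl

/-- Base case: an isomorphism of rings. -/
lemma length_compare_bij (hsurj : Function.Surjective (algebraMap Q R)) (z : ℤ) :
    Module.length R (Hc deg (act R M d) z) = Module.length Q (Hc deg (act Q M d) z) := by
  have hcz : ∀ v, v ∈ Zc deg (act R M d) z ↔ v ∈ Zc deg (act Q M d) z := by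
    intro v
    exact and_congr (by rw [SetLike.mem_coe, SetLike.mem_coe, LinearMap.mem_ker, LinearMap.mem_ker,
      act_restrict]) mem_gr_iff
  let φ : Zc deg (act R M d) z →+ Hc deg (act Q M d) z :=
    { toFun := fun v => Submodule.Quotient.mk ⟨v.1, (hcz _).1 v.2⟩
      map_zero' := rfl
      map_add' := fun _ _ => rfl }
  refine length_quot hsurj (Bc deg (act R M d) z) φ ?_ ?_ ?_
  · intro q z
    refine Eq.trans ?_ (Submodule.Quotient.mk_smul _ _ _)
    refine congrArg Submodule.Quotient.mk (Subtype.ext ?_)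
    ext i
    simp
  · intro y
    obtain ⟨x, hx⟩ := Submodule.Quotient.mk_surjective _ y
    exact ⟨⟨x.1, (hcz _).2 x.2⟩, hx⟩
  · rintro ⟨v, hv⟩
    refine (Submodule.Quotient.mk_eq_zero _).trans ?_
    constructor
    · rintro ⟨w, hw, hdw⟩
      exact ⟨w, mem_gr_iff.1 hw, by rw [act_restrict]; exact hdw⟩
    · rintro ⟨w, hw, hdw⟩
      exact ⟨w, mem_gr_iff.1 hw, by rw [← act_restrict R]; exact hdw⟩

lemma Res.bij {i0 : ι} {J : Ideal Q} (H : Res deg d i0 J)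
    (hbij : Function.Bijective (algebraMap Q R)) {JR : Ideal R}
    (hJ : ∀ a : Q, algebraMap Q R a ∈ JR ↔ a ∈ J) : Res deg (act R R d) i0 JR where
  nonneg := H.nonneg
  deg0 := H.deg0
  hom := act_hom R H.hom
  sq := by rw [← act_mul, H.sq, act_zero]
  exact := by
    intro z hz v hv hd
    obtain ⟨v, hv', rfl⟩ := exists_lift R hbij.2 hv
    rw [act_kap] at hd
    have hdv : d v = 0 := by
      ext i
      apply hbij.1
      have := DFunLike.congr_fun hd i
      rw [kap_apply, Algebra.smul_def, mul_one] at this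
      simpa using this
    obtain ⟨w, hw, hdw⟩ := H.exact z hz v hv' hdv
    exact ⟨kap ι Q 1 w, kap_gr R hw _, by rw [act_kap, hdw]⟩
  aug := by
    intro a
    obtain ⟨a, rfl⟩ := hbij.2 a
    rw [hJ, H.aug]
    have h1 : ∀ a, kap ι Q (1 : R) (Finsupp.single i0 a) =
        Finsupp.single i0 (algebraMap Q R a) := by
      intro a
      rw [kap_single, Algebra.smul_def, mul_one]
    constructor
    · rintro ⟨w, hw, hdw⟩
      exact ⟨kap ι Q 1 w, kap_gr R hw _, by rw [act_kap, hdw, h1]⟩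
    · rintro ⟨w, hw, hdw⟩
      obtain ⟨w, hw', rfl⟩ := exists_lift R hbij.2 hw
      refine ⟨w, hw', ?_⟩
      rw [act_kap, ← h1] at hdw
      ext i
      apply hbij.1
      have := DFunLike.congr_fun hdw i
      simpa [kap_apply, Algebra.smul_def] using this

end hom
end Sh
end Shamash

section Shamash
namespace Sh
section bridge
variable {ι : Type} {A : Type} [CommRing A]

/-- inclusion of the degree `n` part -/
noncomputable def einc (deg : ι → ℤ) (A N : Type) [CommRing A] [AddCommGroup N] [Module A N]
    (n : ℕ) : ({i // deg i = (n : ℤ)} →₀ N) →ₗ[A] (ι →₀ N) :=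
  Finsupp.lmapDomain N A Subtype.val

/-- projection to the degree `n` part -/
noncomputable def eprj (deg : ι → ℤ) (A N : Type) [CommRing A] [AddCommGroup N] [Module A N]
    (n : ℕ) : (ι →₀ N) →ₗ[A] ({i // deg i = (n : ℤ)} →₀ N) :=
  Finsupp.lcomapDomain Subtype.val Subtype.val_injective

section
variable {deg : ι → ℤ} {N : Type} [AddCommGroup N] [Module A N]

lemma einc_inj (n : ℕ) : Function.Injective (einc deg A N n) :=
  Finsupp.mapDomain_injective Subtype.val_injective

lemma eprj_apply (n : ℕ) (v : ι →₀ N) (i) : eprj deg A N n v i = v i.1 := rfl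

lemma einc_apply (n : ℕ) (v) (i : {i // deg i = (n : ℤ)}) : einc deg A N n v i.1 = v i :=
  Finsupp.mapDomain_apply Subtype.val_injective v i

lemma einc_mem (n : ℕ) (v) : einc deg A N n v ∈ gr deg A N n := by
  rw [mem_gr]
  intro i hi
  by_contra h
  apply hi
  refine Finsupp.mapDomain_of_notMem_range _ _ ?_
  rintro ⟨a, rfl⟩
  exact h a.2

lemma einc_eprj (n : ℕ) {v : ι →₀ N} (hv : v ∈ gr deg A N n) :
    einc deg A N n (eprj deg A N n v) = v := by
  ext i
  by_cases h : deg i = n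
  · rw [einc_apply n _ ⟨i, h⟩, eprj_apply]
  · have h1 : v i = 0 := by by_contra h'; exact h (mem_gr.1 hv i h')
    have h2 : einc deg A N n (eprj deg A N n v) i = 0 := by
      by_contra h'; exact h (mem_gr.1 (einc_mem n _) i h')
    rw [h1, h2]

lemma eprj_eq_zero {n : ℕ} {z : ℤ} (hz : z ≠ n) {v : ι →₀ N} (hv : v ∈ gr deg A N z) :
    eprj deg A N n v = 0 := by
  ext i
  rw [eprj_apply]
  by_contra h
  have := mem_gr.1 hv _ h
  exact hz (by rw [← this, i.2])

end

variable {deg : ι → ℤ} {d : Module.End A (ι →₀ A)}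

/-- components of the differential -/
noncomputable def del (deg : ι → ℤ) (d : Module.End A (ι →₀ A)) (i j : ℕ) :
    ({t // deg t = (i : ℤ)} →₀ A) →ₗ[A] ({t // deg t = (j : ℤ)} →₀ A) :=
  eprj deg A A j ∘ₗ d ∘ₗ einc deg A A i

lemma del_zero (hd : IsHom deg d (-1)) {i j : ℕ} (h : j + 1 ≠ i) : del deg d i j = 0 := by
  ext1 t
  ext1
  refine eprj_eq_zero (z := i + -1) (by omega) (hd _ _ (einc_mem i _))

lemma einc_del (hd : IsHom deg d (-1)) (j : ℕ) (v) :
    einc deg A A j (del deg d (j + 1) j v) = d (einc deg A A (j + 1) v) := by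
  refine einc_eprj j (gr_cast (hd _ _ (einc_mem (j + 1) v)) (by push_cast; ring))

/-- The chain complex attached to the graded module. -/
noncomputable def cplx (deg : ι → ℤ) (d : Module.End A (ι →₀ A)) (hd : IsHom deg d (-1))
    (hsq : d * d = 0) : ChainComplex (ModuleCat A) ℕ where
  X n := ModuleCat.of A ({t // deg t = (n : ℤ)} →₀ A)
  d i j := ModuleCat.ofHom (del deg d i j)
  shape i j h := by
    rw [del_zero hd h]; rfl
  d_comp_d' i j k hij hjk := by
    have hij : j + 1 = i := hij
    have hjk : k + 1 = j := hjk
    subst hij; subst hjk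
    rw [← ModuleCat.ofHom_comp]
    have : del deg d (k + 1) k ∘ₗ del deg d (k + 1 + 1) (k + 1) = 0 := by
      refine LinearMap.ext fun v => einc_inj (deg := deg) (A := A) (N := A) k ?_
      rw [LinearMap.comp_apply, einc_del hd, einc_del hd]
      have := LinearMap.congr_fun hsq (einc deg A A (k + 1 + 1) v)
      rw [Module.End.mul_apply] at this
      rw [this]; simp
    rw [this]; rfl

variable [IsLocalRing A] {i0 : ι}

/-- augmentation -/
noncomputable def aug0 (hi0 : deg i0 = (0 : ℕ)) :
    ({t // deg t = ((0 : ℕ) : ℤ)} →₀ A) →ₗ[A] IsLocalRing.ResidueField A :=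
  (Algebra.linearMap A (IsLocalRing.ResidueField A)) ∘ₗ Finsupp.lapply ⟨i0, hi0⟩

lemma Res.hi0 {J : Ideal A} (H : Res deg d i0 J) : deg i0 = (0 : ℕ) := (H.deg0 i0).2 rfl

lemma Res.aug0_eq_zero (H : Res deg d i0 (IsLocalRing.maximalIdeal A)) (v) :
    aug0 H.hi0 v = 0 ↔ ∃ w, del deg d 1 0 w = v := by
  have hv : einc deg A A 0 v = Finsupp.single i0 (v ⟨i0, H.hi0⟩) := by
    have := H.mem_gr_zero (v := einc deg A A 0 v) (by simpa using einc_mem 0 v)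
    rw [einc_apply 0 v ⟨i0, H.hi0⟩] at this
    exact this
  have h1 : aug0 H.hi0 v = 0 ↔ v ⟨i0, H.hi0⟩ ∈ IsLocalRing.maximalIdeal A := by
    rw [← IsLocalRing.residue_eq_zero_iff]; rfl
  rw [h1, H.aug]
  constructor
  · rintro ⟨w, hw, hdw⟩
    refine ⟨eprj deg A A 1 w, einc_inj (deg := deg) (A := A) (N := A) 0 ?_⟩
    rw [einc_del H.hom 0, einc_eprj (0 + 1) (by simpa using hw), hv, hdw]
  · rintro ⟨w, hw⟩
    refine ⟨einc deg A A (0 + 1) w, by simpa using einc_mem (0 + 1) w, ?_⟩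
    rw [← einc_del H.hom 0, ← hv, ← hw]

lemma Res.del_exact {J : Ideal A} (H : Res deg d i0 J) (m : ℕ)
    (x : {t // deg t = ((m + 1 : ℕ) : ℤ)} →₀ A) (hx : del deg d (m + 1) m x = 0) :
    ∃ w, del deg d (m + 1 + 1) (m + 1) w = x := by
  have h1 : d (einc deg A A (m + 1) x) = 0 := by rw [← einc_del H.hom, hx, map_zero]
  obtain ⟨w, hw, hdw⟩ := H.exact ((m + 1 : ℕ) : ℤ) (by push_cast; omega) _ (einc_mem (m + 1) x) h1
  refine ⟨eprj deg A A (m + 1 + 1) w, einc_inj (deg := deg) (A := A) (N := A) (m + 1) ?_⟩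
  rw [einc_del H.hom, einc_eprj (m + 1 + 1) (gr_cast hw (by push_cast; ring)), hdw]

/-- The projective resolution of the residue field. -/
noncomputable def Res.projRes (H : Res deg d i0 (IsLocalRing.maximalIdeal A)) :
    ProjectiveResolution (ModuleCat.of A (IsLocalRing.ResidueField A)) where
  complex := cplx deg d H.hom H.sq
  projective n := by
    have : Module.Projective A ({t // deg t = (n : ℤ)} →₀ A) := inferInstance
    exact ModuleCat.projective_of_free (Finsupp.basisSingleOne (ι := {t // deg t = (n : ℤ)}) (R := A))
  π := (ChainComplex.toSingle₀Equiv _ _).symm ⟨ModuleCat.ofHom (aug0 H.hi0), by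
    change ModuleCat.ofHom _ ≫ ModuleCat.ofHom _ = 0
    rw [← ModuleCat.ofHom_comp]
    have : aug0 H.hi0 ∘ₗ del deg d 1 0 = 0 := LinearMap.ext fun w => (H.aug0_eq_zero _).2 ⟨w, rfl⟩
    rw [this]; rfl⟩
  quasiIso := ⟨fun n => by
    cases n with
    | zero =>
      rw [ChainComplex.quasiIsoAt₀_iff, ShortComplex.quasiIso_iff_of_zeros']
      · refine ⟨?_, ?_⟩
        · rw [ShortComplex.moduleCat_exact_iff]
          intro x hx
          exact (H.aug0_eq_zero x).1 hx
        · rw [ModuleCat.epi_iff_surjective]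
          intro y
          obtain ⟨a, ha⟩ := IsLocalRing.residue_surjective (R := A) y
          exact ⟨Finsupp.single ⟨i0, H.hi0⟩ a, by
            refine Eq.trans ?_ ha
            change aug0 H.hi0 _ = _
            simp [aug0]⟩
      · exact HomologicalComplex.shape (cplx deg d H.hom H.sq) 0 0 (by simp)
      · rfl
      · rfl
    | succ m =>
      rw [quasiIsoAt_iff_exactAt' (hL := ChainComplex.exactAt_succ_single_obj ..),
          HomologicalComplex.exactAt_iff' _ (m + 2) (m + 1) m (by simp) (by simp),
          ShortComplex.moduleCat_exact_iff]
      intro x hx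
      exact H.del_exact m x hx⟩

end bridge
end Sh
end Shamash

section Shamash
namespace Sh
section bridge2
variable {ι : Type} {A : Type} [CommRing A] {deg : ι → ℤ}

lemma homology_equiv {M : Type} [AddCommGroup M] [Module A M] {e : Module.End A (ι →₀ M)} {z : ℤ}
    (S : ShortComplex (ModuleCat.{0} A)) (ψ1 : S.X₁ →ₗ[A] (ι →₀ M)) (ψ2 : S.X₂ →ₗ[A] (ι →₀ M))
    (hinj : Function.Injective ψ2) (h1 : ∀ v, v ∈ gr deg A M (z + 1) ↔ ∃ x, ψ1 x = v)
    (h2 : ∀ v, v ∈ gr deg A M z ↔ ∃ x, ψ2 x = v)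
    (hf : ∀ x, ψ2 (S.f.hom x) = e (ψ1 x)) (hg : ∀ x, S.g.hom x = 0 ↔ e (ψ2 x) = 0) :
    Nonempty (S.homology ≃ₗ[A] Hc deg e z) := by
  have hz : ∀ x : LinearMap.ker S.g.hom, ψ2 x.1 ∈ Zc deg e z := fun x =>
    ⟨(hg _).1 x.2, (h2 _).2 ⟨_, rfl⟩⟩
  let φ : LinearMap.ker S.g.hom ≃ₗ[A] Zc deg e z :=
    LinearEquiv.ofBijective ((ψ2 ∘ₗ (LinearMap.ker S.g.hom).subtype).codRestrict _ hz)
      ⟨fun x y hxy => Subtype.ext (hinj (congrArg Subtype.val hxy)), fun y => by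
        obtain ⟨x, hx⟩ := (h2 y.1).1 y.2.2
        refine ⟨⟨x, (hg x).2 (by rw [hx]; exact y.2.1)⟩, Subtype.ext hx⟩⟩
  refine ⟨(S.moduleCatHomologyIso.toLinearEquiv).trans
    (Submodule.Quotient.equiv (LinearMap.range S.moduleCatToCycles) (Bc deg e z) φ ?_)⟩
  ext y
  constructor
  · rintro ⟨_, ⟨x, rfl⟩, rfl⟩
    exact ⟨ψ1 x, (h1 _).2 ⟨x, rfl⟩, (hf x).symm⟩
  · rintro ⟨v, hv, hvy⟩
    obtain ⟨x, rfl⟩ := (h1 v).1 hv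
    refine ⟨_, ⟨x, rfl⟩, Subtype.ext ?_⟩
    exact (hf x).trans hvy

open Classical in
/-- The degree `n` part of the tensor product. -/
noncomputable def Psi (deg : ι → ℤ) (A M : Type) [CommRing A] [AddCommGroup M] [Module A M] (n : ℕ) :
    M ⊗[A] ({t // deg t = (n : ℤ)} →₀ A) →ₗ[A] (ι →₀ M) :=
  einc deg A M n ∘ₗ (TensorProduct.finsuppScalarRight A A M _).toLinearMap

variable {M : Type} [AddCommGroup M] [Module A M]

open Classical in
lemma Psi_inj (n : ℕ) : Function.Injective (Psi deg A M n) :=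
  (einc_inj (deg := deg) (A := A) (N := M) n).comp (TensorProduct.finsuppScalarRight A A M _).injective

open Classical in
lemma Psi_range (n : ℕ) (v) : v ∈ gr deg A M n ↔ ∃ x, Psi deg A M n x = v := by
  constructor
  · intro hv
    refine ⟨(TensorProduct.finsuppScalarRight A A M _).symm (eprj deg A M n v), ?_⟩
    simp [Psi, einc_eprj n hv]
  · rintro ⟨x, rfl⟩
    exact einc_mem n _

open Classical in
lemma Psi_tmul (n : ℕ) (m : M) (v) : Psi deg A M n (m ⊗ₜ v) = kap ι A m (einc deg A A n v) := by
  ext i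
  rw [kap_apply]
  by_cases h : deg i = n
  · have h1 := einc_apply (deg := deg) (A := A) (N := M) n
      (TensorProduct.finsuppScalarRight A A M _ (m ⊗ₜ v)) ⟨i, h⟩
    rw [einc_apply n v ⟨i, h⟩]
    refine h1.trans ?_
    rw [TensorProduct.finsuppScalarRight_apply_tmul_apply]
  · have h1 : Psi deg A M n (m ⊗ₜ v) i = 0 := by
      by_contra h'; exact h (mem_gr.1 (einc_mem (A := A) n _) i h')
    have h2 : einc deg A A n v i = 0 := by
      by_contra h'; exact h (mem_gr.1 (einc_mem (A := A) n _) i h')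
    rw [h1, h2, zero_smul]

variable {d : Module.End A (ι →₀ A)}

lemma Psi_del (hd : IsHom deg d (-1)) (j : ℕ) (x) :
    Psi deg A M j (LinearMap.lTensor M (del deg d (j + 1) j) x) = act A M d (Psi deg A M (j + 1) x) := by
  induction x using TensorProduct.induction_on with
  | zero => simp
  | add x y hx hy => simp only [map_add, hx, hy]
  | tmul m v =>
    rw [LinearMap.lTensor_tmul, Psi_tmul, einc_del hd, Psi_tmul, act_kap]

lemma Psi_del' (hd : IsHom deg d (-1)) (hnn : ∀ i, 0 ≤ deg i) (n : ℕ) (x) :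
    LinearMap.lTensor M (del deg d n (n - 1)) x = 0 ↔ act A M d (Psi deg A M n x) = 0 := by
  cases n with
  | zero =>
    rw [del_zero hd (by omega)]
    have h : act A M d (Psi deg A M 0 x) ∈ gr deg A M (((0 : ℕ) : ℤ) + -1) :=
      act_hom A hd _ _ ((Psi_range 0 _).2 ⟨_, rfl⟩)
    simp [gr_neg hnn (by simp) h]
  | succ k =>
    rw [← Psi_del hd]
    exact (map_eq_zero_iff _ (Psi_inj k)).symm

variable [IsLocalRing A] {i0 : ι}

lemma Res.tor (H : Res deg d i0 (IsLocalRing.maximalIdeal A)) (n : ℕ) :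
    Nonempty ((((Tor (ModuleCat.{0} A) n).obj (ModuleCat.of A M)).obj
        (ModuleCat.of A (IsLocalRing.ResidueField A))) ≃ₗ[A] Hc deg (act A M d) (n : ℤ)) := by
  let K := (((MonoidalCategory.tensoringLeft (ModuleCat.{0} A)).obj
    (ModuleCat.of A M)).mapHomologicalComplex (ComplexShape.down ℕ)).obj (cplx deg d H.hom H.sq)
  have i1 := H.projRes.isoLeftDerivedObj
    ((MonoidalCategory.tensoringLeft (ModuleCat.{0} A)).obj (ModuleCat.of A M)) n
  have i2 : K.homology n ≅ (K.sc' (n + 1) n (n - 1)).homology :=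
    ShortComplex.homologyMapIso (K.isoSc' (n + 1) n (n - 1) (by simp) (by cases n <;> simp))
  obtain ⟨E⟩ := homology_equiv (deg := deg) (e := act A M d) (z := n) (K.sc' (n + 1) n (n - 1))
    (Psi deg A M (n + 1)) (Psi deg A M n) (Psi_inj n)
    (fun v => Psi_range (deg := deg) (A := A) (M := M) (n + 1) v) (Psi_range n)
    (Psi_del H.hom n) (Psi_del' H.hom H.nonneg n)
  exact ⟨(i1.toLinearEquiv.trans i2.toLinearEquiv).trans E⟩

end bridge2
end Sh
end Shamash

section Shamash
namespace Sh
section length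
variable {A : Type} [CommRing A] [IsLocalRing A]

lemma length_killed (T : Type) [AddCommGroup T] [Module A T]
    (hT : ∀ a ∈ IsLocalRing.maximalIdeal A, ∀ x : T, a • x = 0) :
    Module.length A T = Cardinal.toENat (Module.rank (IsLocalRing.ResidueField A)
      (IsLocalRing.ResidueField A ⊗[A] T)) := by
  have hbot : (IsLocalRing.maximalIdeal A) • (⊤ : Submodule A T) = ⊥ := by
    rw [eq_bot_iff, Submodule.smul_le]
    intro a ha x _
    exact hT a ha x
  have e : (IsLocalRing.ResidueField A ⊗[A] T) ≃ₗ[A] T :=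
    (TensorProduct.quotTensorEquivQuotSMul T (IsLocalRing.maximalIdeal A)).trans
      (Submodule.quotEquivOfEqBot _ hbot)
  rw [← e.length_eq, Module.length_eq_of_surjective
    (R := IsLocalRing.ResidueField A) IsLocalRing.residue_surjective, Module.length_eq_rank]

lemma length_killed_ne_top (T : Type) [AddCommGroup T] [Module A T] [Module.Finite A T]
    (hT : ∀ a ∈ IsLocalRing.maximalIdeal A, ∀ x : T, a • x = 0) :
    Module.length A T ≠ ⊤ := by
  rw [length_killed T hT, Cardinal.toENat_ne_top]
  exact Module.rank_lt_aleph0 _ _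

variable {ι : Type} {deg : ι → ℤ} {d : Module.End A (ι →₀ A)} {i0 : ι}
variable {M : Type} [AddCommGroup M] [Module A M]

lemma Res.killed (H : Res deg d i0 (IsLocalRing.maximalIdeal A)) (z : ℤ)
    (a : A) (ha : a ∈ IsLocalRing.maximalIdeal A) (x : Hc deg (act A M d) z) : a • x = 0 := by
  obtain ⟨h, hh, hd⟩ := H.homotopy (c := a • 1) (q := 0) le_rfl (IsHom.one.smul a)
    (by rw [mul_smul_comm, smul_mul_assoc, mul_one, one_mul]) (by
      intro v hv
      have := H.mem_gr_zero hv
      obtain ⟨w, hw, hdw⟩ := (H.aug (a * v i0)).1 (Ideal.mul_mem_right _ _ ha)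
      refine ⟨w, gr_cast hw (by ring), ?_⟩
      rw [hdw, this]
      simp)
  have h1 := congrArg (act A M) hd
  rw [act_add, act_mul, act_mul, act_smul_one] at h1
  obtain ⟨y, rfl⟩ := Submodule.Quotient.mk_surjective _ x
  rw [← Submodule.Quotient.mk_smul, Submodule.Quotient.mk_eq_zero]
  refine ⟨act A M h y.1, gr_cast (act_hom A hh _ _ y.2.2) (by ring), ?_⟩
  have h2 := LinearMap.congr_fun h1 y.1
  have h3 : act A M d y.1 = 0 := y.2.1
  simpa [h3] using h2

lemma Res.betti (H : Res deg d i0 (IsLocalRing.maximalIdeal A)) (n : ℕ) :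
    bettiNumber A M n = (Module.length A (Hc deg (act A M d) n)).toNat := by
  obtain ⟨E⟩ := H.tor (M := M) n
  rw [← E.length_eq, length_killed _ (fun a ha x => E.injective (by
    rw [map_smul, map_zero]; exact H.killed _ a ha _))]
  rfl

lemma Hc_finite [IsNoetherianRing A] [Module.Finite A M] (hfin : ∀ z, {i | deg i = z}.Finite)
    (e : Module.End A (ι →₀ M)) (z : ℤ) : Module.Finite A (Hc deg e z) := by
  have := (hfin z).to_subtype
  have h1 : Module.Finite A (gr deg A M z) :=
    Module.Finite.equiv (Finsupp.supportedEquivFinsupp (M := M) (R := A) {i | deg i = z}).symm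
  have h2 : Module.Finite A (Zc deg e z) :=
    Module.Finite.of_injective (Submodule.inclusion (inf_le_right : Zc deg e z ≤ gr deg A M z))
      (Submodule.inclusion_injective _)
  infer_instance

lemma Res.length_ne_top [IsNoetherianRing A] [Module.Finite A M]
    (H : Res deg d i0 (IsLocalRing.maximalIdeal A)) (hfin : ∀ z, {i | deg i = z}.Finite) (z : ℤ) :
    Module.length A (Hc deg (act A M d) z) ≠ ⊤ := by
  have := Hc_finite hfin (act A M d) z
  exact length_killed_ne_top _ (H.killed z)

end length
end Sh
end Shamash

section Shamash
namespace Sh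
section exist

/-- One stage in the construction of a free resolution. -/
structure St (A : Type) [CommRing A] where
  /-- rank of the source -/
  r : ℕ
  /-- rank of the target -/
  s : ℕ
  /-- the map -/
  φ : (Fin r →₀ A) →ₗ[A] (Fin s →₀ A)

variable {A : Type} [CommRing A] [IsNoetherianRing A]

lemma exists_cover {s : ℕ} (N : Submodule A (Fin s →₀ A)) :
    ∃ (r : ℕ) (φ : (Fin r →₀ A) →ₗ[A] (Fin s →₀ A)), LinearMap.range φ = N := by
  obtain ⟨r, g, hg⟩ := Submodule.fg_iff_exists_fin_generating_family.1 (IsNoetherian.noetherian N)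
  exact ⟨r, Finsupp.linearCombination A g, by rw [Finsupp.range_linearCombination, hg]⟩

/-- The next stage. -/
noncomputable def St.next (S : St A) : St A :=
  ⟨(exists_cover (LinearMap.ker S.φ)).choose, S.r, (exists_cover (LinearMap.ker S.φ)).choose_spec.choose⟩

lemma St.next_range (S : St A) : LinearMap.range S.next.φ = LinearMap.ker S.φ :=
  (exists_cover (LinearMap.ker S.φ)).choose_spec.choose_spec

/-- The ideal as a submodule of the free module of rank one. -/
noncomputable def J0 (J : Ideal A) : Submodule A (Fin 1 →₀ A) :=
  Submodule.comap (Finsupp.lapply (R := A) (M := A) (0 : Fin 1)) J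

/-- The sequence of stages. -/
noncomputable def stg (J : Ideal A) : ℕ → St A
  | 0 => ⟨(exists_cover (J0 J)).choose, 1,
      (exists_cover (J0 J)).choose_spec.choose⟩
  | n + 1 => (stg J n).next

lemma stg_zero_range (J : Ideal A) : LinearMap.range (stg J 0).φ =
    J0 J :=
  (exists_cover (J0 J)).choose_spec.choose_spec

/-- The ranks. -/
noncomputable def rk (J : Ideal A) (n : ℕ) : ℕ := (stg J n).s

/-- The differentials. -/
noncomputable def ph (J : Ideal A) (n : ℕ) : (Fin (rk J (n + 1)) →₀ A) →ₗ[A] (Fin (rk J n) →₀ A) :=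
  (stg J n).φ

lemma ph_range (J : Ideal A) (n : ℕ) : LinearMap.range (ph J (n + 1)) = LinearMap.ker (ph J n) :=
  (stg J n).next_range

lemma ph_zero (J : Ideal A) (v : Fin (rk J 0) →₀ A) : v (0 : Fin 1) ∈ J ↔ ∃ w, ph J 0 w = v := by
  have := SetLike.ext_iff.1 (stg_zero_range J) v
  exact this.symm

variable (J : Ideal A)

/-- The inclusion of the degree `n` part. -/
noncomputable def jn (n : ℕ) : (Fin (rk J n) →₀ A) →ₗ[A] ((Σ n, Fin (rk J n)) →₀ A) :=
  Finsupp.lmapDomain A A (fun t => ⟨n, t⟩)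

/-- Degree. -/
def dg : (Σ n, Fin (rk J n)) → ℤ := fun x => (x.1 : ℤ)

/-- Columns of the total differential. -/
noncomputable def tcol : (n : ℕ) → Fin (rk J n) → ((Σ n, Fin (rk J n)) →₀ A)
  | 0, _ => 0
  | n + 1, t => jn J n (ph J n (Finsupp.single t 1))

/-- The total differential. -/
noncomputable def td : Module.End A ((Σ n, Fin (rk J n)) →₀ A) :=
  Finsupp.linearCombination A fun x => tcol J x.1 x.2

lemma jn_single (n : ℕ) (t : Fin (rk J n)) (a : A) :
    jn J n (Finsupp.single t a) = Finsupp.single ⟨n, t⟩ a := by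
  simp [jn]

lemma jn_inj (n : ℕ) : Function.Injective (jn J n) :=
  Finsupp.mapDomain_injective (f := fun t : Fin (rk J n) => (⟨n, t⟩ : Σ n, Fin (rk J n)))
    (fun a b h => by simpa using h)

lemma td_jn_zero (v) : td J (jn J 0 v) = 0 := by
  have : td J ∘ₗ jn J 0 = 0 := by
    ext1 t
    ext1
    simp [jn_single, td, tcol]
  exact LinearMap.congr_fun this v

lemma td_jn_succ (n : ℕ) (v) : td J (jn J (n + 1) v) = jn J n (ph J n v) := by
  have : td J ∘ₗ jn J (n + 1) = jn J n ∘ₗ ph J n := by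
    ext1 t
    ext1
    simp [jn_single, td, tcol]
  exact LinearMap.congr_fun this v

lemma jn_mem (n : ℕ) (v) : jn J n v ∈ gr (dg J) A A n := by
  induction v using Finsupp.induction_linear with
  | zero => simp
  | add v w hv hw => rw [map_add]; exact add_mem hv hw
  | single t a => rw [jn_single]; exact single_mem_gr (A := A) rfl a

lemma exists_jn (n : ℕ) {v} (hv : v ∈ gr (dg J) A A (n : ℤ)) : ∃ w, jn J n w = v := by
  refine gr_induction (A := A) (P := fun v => ∃ w, jn J n w = v) ⟨0, map_zero _⟩ ?_ ?_ hv
  · rintro _ _ ⟨v, rfl⟩ ⟨w, rfl⟩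
    exact ⟨v + w, map_add _ _ _⟩
  · rintro ⟨m, t⟩ x h
    have h : m = n := by simpa [dg] using h
    subst h
    exact ⟨_, jn_single J m t x⟩

theorem exists_res : ∃ (ι : Type) (deg : ι → ℤ) (d : Module.End A (ι →₀ A)) (i0 : ι),
    Res deg d i0 J ∧ ∀ z, {i | deg i = z}.Finite := by
  refine ⟨_, dg J, td J, ⟨0, (0 : Fin 1)⟩, ⟨fun i => Int.natCast_nonneg _, ?_, ?_, ?_, ?_, ?_⟩, ?_⟩
  · rintro ⟨m, t⟩
    constructor
    · intro h
      have h : m = 0 := by simpa [dg] using h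
      subst h
      congr 1
      exact Subsingleton.elim (α := Fin 1) _ _
    · rintro h
      rw [h]; rfl
  · refine IsHom.of_single_one ?_
    rintro ⟨m, t⟩
    rw [← jn_single]
    cases m with
    | zero => rw [td_jn_zero]; exact zero_mem _
    | succ m => rw [td_jn_succ]; exact gr_cast (jn_mem J m _) (by simp [dg])
  · ext1 ⟨m, t⟩
    ext1
    simp only [LinearMap.comp_apply, Finsupp.lsingle_apply, Module.End.mul_apply, LinearMap.zero_apply]
    rw [← jn_single]
    rcases m with _ | _ | m
    · rw [td_jn_zero, map_zero]
    · rw [td_jn_succ, td_jn_zero]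
    · rw [td_jn_succ, td_jn_succ]
      have : ph J (m + 1) (Finsupp.single t 1) ∈ LinearMap.ker (ph J m) := by
        rw [← ph_range]; exact ⟨_, rfl⟩
      rw [LinearMap.mem_ker.1 this, map_zero]
  · intro z hz v hv hdv
    obtain ⟨n, rfl⟩ : ∃ n : ℕ, z = ((n + 1 : ℕ) : ℤ) := ⟨(z - 1).toNat, by omega⟩
    obtain ⟨w, rfl⟩ := exists_jn J _ hv
    rw [td_jn_succ, map_eq_zero_iff _ (jn_inj J n)] at hdv
    have : w ∈ LinearMap.range (ph J (n + 1)) := by rw [ph_range]; exact hdv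
    obtain ⟨u, rfl⟩ := this
    exact ⟨jn J (n + 1 + 1) u, gr_cast (jn_mem J _ u) (by push_cast; ring), td_jn_succ J _ _⟩
  · intro a
    have := ph_zero J (Finsupp.single (0 : Fin 1) a)
    have h0 : (Finsupp.single (0 : Fin 1) a) (0 : Fin 1) = a := Finsupp.single_eq_same
    refine Iff.trans (Iff.of_eq (congrArg (· ∈ J) h0.symm)) (this.trans ?_)
    constructor
    · rintro ⟨w, hw⟩
      refine ⟨jn J (0 + 1) w, gr_cast (jn_mem J _ w) (by simp), ?_⟩
      rw [td_jn_succ, hw]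
      exact jn_single J 0 _ _
    · rintro ⟨v, hv, hdv⟩
      obtain ⟨w, rfl⟩ := exists_jn J (0 + 1) (gr_cast hv (by simp))
      rw [td_jn_succ] at hdv
      refine ⟨w, jn_inj J 0 ?_⟩
      rw [hdv]
      exact (jn_single J 0 _ _).symm
  · intro z
    refine (Set.finite_range (fun t : Fin (rk J z.toNat) => (⟨z.toNat, t⟩ : Σ n, Fin (rk J n)))).subset ?_
    rintro ⟨m, t⟩ h
    have h : (m : ℤ) = z := h
    subst h
    exact ⟨t, rfl⟩

end exist
end Sh
end Shamash

section Shamash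
namespace Sh
section final

lemma mem_max_iff {Q R : Type} [CommRing Q] [IsLocalRing Q] [CommRing R] [IsLocalRing R]
    [Algebra Q R] (hsurj : Function.Surjective (algebraMap Q R)) (a : Q) :
    algebraMap Q R a ∈ IsLocalRing.maximalIdeal R ↔ a ∈ IsLocalRing.maximalIdeal Q := by
  rw [← IsLocalRing.eq_maximalIdeal
    (Ideal.comap_isMaximal_of_surjective (algebraMap Q R) hsurj (K := IsLocalRing.maximalIdeal R)),
    Ideal.mem_comap]

lemma betti_step {Q R : Type} [CommRing Q] [IsNoetherianRing Q] [IsLocalRing Q] [CommRing R]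
    [IsLocalRing R] [Algebra Q R] {M : Type} [AddCommGroup M] [Module Q M] [Module R M]
    [IsScalarTower Q R M] [Module.Finite Q M] {f : Q} (hf : ∀ a, f * a = 0 → a = 0)
    (hsurj : Function.Surjective (algebraMap Q R))
    (hker : ∀ a : Q, algebraMap Q R a = 0 ↔ ∃ b, a = f * b)
    (hfm : f ∈ IsLocalRing.maximalIdeal Q * Module.annihilator Q M) (i : ℕ) :
    bettiNumber R M i = ∑ j ∈ Finset.range (i / 2 + 1), bettiNumber Q M (i - 2 * j) := by
  obtain ⟨ι, deg, d, i0, H, hfin⟩ := exists_res (IsLocalRing.maximalIdeal Q)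
  obtain ⟨s, h0, hhom, hs, hsa⟩ := H.higher' hfm
  have H' := H.shamash R hf hsurj hker (mem_max_iff hsurj) h0 hhom hs
  rw [H'.betti, act_act, length_compare R M H.nonneg hsurj h0 hsa,
    ENat.toNat_sum (fun j _ => H.length_ne_top hfin _), Finset.sum_range]
  refine Finset.sum_congr rfl fun j _ => ?_
  have hj : ((i - 2 * (j : ℕ) : ℕ) : ℤ) = (i : ℤ) - 2 * ((j : ℕ) : ℤ) := by
    have := j.2
    omega
  rw [H.betti, hj]

lemma betti_bij {Q R : Type} [CommRing Q] [IsNoetherianRing Q] [IsLocalRing Q] [CommRing R]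
    [IsLocalRing R] [Algebra Q R] {M : Type} [AddCommGroup M] [Module Q M] [Module R M]
    [IsScalarTower Q R M] (hbij : Function.Bijective (algebraMap Q R)) (i : ℕ) :
    bettiNumber R M i = bettiNumber Q M i := by
  obtain ⟨ι, deg, d, i0, H, hfin⟩ := exists_res (IsLocalRing.maximalIdeal Q)
  have H' := H.bij R hbij (mem_max_iff hbij.2)
  rw [H'.betti, act_act, length_compare_bij R M hbij.2, H.betti]

lemma sum_choose (n k : ℕ) :
    ∑ j ∈ Finset.range (k + 1), Nat.choose (n + j - 1) j = Nat.choose (n + 1 + k - 1) k := by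
  induction k with
  | zero => simp
  | succ k ih =>
    rw [Finset.sum_range_succ, ih]
    have h1 : n + 1 + k - 1 = n + k := by omega
    have h2 : n + (k + 1) - 1 = n + k := by omega
    have h3 : n + 1 + (k + 1) - 1 = n + k + 1 := by omega
    rw [h1, h2, h3, Nat.choose_succ_succ]

lemma sum_step (n i : ℕ) (b : ℕ → ℕ) :
    ∑ j ∈ Finset.range (i / 2 + 1), Nat.choose (n + j - 1) j *
      ∑ l ∈ Finset.range ((i - 2 * j) / 2 + 1), b (i - 2 * j - 2 * l) =
    ∑ k ∈ Finset.range (i / 2 + 1), Nat.choose (n + 1 + k - 1) k * b (i - 2 * k) := by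
  have h : ∀ j ∈ Finset.range (i / 2 + 1), Nat.choose (n + j - 1) j *
      ∑ l ∈ Finset.range ((i - 2 * j) / 2 + 1), b (i - 2 * j - 2 * l) =
      ∑ k ∈ Finset.Ico j (i / 2 + 1), Nat.choose (n + j - 1) j * b (i - 2 * k) := by
    intro j hj
    rw [Finset.mem_range] at hj
    rw [Finset.sum_Ico_eq_sum_range, Finset.mul_sum,
      show (i - 2 * j) / 2 + 1 = i / 2 + 1 - j by omega]
    refine Finset.sum_congr rfl fun l _ => ?_
    rw [show i - 2 * j - 2 * l = i - 2 * (j + l) by omega]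
  rw [Finset.sum_congr rfl h, Finset.sum_comm' (t' := Finset.range (i / 2 + 1))
    (s' := fun k => Finset.range (k + 1))]
  · refine Finset.sum_congr rfl fun k _ => ?_
    rw [← Finset.sum_mul, sum_choose]
  · intro x y
    simp only [Finset.mem_range, Finset.mem_Ico]
    omega

open Pointwise in
lemma weaklyRegular_quot {Q : Type} [CommRing Q] (r : Q) (rs : List Q)
    (h : RingTheory.Sequence.IsWeaklyRegular Q (r :: rs)) :
    (∀ a, r * a = 0 → a = 0) ∧ RingTheory.Sequence.IsWeaklyRegular (Q ⧸ Ideal.span {r})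
      (rs.map (algebraMap Q (Q ⧸ Ideal.span {r}))) := by
  rw [RingTheory.Sequence.isWeaklyRegular_cons_iff] at h
  refine ⟨fun a ha => h.1 (by simpa using ha), ?_⟩
  rw [RingTheory.Sequence.isWeaklyRegular_map_algebraMap_iff]
  have e : (r • (⊤ : Submodule Q Q)) = Ideal.span {r} := by
    rw [← Submodule.ideal_span_singleton_smul]; simp
  exact (LinearEquiv.isWeaklyRegular_congr (Submodule.quotEquivOfEq _ _ e) rs).1 h.2

lemma betti_main (n : ℕ) : ∀ (Q R : Type) [CommRing Q] [IsNoetherianRing Q] [IsLocalRing Q]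
    [CommRing R] [IsLocalRing R] [Algebra Q R] (f : Fin n → Q) (M : Type) [AddCommGroup M]
    [Module Q M] [Module R M] [IsScalarTower Q R M] [Module.Finite Q M],
    RingTheory.Sequence.IsWeaklyRegular Q (List.ofFn f) →
    Function.Surjective (algebraMap Q R) →
    (∀ a, algebraMap Q R a = 0 ↔ a ∈ Ideal.span (Set.range f)) →
    (∀ j, f j ∈ IsLocalRing.maximalIdeal Q * Module.annihilator Q M) → ∀ i : ℕ,
    bettiNumber R M i = ∑ j ∈ Finset.range (i / 2 + 1),
        Nat.choose (n + j - 1) j * bettiNumber Q M (i - 2 * j) := by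
  induction n with
  | zero =>
    intro Q R _ _ _ _ _ _ f M _ _ _ _ _ _ hsurj hker _ i
    have hbij : Function.Bijective (algebraMap Q R) := by
      refine ⟨(injective_iff_map_eq_zero _).2 fun a ha => ?_, hsurj⟩
      simpa [Set.range_eq_empty] using (hker a).1 ha
    rw [betti_bij hbij, Finset.sum_range_succ', Finset.sum_eq_zero]
    · simp
    · intro j _
      rw [Nat.choose_eq_zero_of_lt (by omega), zero_mul]
  | succ n ih =>
    intro Q R _ _ _ _ _ _ f M _ _ _ _ _ hreg hsurj hker hann i
    rw [List.ofFn_succ] at hreg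
    obtain ⟨hnzd, hreg'⟩ := weaklyRegular_quot _ _ hreg
    rw [List.map_ofFn] at hreg'
    have hfm : f 0 ∈ IsLocalRing.maximalIdeal Q := 
      (Ideal.mul_le_left (I := IsLocalRing.maximalIdeal Q) (J := Module.annihilator Q M)) (hann 0)
    have hne : Ideal.span {f 0} ≠ ⊤ := by
      intro h
      have : Ideal.span {f 0} ≤ IsLocalRing.maximalIdeal Q := by
        rw [Ideal.span_singleton_le_iff_mem]; exact hfm
      rw [h, top_le_iff] at this
      exact (IsLocalRing.maximalIdeal.isMaximal Q).ne_top this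
    have : Nontrivial (Q ⧸ Ideal.span {f 0}) := Ideal.Quotient.nontrivial_iff.2 hne
    have hloc : IsLocalRing (Q ⧸ Ideal.span {f 0}) :=
      IsLocalRing.of_surjective' (Ideal.Quotient.mk _) Ideal.Quotient.mk_surjective
    have hle : ∀ a ∈ Ideal.span {f 0}, algebraMap Q R a = 0 := by
      intro a ha
      rw [hker]
      refine Ideal.span_mono ?_ ha
      rintro _ rfl
      exact ⟨0, rfl⟩
    letI : Algebra (Q ⧸ Ideal.span {f 0}) R := (Ideal.Quotient.lift _ (algebraMap Q R) hle).toAlgebra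
    have hmap : ∀ a : Q, algebraMap (Q ⧸ Ideal.span {f 0}) R (Ideal.Quotient.mk _ a) = algebraMap Q R a :=
      fun a => rfl
    letI : Module (Q ⧸ Ideal.span {f 0}) M := Module.compHom M (algebraMap (Q ⧸ Ideal.span {f 0}) R)
    have hsm : ∀ (x : Q ⧸ Ideal.span {f 0}) (m : M), x • m = algebraMap (Q ⧸ Ideal.span {f 0}) R x • m :=
      fun x m => rfl
    have hsm' : ∀ (a : Q) (m : M), (Ideal.Quotient.mk (Ideal.span {f 0}) a) • m = a • m := by
      intro a m
      rw [hsm, hmap, algebraMap_smul]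
    haveI : IsScalarTower (Q ⧸ Ideal.span {f 0}) R M :=
      ⟨fun x y m => by rw [hsm, Algebra.smul_def, mul_smul]⟩
    haveI : IsScalarTower Q (Q ⧸ Ideal.span {f 0}) M :=
      ⟨fun a x m => by
        obtain ⟨b, rfl⟩ := Ideal.Quotient.mk_surjective x
        rw [hsm', Algebra.smul_def, Ideal.Quotient.algebraMap_eq, ← map_mul, hsm', mul_smul]⟩
    haveI : Module.Finite (Q ⧸ Ideal.span {f 0}) M := Module.Finite.of_restrictScalars_finite Q _ M
    have hstep : ∀ i, bettiNumber (Q ⧸ Ideal.span {f 0}) M i =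
        ∑ j ∈ Finset.range (i / 2 + 1), bettiNumber Q M (i - 2 * j) := by
      refine betti_step hnzd Ideal.Quotient.mk_surjective ?_ (hann 0)
      intro a
      rw [Ideal.Quotient.algebraMap_eq, Ideal.Quotient.eq_zero_iff_mem, Ideal.mem_span_singleton]
      exact Iff.rfl
    rw [ih (Q ⧸ Ideal.span {f 0}) R (algebraMap Q (Q ⧸ Ideal.span {f 0}) ∘ fun i => f i.succ) M hreg'
      ?_ ?_ ?_ i]
    · simp only [hstep]
      exact sum_step n i (bettiNumber Q M)
    · intro y
      obtain ⟨a, rfl⟩ := hsurj y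
      exact ⟨Ideal.Quotient.mk _ a, rfl⟩
    · intro x
      obtain ⟨a, rfl⟩ := Ideal.Quotient.mk_surjective x
      rw [hmap, hker, Set.range_comp, ← Ideal.map_span, Ideal.Quotient.algebraMap_eq,
        Ideal.mem_quotient_iff_mem_sup, ← Ideal.span_union]
      have : Set.range f = Set.range (fun i : Fin n => f i.succ) ∪ {f 0} := by
        ext y
        simp only [Set.mem_range, Set.mem_union, Set.mem_singleton_iff]
        rw [Fin.exists_fin_succ, or_comm, eq_comm (a := f 0)]
      rw [this]
    · intro j
      have h1 := Ideal.mem_map_of_mem (algebraMap Q (Q ⧸ Ideal.span {f 0})) (hann j.succ)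
      rw [Ideal.map_mul] at h1
      refine Ideal.mul_mono ?_ ?_ h1
      · rw [Ideal.map_le_iff_le_comap]
        intro a ha
        exact (mem_max_iff Ideal.Quotient.mk_surjective a).2 ha
      · rw [Ideal.map_le_iff_le_comap]
        intro a ha
        rw [Ideal.mem_comap, Module.mem_annihilator]
        intro m
        exact (hsm' a m).trans (Module.mem_annihilator.1 ha m)

end final
end Sh
end Shamash

/-- **Shamash's equality.** If `f₁, …, fₙ` is a `Q`-regular sequence contained in
the maximal ideal of a Noetherian local ring `Q`, `I = (f₁, …, fₙ)`, `R = Q/I`, and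
`M` is a finitely generated `R`-module with `I ⊆ m·ann_Q(M)`, then for all `i ≥ 0`,
`β_i^R(M) = ∑_{2j ≤ i} C(n−1+j, n−1) · β_{i−2j}^Q(M)`, i.e.
`P_M^R(t) = P_M^Q(t)·(1−t²)^{−n}`. -/
theorem betti_quotient_eq_of_regular_sequence_of_ann
    (Q : Type) [CommRing Q] [IsNoetherianRing Q] [IsLocalRing Q]
    (n : ℕ) (f : Fin n → Q)
    (hreg : RingTheory.Sequence.IsRegular Q (List.ofFn f))
    (hfm : ∀ j, f j ∈ IsLocalRing.maximalIdeal Q)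
    (I : Ideal Q) (hI : I = Ideal.span (Set.range f))
    [IsLocalRing (Q ⧸ I)]
    (M : Type) [AddCommGroup M] [Module Q M] [Module (Q ⧸ I) M]
    [IsScalarTower Q (Q ⧸ I) M] [Module.Finite (Q ⧸ I) M]
    (hann : I ≤ IsLocalRing.maximalIdeal Q * Module.annihilator Q M)
    (i : ℕ) :
    bettiNumber (Q ⧸ I) M i =
      ∑ j ∈ Finset.range (i / 2 + 1),
        Nat.choose (n + j - 1) j * bettiNumber Q M (i - 2 * j) := by
  have : Module.Finite Q M := Module.Finite.trans (Q ⧸ I) M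
  refine Sh.betti_main n Q (Q ⧸ I) f M hreg.toIsWeaklyRegular Ideal.Quotient.mk_surjective ?_ ?_ i
  · intro a
    rw [Ideal.Quotient.algebraMap_eq, Ideal.Quotient.eq_zero_iff_mem, hI]
  · intro j
    exact hann (by rw [hI]; exact Ideal.subset_span ⟨j, rfl⟩)
end

section
/- Let (Q, m, k) be a commutative Noetherian local ring, let f_1, …, f_n be a Q-regular sequence contained in m, set I = (f_1, …, f_n) and R = Q/I. If I ∩ m² ⊆ m·I (equivalently, f_1, …, f_n can be extended to a minimal generating set of m), then for every finitely generated R-module M and every integer i ≥ 0 one has the equality β_i^Q(M) = Σ_{j=0}^{min(n,i)} C(n, j) · β_{i−j}^R(M), where C(n,j) denotes the binomial coefficient. (Equivalently, P_M^Q(t) = P_M^R(t)·(1+t)^n.) -/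
open CategoryTheory TensorProduct

namespace BettiAux
open CategoryTheory.Limits

section cat
universe u v u' v'
variable {C : Type u} [Category.{v} C] [Abelian C]
variable {D : Type u'} [Category.{v'} D] [Abelian D]

/-- The augmentation of a projective resolution, with target `Z`. -/
noncomputable def pi0 {Z : C} (P : ProjectiveResolution Z) : P.complex.X 0 ⟶ Z := P.π.f 0

lemma d_pi0 {Z : C} (P : ProjectiveResolution Z) : P.complex.d 1 0 ≫ pi0 P = 0 :=
  P.complex_d_comp_π_f_zero

instance epi_pi0 {Z : C} (P : ProjectiveResolution Z) : Epi (pi0 P) :=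
  inferInstanceAs (Epi (P.π.f 0))

lemma exact_pi0 {Z : C} (P : ProjectiveResolution Z) :
    (ShortComplex.mk _ _ (d_pi0 P)).Exact := P.exact₀

/-- The augmentation is a cokernel. -/
noncomputable def colim_pi0 {Z : C} (P : ProjectiveResolution Z) :
    IsColimit (CokernelCofork.ofπ (pi0 P) (d_pi0 P)) := P.isColimitCokernelCofork

lemma d_aug (S : ShortComplex C) (P : ProjectiveResolution S.X₁) :
    P.complex.d 1 0 ≫ (pi0 P ≫ S.f) = 0 := by
  rw [← Category.assoc, d_pi0, zero_comp]

lemma aug_g (S : ShortComplex C) (P : ProjectiveResolution S.X₁) :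
    (pi0 P ≫ S.f) ≫ S.g = 0 := by
  rw [Category.assoc, S.zero, comp_zero]

/-- Splicing a projective resolution of the kernel with a projective cover. -/
noncomputable def augComplex (S : ShortComplex C) (P : ProjectiveResolution S.X₁) :
    ChainComplex C ℕ :=
  ChainComplex.augment P.complex (X := S.X₂) (pi0 P ≫ S.f) (d_aug S P)

lemma aug_exact_one (S : ShortComplex C) (hS : S.ShortExact) (P : ProjectiveResolution S.X₁) :
    (ShortComplex.mk (P.complex.d 1 0) (pi0 P ≫ S.f) (d_aug S P)).Exact := by
  have := hS.mono_f
  let φ : (ShortComplex.mk _ _ (d_pi0 P)) ⟶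
      (ShortComplex.mk (P.complex.d 1 0) (pi0 P ≫ S.f) (d_aug S P)) :=
    { τ₁ := 𝟙 _, τ₂ := 𝟙 _, τ₃ := S.f }
  have : Epi φ.τ₁ := by dsimp [φ]; infer_instance
  have : IsIso φ.τ₂ := by dsimp [φ]; infer_instance
  have : Mono φ.τ₃ := by dsimp [φ]; infer_instance
  exact (ShortComplex.exact_iff_of_epi_of_isIso_of_mono φ).1 (exact_pi0 P)

lemma aug_exact_zero (S : ShortComplex C) (hS : S.ShortExact) (P : ProjectiveResolution S.X₁) :
    (ShortComplex.mk (pi0 P ≫ S.f) S.g (aug_g S P)).Exact := by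
  let φ : (ShortComplex.mk (pi0 P ≫ S.f) S.g (aug_g S P)) ⟶ S :=
    { τ₁ := pi0 P, τ₂ := 𝟙 _, τ₃ := 𝟙 _ }
  have : Epi φ.τ₁ := by dsimp [φ]; infer_instance
  have : IsIso φ.τ₂ := by dsimp [φ]; infer_instance
  have : Mono φ.τ₃ := by dsimp [φ]; infer_instance
  exact (ShortComplex.exact_iff_of_epi_of_isIso_of_mono φ).2 hS.exact

lemma augComplex_exactAt_succ (S : ShortComplex C) (hS : S.ShortExact)
    (P : ProjectiveResolution S.X₁) (n : ℕ) : (augComplex S P).ExactAt (n + 1) := by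
  rw [HomologicalComplex.exactAt_iff' _ (n + 1 + 1) (n + 1) n (by simp) (by simp)]
  match n with
  | 0 => exact aug_exact_one S hS P
  | n + 1 => exact P.exact_succ n

/-- The augmentation of the spliced resolution. -/
noncomputable def augPi (S : ShortComplex C) (P : ProjectiveResolution S.X₁) :
    augComplex S P ⟶ (ChainComplex.single₀ C).obj S.X₃ :=
  (ChainComplex.toSingle₀Equiv _ _).symm ⟨S.g, aug_g S P⟩

lemma augPi_f_zero (S : ShortComplex C) (P : ProjectiveResolution S.X₁) :
    (augPi S P).f 0 = S.g := by
  exact ChainComplex.toSingle₀Equiv_symm_apply_f_zero (C := augComplex S P) S.g _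

/-- The spliced projective resolution. -/
noncomputable def augRes (S : ShortComplex C) (hS : S.ShortExact) [hP : Projective S.X₂]
    (P : ProjectiveResolution S.X₁) : ProjectiveResolution S.X₃ where
  complex := augComplex S P
  projective n := by
    match n with
    | 0 => exact hP
    | n + 1 => exact P.projective n
  π := augPi S P
  quasiIso := ⟨fun n => by
    cases n
    · rw [ChainComplex.quasiIsoAt₀_iff, ShortComplex.quasiIso_iff_of_zeros']
      · refine (ShortComplex.exact_and_epi_g_iff_of_iso ?_).2
          ⟨aug_exact_zero S hS P, hS.epi_g⟩
        refine ShortComplex.isoMk (Iso.refl _) (Iso.refl _) (Iso.refl _) ?_ ?_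
        · exact (Category.id_comp _).trans (Category.comp_id _).symm
        · refine (Category.id_comp _).trans (Eq.trans ?_ (Category.comp_id _).symm)
          exact (augPi_f_zero S P).symm
      all_goals rfl
    · rw [quasiIsoAt_iff_exactAt']
      · apply augComplex_exactAt_succ S hS
      · apply ChainComplex.exactAt_succ_single_obj⟩

variable [EnoughProjectives C]

lemma shift_iso (F : C ⥤ D) [F.Additive] (S : ShortComplex C) (hS : S.ShortExact)
    [hP : Projective S.X₂] (n : ℕ) :
    Nonempty ((F.leftDerived (n + 2)).obj S.X₃ ≅ (F.leftDerived (n + 1)).obj S.X₁) := by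
  let P := ProjectiveResolution.of S.X₁
  let R := augRes S hS P
  refine ⟨R.isoLeftDerivedObj F (n+2) ≪≫ ?_ ≪≫ (P.isoLeftDerivedObj F (n+1)).symm⟩
  refine ShortComplex.homologyMapIso
      (HomologicalComplex.isoSc' _ (n+3) (n+2) (n+1) (by simp) (by simp)) ≪≫ ?_ ≪≫
    (ShortComplex.homologyMapIso
      (HomologicalComplex.isoSc' _ (n+2) (n+1) (n) (by simp) (by simp))).symm
  exact Iso.refl _

lemma shift_one_iso (F : C ⥤ D) [F.Additive] [PreservesFiniteColimits F]
    (S : ShortComplex C) (hS : S.ShortExact)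
    [hP : Projective S.X₂] :
    Nonempty ((F.leftDerived 1).obj S.X₃ ≅ kernel (F.map S.f)) := by
  let P := ProjectiveResolution.of S.X₁
  let R := augRes S hS P
  refine ⟨R.isoLeftDerivedObj F 1 ≪≫
    ShortComplex.homologyMapIso (HomologicalComplex.isoSc' _ 2 1 0 (by simp) (by simp)) ≪≫ ?_⟩
  let T : ShortComplex D := ShortComplex.mk (F.map (P.complex.d 1 0)) (F.map (pi0 P ≫ S.f)) (by
    rw [← F.map_comp, d_aug, F.map_zero])
  have w : F.map (P.complex.d 1 0) ≫ F.map (pi0 P) = 0 := by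
    rw [← F.map_comp, d_pi0, F.map_zero]
  have hc : IsColimit (CokernelCofork.ofπ (F.map (pi0 P)) w) :=
    CokernelCofork.mapIsColimit _ (colim_pi0 P) F
  have hg : hc.desc (CokernelCofork.ofπ (F.map (pi0 P ≫ S.f)) T.zero) = F.map S.f := by
    apply Cofork.IsColimit.hom_ext hc
    refine (hc.fac _ WalkingParallelPair.one).trans ?_
    exact F.map_comp _ _
  let h : T.RightHomologyData :=
    { Q := F.obj S.X₁
      H := kernel (F.map S.f)
      p := F.map (pi0 P)
      ι := kernel.ι _
      wp := w
      hp := hc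
      wι := by
        rw [hg]; exact kernel.condition _
      hι := IsLimit.ofIsoLimit (isKernelCompMono (kernelIsKernel (F.map S.f)) (𝟙 _) (by
          rw [Category.comp_id]; exact hg)) (Fork.ext (Iso.refl _) (by simp)) }
  exact h.homologyIso
end cat
end BettiAux

namespace BettiAux
section modcat
variable (A : Type) [CommRing A]

/-- The underlying module of Mathlib's `Tor`. -/
abbrev TorM (M N : Type) [AddCommGroup M] [Module A M] [AddCommGroup N] [Module A N] (i : ℕ) :
    Type :=
  (((Tor (ModuleCat A) i).obj (ModuleCat.of A M)).obj (ModuleCat.of A N))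

variable (M : Type) [AddCommGroup M] [Module A M]
variable {N K F : Type} [AddCommGroup N] [Module A N] [AddCommGroup K] [Module A K]
  [AddCommGroup F] [Module A F]

instance : Limits.PreservesFiniteColimits
    ((MonoidalCategory.tensoringLeft (ModuleCat A)).obj (ModuleCat.of A M)) :=
  inferInstanceAs (Limits.PreservesFiniteColimits
    (MonoidalCategory.tensorLeft (ModuleCat.of A M)))

lemma tor_zero : Nonempty (TorM A M N 0 ≃ₗ[A] M ⊗[A] N) :=
  ⟨((Functor.leftDerivedZeroIsoSelf
    ((MonoidalCategory.tensoringLeft (ModuleCat A)).obj (ModuleCat.of A M))).app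
      (ModuleCat.of A N)).toLinearEquiv⟩

lemma tor_congr {N' : Type} [AddCommGroup N'] [Module A N'] (e : N ≃ₗ[A] N') (i : ℕ) :
    Nonempty (TorM A M N i ≃ₗ[A] TorM A M N' i) :=
  ⟨(((Tor (ModuleCat A) i).obj (ModuleCat.of A M)).mapIso e.toModuleIso).toLinearEquiv⟩

variable (f : K →ₗ[A] F) (g : F →ₗ[A] N)

lemma tor_succ (hf : Function.Injective f) (hfg : Function.Exact f g)
    (hg : Function.Surjective g) [Module.Projective A F] (n : ℕ) :
    Nonempty (TorM A M N (n + 2) ≃ₗ[A] TorM A M K (n + 1)) := by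
  let S : ShortComplex (ModuleCat A) := ShortComplex.mk (ModuleCat.ofHom f) (ModuleCat.ofHom g)
    (by ext x; exact hfg.apply_apply_eq_zero x)
  have hS : S.ShortExact := ModuleCat.shortComplex_shortExact S hfg hf hg
  have : Projective S.X₂ := ModuleCat.projective_of_categoryTheory_projective _
  obtain ⟨e⟩ := shift_iso
    ((MonoidalCategory.tensoringLeft (ModuleCat A)).obj (ModuleCat.of A M)) S hS n
  exact ⟨e.toLinearEquiv⟩

lemma tor_one (hf : Function.Injective f) (hfg : Function.Exact f g)
    (hg : Function.Surjective g) [Module.Projective A F] :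
    Nonempty (TorM A M N 1 ≃ₗ[A] LinearMap.ker (f.lTensor M)) := by
  let S : ShortComplex (ModuleCat A) := ShortComplex.mk (ModuleCat.ofHom f) (ModuleCat.ofHom g)
    (by ext x; exact hfg.apply_apply_eq_zero x)
  have hS : S.ShortExact := ModuleCat.shortComplex_shortExact S hfg hf hg
  have : Projective S.X₂ := ModuleCat.projective_of_categoryTheory_projective _
  obtain ⟨e⟩ := shift_one_iso
    ((MonoidalCategory.tensoringLeft (ModuleCat A)).obj (ModuleCat.of A M)) S hS
  exact ⟨(e ≪≫ ModuleCat.kernelIsoKer _).toLinearEquiv⟩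

end modcat
end BettiAux

namespace BettiAux
section
variable (A : Type) [CommRing A] (M : Type) [AddCommGroup M] [Module A M]

/-- The kernel of a map intertwined by equivalences. -/
lemma ker_equiv {X Y X' Y' : Type} [AddCommGroup X] [AddCommGroup Y] [AddCommGroup X']
    [AddCommGroup Y'] [Module A X] [Module A Y] [Module A X'] [Module A Y']
    (u : X →ₗ[A] Y) (u' : X' →ₗ[A] Y') (a : X ≃ₗ[A] X') (b : Y ≃ₗ[A] Y')
    (h : ∀ x, u' (a x) = b (u x)) :
    Nonempty (LinearMap.ker u ≃ₗ[A] LinearMap.ker u') := by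
  refine ⟨a.ofSubmodules _ _ ?_⟩
  ext y
  simp only [Submodule.mem_map, LinearMap.mem_ker, LinearEquiv.coe_coe]
  constructor
  · rintro ⟨x, hx, rfl⟩
    rw [h, hx, map_zero]
  · intro hy
    refine ⟨a.symm y, ?_, by simp⟩
    apply b.injective
    rw [← h, map_zero, LinearEquiv.apply_symm_apply, hy]

lemma ker_prodMap_equiv {X Y X' Y' : Type} [AddCommGroup X] [AddCommGroup Y] [AddCommGroup X']
    [AddCommGroup Y'] [Module A X] [Module A Y] [Module A X'] [Module A Y']
    (u : X →ₗ[A] Y) (u' : X' →ₗ[A] Y') :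
    Nonempty (LinearMap.ker (u.prodMap u') ≃ₗ[A] LinearMap.ker u × LinearMap.ker u') := by
  refine ⟨{
    toFun := fun x => (⟨x.1.1, (Prod.mk.inj (LinearMap.mem_ker.1 x.2)).1⟩,
      ⟨x.1.2, (Prod.mk.inj (LinearMap.mem_ker.1 x.2)).2⟩)
    invFun := fun y => ⟨(y.1.1, y.2.1), Prod.ext y.1.2 y.2.2⟩
    map_add' := fun _ _ => rfl
    map_smul' := fun _ _ => rfl
    left_inv := fun _ => rfl
    right_inv := fun _ => rfl }⟩

variable {N N' K K' F F' : Type} [AddCommGroup N] [Module A N] [AddCommGroup K] [Module A K]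
  [AddCommGroup F] [Module A F] [AddCommGroup N'] [Module A N'] [AddCommGroup K'] [Module A K']
  [AddCommGroup F'] [Module A F']

lemma ker_lTensor_prod (i : K →ₗ[A] F) (i' : K' →ₗ[A] F') :
    Nonempty (LinearMap.ker ((i.prodMap i').lTensor M) ≃ₗ[A]
      LinearMap.ker (i.lTensor M) × LinearMap.ker (i'.lTensor M)) := by
  obtain ⟨e⟩ := ker_equiv A ((i.prodMap i').lTensor M) ((i.lTensor M).prodMap (i'.lTensor M))
    (TensorProduct.prodRight A A M K K') (TensorProduct.prodRight A A M F F') (by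
      intro x
      induction x with
      | zero => simp
      | tmul m y => simp
      | add x y hx hy => simp only [map_add, hx, hy])
  obtain ⟨e'⟩ := ker_prodMap_equiv A (i.lTensor M) (i'.lTensor M)
  exact ⟨e ≪≫ₗ e'⟩

lemma tor_prod (n : ℕ) (N N' : Type) [AddCommGroup N] [Module A N] [AddCommGroup N'] [Module A N'] :
    Nonempty (TorM A M (N × N') n ≃ₗ[A] TorM A M N n × TorM A M N' n) := by
  induction n using Nat.strong_induction_on generalizing N N' with
  | _ n ih =>
  let p : (N →₀ A) →ₗ[A] N := Finsupp.linearCombination A id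
  let p' : (N' →₀ A) →ₗ[A] N' := Finsupp.linearCombination A id
  have hp : Function.Surjective p := Finsupp.linearCombination_id_surjective A N
  have hp' : Function.Surjective p' := Finsupp.linearCombination_id_surjective A N'
  let i := (LinearMap.ker p).subtype
  let i' := (LinearMap.ker p').subtype
  have hi : Function.Injective i := Subtype.val_injective
  have hi' : Function.Injective i' := Subtype.val_injective
  have he : Function.Exact i p := LinearMap.exact_subtype_ker_map p
  have he' : Function.Exact i' p' := LinearMap.exact_subtype_ker_map p'
  have hip : Function.Injective (i.prodMap i') := Function.Injective.prodMap hi hi'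
  have hpp : Function.Surjective (p.prodMap p') := Function.Surjective.prodMap hp hp'
  have hep : Function.Exact (i.prodMap i') (p.prodMap p') := by
    rintro ⟨x, y⟩
    have h1 := he x
    have h2 := he' y
    simp only [LinearMap.prodMap_apply, Prod.mk_eq_zero, h1, h2, Set.mem_range, Prod.exists,
      Prod.mk.injEq]
    constructor
    · rintro ⟨⟨a, ha⟩, ⟨b, hb⟩⟩
      exact ⟨a, b, ha, hb⟩
    · rintro ⟨a, b, ha, hb⟩
      exact ⟨⟨a, ha⟩, ⟨b, hb⟩⟩
  match n, ih with
  | 0, ih =>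
    obtain ⟨e⟩ := tor_zero A M (N := N × N')
    obtain ⟨e1⟩ := tor_zero A M (N := N)
    obtain ⟨e2⟩ := tor_zero A M (N := N')
    exact ⟨e ≪≫ₗ TensorProduct.prodRight A A M N N' ≪≫ₗ (e1.prodCongr e2).symm⟩
  | 1, ih =>
    obtain ⟨e⟩ := tor_one A M (K := LinearMap.ker p × LinearMap.ker p') (i.prodMap i') (p.prodMap p') hip hep hpp
    obtain ⟨e1⟩ := tor_one A M (K := LinearMap.ker p) i p hi he hp
    obtain ⟨e2⟩ := tor_one A M (K := LinearMap.ker p') i' p' hi' he' hp'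
    obtain ⟨e3⟩ := ker_lTensor_prod A M (K := LinearMap.ker p) (K' := LinearMap.ker p') i i'
    exact ⟨e ≪≫ₗ e3 ≪≫ₗ (e1.prodCongr e2).symm⟩
  | n + 2, ih =>
    obtain ⟨e⟩ := tor_succ A M (K := LinearMap.ker p × LinearMap.ker p') (i.prodMap i') (p.prodMap p') hip hep hpp n
    obtain ⟨e1⟩ := tor_succ A M (K := LinearMap.ker p) i p hi he hp n
    obtain ⟨e2⟩ := tor_succ A M (K := LinearMap.ker p') i' p' hi' he' hp' n
    obtain ⟨e3⟩ := ih (n + 1) (by omega) (LinearMap.ker p) (LinearMap.ker p')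
    exact ⟨e ≪≫ₗ e3 ≪≫ₗ (e1.prodCongr e2).symm⟩

lemma tor_finite [IsNoetherianRing A] [Module.Finite A M] (n : ℕ) (N : Type) [AddCommGroup N]
    [Module A N] [Module.Finite A N] : Module.Finite A (TorM A M N n) := by
  induction n using Nat.strong_induction_on generalizing N with
  | _ n ih =>
  obtain ⟨r, p, hp⟩ := Module.Finite.exists_fin' A N
  let i := (LinearMap.ker p).subtype
  have hi : Function.Injective i := Subtype.val_injective
  have he : Function.Exact i p := LinearMap.exact_subtype_ker_map p
  match n, ih with
  | 0, ih =>
    obtain ⟨e⟩ := tor_zero A M (N := N)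
    exact Module.Finite.equiv e.symm
  | 1, ih =>
    obtain ⟨e⟩ := tor_one A M (K := LinearMap.ker p) i p hi he hp
    exact Module.Finite.equiv e.symm
  | n + 2, ih =>
    obtain ⟨e⟩ := tor_succ A M (K := LinearMap.ker p) i p hi he hp n
    have := ih (n + 1) (by omega) (LinearMap.ker p)
    exact Module.Finite.equiv e.symm

end

/-- Isomorphism compatible with a change of rings. -/
def SemiIso (Q R : Type) [CommRing Q] [CommRing R] [Algebra Q R] (T T' : Type)
    [AddCommGroup T] [AddCommGroup T'] [Module Q T] [Module R T'] : Prop :=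
  ∃ e : T ≃+ T', ∀ (q : Q) (x : T), e (q • x) = algebraMap Q R q • e x

section
variable {Q R : Type} [CommRing Q] [CommRing R] [Algebra Q R] {T T' U U' : Type}
    [AddCommGroup T] [AddCommGroup T'] [Module Q T] [Module R T']
    [AddCommGroup U] [AddCommGroup U'] [Module Q U] [Module R U']

lemma SemiIso.congr (h : SemiIso Q R T T') (a : U ≃ₗ[Q] T) (b : T' ≃ₗ[R] U') :
    SemiIso Q R U U' := by
  obtain ⟨e, he⟩ := h
  refine ⟨a.toAddEquiv.trans (e.trans b.toAddEquiv), fun q x => ?_⟩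
  simp [he]

lemma SemiIso.ofLinear [Module Q T'] [IsScalarTower Q R T'] (e : T ≃ₗ[Q] T') : SemiIso Q R T T' :=
  ⟨e.toAddEquiv, fun q x => by simp⟩

end

section base
variable {Q R : Type} [CommRing Q] [CommRing R] [Algebra Q R]
variable (M : Type) [AddCommGroup M] [Module Q M] [Module R M] [IsScalarTower Q R M]
variable {N N' F F' : Type} [AddCommGroup N] [Module Q N] [AddCommGroup N'] [Module Q N'] [Module R N']
  [IsScalarTower Q R N'] [AddCommGroup F] [Module Q F] [AddCommGroup F'] [Module Q F'] [Module R F']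
  [IsScalarTower Q R F']

/-- The comparison map on tensor products. -/
noncomputable def tau (φ : N →ₗ[Q] N') : M ⊗[Q] N →ₗ[Q] M ⊗[R] N' :=
  TensorProduct.mapOfCompatibleSMul R Q Q M N' ∘ₗ φ.lTensor M

@[simp] lemma tau_tmul (φ : N →ₗ[Q] N') (m : M) (n : N) :
    tau (R := R) M φ (m ⊗ₜ n) = m ⊗ₜ φ n := rfl

lemma tau_bijective (hsurj : Function.Surjective (algebraMap Q R)) (f : Q)
    (hf : algebraMap Q R f = 0) (φ : N →ₗ[Q] N') (hφ : Function.Surjective φ)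
    (hk : ∀ x, φ x = 0 → ∃ y, x = f • y) : Function.Bijective (tau (R := R) M φ) := by
  have : TensorProduct.CompatibleSMul Q R M N' := ⟨fun r m n => by
    obtain ⟨q, rfl⟩ := hsurj r
    rw [algebraMap_smul, algebraMap_smul, TensorProduct.smul_tmul]⟩
  have hb : Function.Bijective (TensorProduct.mapOfCompatibleSMul R Q Q M N') :=
    (TensorProduct.equivOfCompatibleSMul R Q Q M N').bijective
  have hfM : ∀ m : M, f • m = 0 := fun m => by
    rw [← algebraMap_smul R f m, hf, zero_smul]
  refine hb.comp ⟨?_, LinearMap.lTensor_surjective M hφ⟩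
  have hex : Function.Exact (LinearMap.lsmul Q N f) φ := by
    intro x
    constructor
    · intro hx
      obtain ⟨y, rfl⟩ := hk x hx
      exact ⟨y, rfl⟩
    · rintro ⟨y, rfl⟩
      simp only [LinearMap.lsmul_apply, map_smul]
      rw [← algebraMap_smul R f (φ y), hf, zero_smul]
  have hex2 := lTensor_exact M hex hφ
  rw [← LinearMap.ker_eq_bot, LinearMap.exact_iff.1 hex2, LinearMap.range_eq_bot]
  ext m n
  simp [TensorProduct.smul_tmul', hfM]

lemma ker_semi (hsurj : Function.Surjective (algebraMap Q R)) (f : Q)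
    (hf : algebraMap Q R f = 0) (φ : N →ₗ[Q] N') (hφ : Function.Surjective φ)
    (hk : ∀ x, φ x = 0 → ∃ y, x = f • y)
    (ψ : F →ₗ[Q] F') (hψ : Function.Surjective ψ)
    (hkψ : ∀ x, ψ x = 0 → ∃ y, x = f • y)
    (i : N →ₗ[Q] F) (i' : N' →ₗ[R] F') (hc : ∀ x, ψ (i x) = i' (φ x)) :
    SemiIso Q R (LinearMap.ker (i.lTensor M)) (LinearMap.ker (i'.lTensor M)) := by
  obtain ⟨e⟩ := ker_equiv Q (i.lTensor M) ((i'.lTensor M).restrictScalars Q)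
    (LinearEquiv.ofBijective _ (tau_bijective M hsurj f hf φ hφ hk))
    (LinearEquiv.ofBijective _ (tau_bijective M hsurj f hf ψ hψ hkψ)) (by
      intro x
      induction x with
      | zero => simp
      | tmul m y => simp [hc]
      | add x y hx hy => simp only [map_add, hx, hy])
  refine ⟨e.toAddEquiv, fun q x => ?_⟩
  refine (map_smul e q x).trans ?_
  apply Subtype.ext
  exact (algebraMap_smul R q (e x : M ⊗[R] N')).symm

lemma semi_tor_zero (hsurj : Function.Surjective (algebraMap Q R)) (f : Q)
    (hf : algebraMap Q R f = 0) (φ : N →ₗ[Q] N') (hφ : Function.Surjective φ)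
    (hk : ∀ x, φ x = 0 → ∃ y, x = f • y) : SemiIso Q R (TorM Q M N 0) (TorM R M N' 0) := by
  obtain ⟨e1⟩ := tor_zero Q M (N := N)
  obtain ⟨e2⟩ := tor_zero R M (N := N')
  exact (SemiIso.ofLinear (LinearEquiv.ofBijective _
    (tau_bijective (R := R) M hsurj f hf φ hφ hk))).congr e1 e2.symm

end base

theorem semi_tor {Q R : Type} [CommRing Q] [CommRing R] [Algebra Q R]
    (M : Type) [AddCommGroup M] [Module Q M] [Module R M] [IsScalarTower Q R M]
    (hsurj : Function.Surjective (algebraMap Q R)) (f : Q)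
    (hker : ∀ q, algebraMap Q R q = 0 ↔ ∃ y, q = f * y)
    (hQ : f = 0 ∨ ∀ q : Q, f * q = 0 → q = 0) (n : ℕ)
    (N N' : Type) [AddCommGroup N] [Module Q N] [AddCommGroup N'] [Module Q N'] [Module R N']
    [IsScalarTower Q R N'] 
    (hN : f = 0 ∨ ∀ x : N, f • x = 0 → x = 0) (φ : N →ₗ[Q] N') (hφ : Function.Surjective φ)
    (hk : ∀ x, φ x = 0 → ∃ y, x = f • y) : SemiIso Q R (TorM Q M N n) (TorM R M N' n) := by
  have hf : algebraMap Q R f = 0 := (hker f).2 ⟨1, by simp⟩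
  have hfz : ∀ {X : Type} [AddCommGroup X] [Module Q X] [Module R X] [IsScalarTower Q R X] (x : X),
      f • x = 0 := fun x => by rw [← algebraMap_smul R f x, hf, zero_smul]
  induction n using Nat.strong_induction_on generalizing N N' with
  | _ n ih =>
  let p : (N →₀ Q) →ₗ[Q] N := Finsupp.linearCombination Q id
  let p' : (N →₀ R) →ₗ[R] N' := Finsupp.linearCombination R φ
  have hp : Function.Surjective p := Finsupp.linearCombination_id_surjective Q N
  have hp' : Function.Surjective p' := by
    intro y
    obtain ⟨x, rfl⟩ := hφ y
    exact ⟨Finsupp.single x 1, by simp [p']⟩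
  let i := (LinearMap.ker p).subtype
  let i' := (LinearMap.ker p').subtype
  have hi : Function.Injective i := Subtype.val_injective
  have hi' : Function.Injective i' := Subtype.val_injective
  have he : Function.Exact i p := LinearMap.exact_subtype_ker_map p
  have he' : Function.Exact i' p' := LinearMap.exact_subtype_ker_map p'
  let ψ : (N →₀ Q) →ₗ[Q] (N →₀ R) := Finsupp.mapRange.linearMap (Algebra.linearMap Q R)
  have hψ : Function.Surjective ψ := Finsupp.mapRange_surjective _ (map_zero _) hsurj
  have hψk : ∀ x, ψ x = 0 → ∃ y, x = f • y := by
    classical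
    intro x hx
    have h1 : ∀ a, ∃ y, x a = f * y := fun a => (hker _).1 (DFunLike.congr_fun hx a)
    choose y hy using h1
    refine ⟨Finsupp.onFinset x.support (fun a => if x a = 0 then 0 else y a) ?_, ?_⟩
    · intro a ha
      rw [Finsupp.mem_support_iff]
      intro h
      simp [h] at ha
    · ext a
      by_cases h : x a = 0
      · simp [h]
      · simp [h, ← hy]
  have hc : ∀ x, p' (ψ x) = φ (p x) := by
    intro x
    induction x using Finsupp.induction_linear with
    | zero => simp
    | add x y hx hy => simp only [map_add, hx, hy]
    | single a b => simp [p, p', ψ]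
  have hpψ : ∀ x : LinearMap.ker p, ψ x ∈ (LinearMap.ker p').restrictScalars Q := fun x => by
    change p' (ψ x) = 0
    rw [hc, x.2, map_zero]
  let χ : LinearMap.ker p →ₗ[Q] LinearMap.ker p' :=
    LinearMap.codRestrict ((LinearMap.ker p').restrictScalars Q) (ψ ∘ₗ i) hpψ
  have hχ : Function.Surjective χ := by
    rintro ⟨x', hx'⟩
    obtain ⟨x, rfl⟩ := hψ x'
    have h1 : φ (p x) = 0 := by rw [← hc]; exact hx'
    obtain ⟨y, hy⟩ := hk _ h1
    obtain ⟨z, rfl⟩ := hp y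
    refine ⟨⟨x - f • z, ?_⟩, ?_⟩
    · rw [LinearMap.mem_ker, map_sub, map_smul, hy, sub_self]
    · apply Subtype.ext
      change ψ (x - f • z) = ψ x
      rw [map_sub, map_smul, hfz, sub_zero]
  have hχk : ∀ x, χ x = 0 → ∃ y, x = f • y := by
    rintro ⟨x, hx⟩ h
    have h1 : ψ x = 0 := congrArg Subtype.val h
    obtain ⟨y, rfl⟩ := hψk x h1
    rcases hN with h0 | hN
    · exact ⟨0, by apply Subtype.ext; simp [h0]⟩
    · refine ⟨⟨y, hN _ ?_⟩, rfl⟩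
      rw [← map_smul]; exact hx
  have hK : f = 0 ∨ ∀ x : LinearMap.ker p, f • x = 0 → x = 0 := by
    rcases hQ with h0 | hQ
    · exact Or.inl h0
    · right
      rintro ⟨x, hx⟩ h
      apply Subtype.ext
      ext a
      exact hQ _ (DFunLike.congr_fun (congrArg Subtype.val h) a)
  match n, ih with
  | 0, ih => exact semi_tor_zero M hsurj f hf φ hφ hk
  | 1, ih =>
    obtain ⟨e1⟩ := tor_one Q M (K := LinearMap.ker p) i p hi he hp
    obtain ⟨e2⟩ := tor_one R M (K := LinearMap.ker p') i' p' hi' he' hp'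
    have h := ker_semi M (N := LinearMap.ker p) (N' := LinearMap.ker p') hsurj f hf χ hχ hχk
      ψ hψ hψk i i' (fun x => rfl)
    exact h.congr e1 e2.symm
  | n + 2, ih =>
    obtain ⟨e1⟩ := tor_succ Q M (K := LinearMap.ker p) i p hi he hp n
    obtain ⟨e2⟩ := tor_succ R M (K := LinearMap.ker p') i' p' hi' he' hp' n
    exact (ih (n + 1) (by omega) (LinearMap.ker p) (LinearMap.ker p') hK χ hχ hχk).congr e1 e2.symm
end BettiAux

namespace BettiAux
open IsLocalRing
section
variable {Q R : Type} [CommRing Q] [IsLocalRing Q] [CommRing R] [IsLocalRing R] [Algebra Q R]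

lemma alg_mem_iff (hsurj : Function.Surjective (algebraMap Q R)) (x : Q) :
    algebraMap Q R x ∈ maximalIdeal R ↔ x ∈ maximalIdeal Q := by
  have := hsurj.isLocalHom
  simp only [mem_maximalIdeal, mem_nonunits_iff, isUnit_map_iff]

lemma exists_resMap (hsurj : Function.Surjective (algebraMap Q R)) :
    ∃ φ : ResidueField Q →ₗ[Q] ResidueField R, Function.Bijective φ ∧ φ 1 = 1 := by
  have := hsurj.isLocalHom
  refine ⟨{ toFun := ResidueField.map (algebraMap Q R), map_add' := map_add _, map_smul' := ?_ },
    ⟨(ResidueField.map (algebraMap Q R)).injective, ?_⟩, map_one (ResidueField.map (algebraMap Q R))⟩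
  · intro q x
    obtain ⟨y, rfl⟩ := residue_surjective x
    change ResidueField.map _ (q • residue Q y) = q • ResidueField.map _ (residue Q y)
    rw [Algebra.smul_def, map_mul, Algebra.smul_def]
    rfl
  · intro y
    obtain ⟨r, rfl⟩ := residue_surjective y
    obtain ⟨q, rfl⟩ := hsurj r
    exact ⟨residue Q q, rfl⟩

lemma exists_phi (hsurj : Function.Surjective (algebraMap Q R)) [IsNoetherianRing Q] (f : Q)
    (hfm : f ∈ maximalIdeal Q) (hf2 : f ∉ maximalIdeal Q ^ 2) :
    ∃ φ : maximalIdeal Q →ₗ[Q] ResidueField R, φ ⟨f, hfm⟩ = 1 := by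
  obtain ⟨ρ, -, hρ⟩ := exists_resMap hsurj
  have h : (maximalIdeal Q).toCotangent ⟨f, hfm⟩ ≠ 0 := fun h =>
    hf2 ((Ideal.toCotangent_eq_zero _ _).1 h)
  obtain ⟨g, hg⟩ := Module.Projective.exists_dual_eq_one (ResidueField Q) (V := CotangentSpace Q) h
  refine ⟨ρ ∘ₗ (g.restrictScalars Q) ∘ₗ (maximalIdeal Q).toCotangent, ?_⟩
  change ρ (g _) = 1
  rw [hg, hρ]

theorem exists_pi [IsNoetherianRing Q] (hsurj : Function.Surjective (algebraMap Q R)) (f : Q)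
    (hker : ∀ q, algebraMap Q R q = 0 ↔ ∃ y, q = f * y)
    (hfm : f ∈ maximalIdeal Q) (hf2 : f ∉ maximalIdeal Q ^ 2) :
    ∃ π : maximalIdeal Q →ₗ[Q] ResidueField R × maximalIdeal R,
      Function.Surjective π ∧ (∀ x, π x = 0 → ∃ y, x = f • y) ∧
      ∀ x, ((π x).2 : R) = algebraMap Q R x := by
  obtain ⟨φ, hφ⟩ := exists_phi hsurj f hfm hf2
  let α : maximalIdeal Q →ₗ[Q] maximalIdeal R :=
    LinearMap.codRestrict ((maximalIdeal R).restrictScalars Q)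
      (Algebra.linearMap Q R ∘ₗ (maximalIdeal Q).subtype)
      (fun x => (alg_mem_iff hsurj _).2 x.2)
  have hα : ∀ x, (α x : R) = algebraMap Q R x := fun x => rfl
  have hf : algebraMap Q R f = 0 := (hker f).2 ⟨1, by simp⟩
  refine ⟨φ.prod α, ?_, ?_, hα⟩
  · rintro ⟨a, r, hr⟩
    obtain ⟨x, rfl⟩ := hsurj r
    have hx := (alg_mem_iff hsurj _).1 hr
    obtain ⟨c, hc⟩ := residue_surjective (a - φ ⟨x, hx⟩)
    obtain ⟨c, rfl⟩ := hsurj c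
    refine ⟨⟨x, hx⟩ + c • ⟨f, hfm⟩, Prod.ext ?_ (Subtype.ext ?_)⟩
    · change φ _ = a
      have : c • (1 : ResidueField R) = a - φ ⟨x, hx⟩ := by
        rw [← hc, Algebra.smul_def, mul_one]; rfl
      rw [map_add, map_smul, hφ, this]; abel
    · change algebraMap Q R (x + c * f) = algebraMap Q R x
      simp [hf]
  · rintro ⟨x, hx⟩ h
    have h1 : φ ⟨x, hx⟩ = 0 := congrArg Prod.fst h
    have h2 : algebraMap Q R x = 0 := congrArg Subtype.val (congrArg Prod.snd h)
    obtain ⟨y, rfl⟩ := (hker _).1 h2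
    have h3 : (⟨f * y, hx⟩ : maximalIdeal Q) = y • ⟨f, hfm⟩ := Subtype.ext (mul_comm _ _)
    rw [h3, map_smul, hφ, Algebra.smul_def, mul_one] at h1
    have h4 : residue R (algebraMap Q R y) = 0 := h1
    rw [residue_eq_zero_iff, alg_mem_iff hsurj] at h4
    exact ⟨⟨y, h4⟩, rfl⟩

theorem tor_step [IsNoetherianRing Q]
    (M : Type) [AddCommGroup M] [Module Q M] [Module R M] [IsScalarTower Q R M]
    (hsurj : Function.Surjective (algebraMap Q R)) (f : Q)
    (hker : ∀ q, algebraMap Q R q = 0 ↔ ∃ y, q = f * y)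
    (hQ : ∀ q : Q, f * q = 0 → q = 0)
    (hfm : f ∈ maximalIdeal Q) (hf2 : f ∉ maximalIdeal Q ^ 2) (n : ℕ) :
    SemiIso Q R (TorM Q M (ResidueField Q) (n + 1))
      (TorM R M (ResidueField R) n × TorM R M (ResidueField R) (n + 1)) := by
  have hf : algebraMap Q R f = 0 := (hker f).2 ⟨1, by simp⟩
  obtain ⟨π, hπ, hπk, hπ2⟩ := exists_pi hsurj f hker hfm hf2
  let p := Algebra.linearMap Q (ResidueField Q)
  let p' := Algebra.linearMap R (ResidueField R)
  have hp : Function.Surjective p := residue_surjective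
  have hp' : Function.Surjective p' := residue_surjective
  let i := (maximalIdeal Q).subtype
  let i' := (maximalIdeal R).subtype
  have hi : Function.Injective i := Subtype.val_injective
  have hi' : Function.Injective i' := Subtype.val_injective
  have he : Function.Exact i p := fun x => by
    change residue Q x = 0 ↔ _
    rw [residue_eq_zero_iff]
    simp [i]
  have he' : Function.Exact i' p' := fun x => by
    change residue R x = 0 ↔ _
    rw [residue_eq_zero_iff]
    simp [i']
  match n with
  | 0 =>
    obtain ⟨e1⟩ := tor_one Q M (K := maximalIdeal Q) i p hi he hp
    obtain ⟨e2⟩ := tor_one R M (K := maximalIdeal R) i' p' hi' he' hp'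
    obtain ⟨e0⟩ := tor_zero R M (N := ResidueField R)
    have h := ker_semi M (N := maximalIdeal Q) (N' := ResidueField R × maximalIdeal R) hsurj f hf
      π hπ hπk (Algebra.linearMap Q R) hsurj (fun x hx => (hker x).1 hx) i
      (i' ∘ₗ LinearMap.snd R _ _) (fun x => (hπ2 x).symm)
    obtain ⟨e3⟩ := ker_equiv R ((i' ∘ₗ LinearMap.snd R (ResidueField R) (maximalIdeal R)).lTensor M)
      ((0 : M ⊗[R] ResidueField R →ₗ[R] PUnit.{1}).prodMap (i'.lTensor M))
      (TensorProduct.prodRight R R M (ResidueField R) (maximalIdeal R))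
      (LinearEquiv.uniqueProd (R := R) (M₂ := PUnit.{1})).symm (by
        intro x
        induction x with
        | zero => simp
        | tmul m y => simp [LinearEquiv.uniqueProd]
        | add x y hx hy => simp only [map_add, hx, hy])
    obtain ⟨e4⟩ := ker_prodMap_equiv R (0 : M ⊗[R] ResidueField R →ₗ[R] PUnit.{1}) (i'.lTensor M)
    have e5 : LinearMap.ker (0 : M ⊗[R] ResidueField R →ₗ[R] PUnit.{1}) ≃ₗ[R]
      M ⊗[R] ResidueField R := LinearEquiv.ofTop _ LinearMap.ker_zero
    exact h.congr e1 (e3 ≪≫ₗ e4 ≪≫ₗ (e5 ≪≫ₗ e0.symm).prodCongr e2.symm)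
  | n + 1 =>
    obtain ⟨e1⟩ := tor_succ Q M (K := maximalIdeal Q) i p hi he hp n
    obtain ⟨e2⟩ := tor_succ R M (K := maximalIdeal R) i' p' hi' he' hp' n
    obtain ⟨e3⟩ := tor_prod R M (n + 1) (ResidueField R) (maximalIdeal R)
    have h := semi_tor M hsurj f hker (Or.inr hQ) (n + 1) (maximalIdeal Q)
      (ResidueField R × maximalIdeal R)
      (Or.inr fun x hx => Subtype.ext (hQ _ (congrArg Subtype.val hx))) π hπ hπk
    exact h.congr e1 (e3 ≪≫ₗ (LinearEquiv.refl R _).prodCongr e2.symm)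

theorem tor_step_zero
    (M : Type) [AddCommGroup M] [Module Q M] [Module R M] [IsScalarTower Q R M]
    (hsurj : Function.Surjective (algebraMap Q R)) :
    SemiIso Q R (TorM Q M (ResidueField Q) 0) (TorM R M (ResidueField R) 0) := by
  obtain ⟨ρ, hρ, -⟩ := exists_resMap hsurj
  exact semi_tor_zero M hsurj 0 (map_zero _) ρ hρ.2
    (fun x hx => ⟨0, by rw [smul_zero]; exact hρ.1 (by rw [hx, map_zero])⟩)

theorem tor_bij
    (M : Type) [AddCommGroup M] [Module Q M] [Module R M] [IsScalarTower Q R M]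
    (hbij : Function.Bijective (algebraMap Q R)) (n : ℕ) :
    SemiIso Q R (TorM Q M (ResidueField Q) n) (TorM R M (ResidueField R) n) := by
  obtain ⟨ρ, hρ, -⟩ := exists_resMap hbij.2
  exact semi_tor M hbij.2 0 (fun q => by
      rw [map_eq_zero_iff _ hbij.1]; simp) (Or.inl rfl) n _ _ (Or.inl rfl) ρ hρ.2
    (fun x hx => ⟨0, by rw [smul_zero]; exact hρ.1 (by rw [hx, map_zero])⟩)
end
end BettiAux

namespace BettiAux
open IsLocalRing

lemma finrank_eq_spanFinrank (A : Type) [CommRing A] [IsLocalRing A] (T : Type) [AddCommGroup T]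
    [Module A T] [Module.Finite A T] :
    Module.finrank (ResidueField A) (ResidueField A ⊗[A] T) =
      (⊤ : Submodule A T).spanFinrank := by
  rw [← TensorProduct.spanFinrank_top_eq_of_residueField (⊤ : Submodule A T) Module.Finite.fg_top,
    ← Module.finrank_eq_spanFinrank_of_free]
  exact (LinearEquiv.baseChange A (ResidueField A) _ _ Submodule.topEquiv.symm).finrank_eq

lemma finrank_prod (A : Type) [CommRing A] [IsLocalRing A] (T T' : Type) [AddCommGroup T]
    [Module A T] [Module.Finite A T] [AddCommGroup T'] [Module A T'] [Module.Finite A T'] :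
    Module.finrank (ResidueField A) (ResidueField A ⊗[A] (T × T')) =
      Module.finrank (ResidueField A) (ResidueField A ⊗[A] T) +
      Module.finrank (ResidueField A) (ResidueField A ⊗[A] T') := by
  rw [(TensorProduct.prodRight A (ResidueField A) (ResidueField A) T T').finrank_eq,
    Module.finrank_prod]

lemma SemiIso.finrank_eq {Q R : Type} [CommRing Q] [IsLocalRing Q] [CommRing R] [IsLocalRing R]
    [Algebra Q R] (hsurj : Function.Surjective (algebraMap Q R)) {T T' : Type}
    [AddCommGroup T] [AddCommGroup T'] [Module Q T] [Module R T'] [Module.Finite Q T]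
    [Module.Finite R T'] (h : SemiIso Q R T T') :
    Module.finrank (ResidueField Q) (ResidueField Q ⊗[Q] T) =
      Module.finrank (ResidueField R) (ResidueField R ⊗[R] T') := by
  obtain ⟨e, he⟩ := h
  have : RingHomSurjective (algebraMap Q R) := ⟨hsurj⟩
  let g : T →ₛₗ[algebraMap Q R] T' := { toFun := e, map_add' := map_add e, map_smul' := he }
  rw [finrank_eq_spanFinrank, finrank_eq_spanFinrank]
  have h1 : Submodule.map g ⊤ = ⊤ := by
    rw [Submodule.map_top, LinearMap.range_eq_top]
    exact e.surjective
  rw [← h1]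
  exact (Submodule.spanFinrank_map_eq_of_injective g e.injective).symm

section
variable {Q R : Type} [CommRing Q] [IsLocalRing Q] [CommRing R] [IsLocalRing R] [Algebra Q R]
  [IsNoetherianRing Q]

/-- The Poincare series. -/
noncomputable def PS (A : Type) [CommRing A] [IsLocalRing A]
    (M : Type) [AddCommGroup M] [Module A M] : PowerSeries ℕ :=
  PowerSeries.mk (bettiNumber A M)

theorem PS_step (M : Type) [AddCommGroup M] [Module Q M] [Module R M] [IsScalarTower Q R M]
    [Module.Finite R M]
    (hsurj : Function.Surjective (algebraMap Q R)) (f : Q)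
    (hker : ∀ q, algebraMap Q R q = 0 ↔ ∃ y, q = f * y)
    (hQ : ∀ q : Q, f * q = 0 → q = 0)
    (hfm : f ∈ maximalIdeal Q) (hf2 : f ∉ maximalIdeal Q ^ 2) :
    PS Q M = (1 + PowerSeries.X) * PS R M := by
  have : IsNoetherianRing R := isNoetherianRing_of_surjective Q R _ hsurj
  have : Module.Finite Q R := Module.Finite.of_surjective (Algebra.linearMap Q R) hsurj
  have : Module.Finite Q M := Module.Finite.trans R M
  have fQ := fun n => tor_finite Q M n (ResidueField Q)
  have fR := fun n => tor_finite R M n (ResidueField R)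
  ext n
  rw [add_mul, one_mul]
  cases n with
  | zero =>
    simp only [map_add, PowerSeries.coeff_zero_X_mul, add_zero, PS, PowerSeries.coeff_mk]
    have := fQ 0
    have := fR 0
    exact (tor_step_zero M hsurj).finrank_eq hsurj
  | succ n =>
    simp only [map_add, PowerSeries.coeff_succ_X_mul, PS, PowerSeries.coeff_mk]
    have := fQ (n + 1)
    have := fR (n + 1)
    have := fR n
    rw [add_comm (bettiNumber R M (n + 1))]
    exact ((tor_step M hsurj f hker hQ hfm hf2 n).finrank_eq hsurj).trans (finrank_prod R _ _)

theorem PS_bij (M : Type) [AddCommGroup M] [Module Q M] [Module R M] [IsScalarTower Q R M]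
    [Module.Finite R M] (hbij : Function.Bijective (algebraMap Q R)) :
    PS Q M = PS R M := by
  have hsurj := hbij.2
  have : IsNoetherianRing R := isNoetherianRing_of_surjective Q R _ hsurj
  have : Module.Finite Q R := Module.Finite.of_surjective (Algebra.linearMap Q R) hsurj
  have : Module.Finite Q M := Module.Finite.trans R M
  ext n
  have := tor_finite Q M n (ResidueField Q)
  have := tor_finite R M n (ResidueField R)
  simp only [PS, PowerSeries.coeff_mk]
  exact (tor_bij M hbij n).finrank_eq hsurj
end

lemma coeff_final (n i : ℕ) (b : ℕ → ℕ) :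
    PowerSeries.coeff i ((1 + PowerSeries.X) ^ n * PowerSeries.mk b) =
      ∑ j ∈ Finset.range (min n i + 1), Nat.choose n j * b (i - j) := by
  have h1 : ∀ j, PowerSeries.coeff j ((1 + PowerSeries.X : PowerSeries ℕ) ^ n) = n.choose j := by
    intro j
    have : ((1 + PowerSeries.X : PowerSeries ℕ) ^ n) =
      (((1 + Polynomial.X) ^ n : Polynomial ℕ) : PowerSeries ℕ) := by simp
    rw [this, Polynomial.coeff_coe, Polynomial.coeff_one_add_X_pow, Nat.cast_id]
  rw [PowerSeries.coeff_mul, Finset.Nat.sum_antidiagonal_eq_sum_range_succ_mk]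
  simp only [h1, PowerSeries.coeff_mk]
  symm
  apply Finset.sum_subset
  · intro j hj
    simp only [Finset.mem_range] at *
    omega
  · intro j hj hj'
    simp only [Finset.mem_range] at *
    rw [Nat.choose_eq_zero_of_lt (by omega), zero_mul]

end BettiAux

namespace BettiAux
open IsLocalRing RingTheory.Sequence

set_option maxHeartbeats 1000000 in
theorem PS_list (Q : Type) [CommRing Q] [IsLocalRing Q] [IsNoetherianRing Q] (rs : List Q)
    (hreg : IsWeaklyRegular Q rs) (hm : ∀ r ∈ rs, r ∈ maximalIdeal Q)
    (hmin : Ideal.ofList rs ⊓ maximalIdeal Q ^ 2 ≤ maximalIdeal Q * Ideal.ofList rs)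
    (R : Type) [CommRing R] [IsLocalRing R] [Algebra Q R]
    (hsurj : Function.Surjective (algebraMap Q R))
    (hker : ∀ q, algebraMap Q R q = 0 ↔ q ∈ Ideal.ofList rs)
    (M : Type) [AddCommGroup M] [Module Q M] [Module R M] [IsScalarTower Q R M]
    [Module.Finite R M] :
    PS Q M = (1 + PowerSeries.X) ^ rs.length * PS R M := by
  induction rs using List.reverseRecOn generalizing R with
  | nil =>
    rw [List.length_nil, pow_zero, one_mul]
    refine PS_bij M ⟨(injective_iff_map_eq_zero _).2 fun q hq => ?_, hsurj⟩
    simpa using (hker q).1 hq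
  | append_singleton rs g ih =>
    rw [isWeaklyRegular_append_iff, isWeaklyRegular_singleton_iff,
      isSMulRegular_quotient_iff_mem_of_smul_mem] at hreg
    obtain ⟨hreg, hg⟩ := hreg
    have hg : ∀ x, g * x ∈ Ideal.ofList rs → x ∈ Ideal.ofList rs := by
      intro x hx
      have := hg x (by simpa using hx)
      simpa using this
    rw [Ideal.ofList_append, Ideal.ofList_singleton] at hmin
    simp only [Ideal.ofList_append, Ideal.ofList_singleton] at hker
    have hgm : g ∈ maximalIdeal Q := hm g (by simp)
    have hrm : ∀ r ∈ rs, r ∈ maximalIdeal Q := fun r hr => hm r (by simp [hr])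
    generalize hJ : Ideal.ofList rs = J at *
    have hJm : J ≤ maximalIdeal Q := by
      rw [← hJ, Ideal.ofList, Ideal.span_le]
      exact fun r hr => hrm r hr
    have hdec : ∀ x ∈ (J ⊔ Ideal.span {g}) ⊓ maximalIdeal Q ^ 2, ∃ z ∈ maximalIdeal Q * J,
        ∃ c ∈ maximalIdeal Q, x = z + c * g := by
      intro x hx
      have h1 := hmin hx
      rw [Ideal.mul_sup, Submodule.mem_sup] at h1
      obtain ⟨z, hz, y, hy, rfl⟩ := h1
      obtain ⟨c, hc, rfl⟩ := Ideal.mem_mul_span_singleton.1 hy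
      exact ⟨z, hz, c, hc, rfl⟩
    have hmJ : maximalIdeal Q * J ≤ J := Ideal.mul_le_right
    have hmin' : J ⊓ maximalIdeal Q ^ 2 ≤ maximalIdeal Q * J := by
      intro x hx
      obtain ⟨z, hz, c, hc, rfl⟩ := hdec x ⟨Ideal.mem_sup_left hx.1, hx.2⟩
      refine add_mem hz ?_
      rw [mul_comm c g]
      refine Ideal.mul_mem_mul hgm (hg c ?_)
      rw [mul_comm g c]
      exact (Submodule.add_mem_iff_right _ (hmJ hz)).1 hx.1
    have : Nontrivial (Q ⧸ J) := Ideal.Quotient.nontrivial_iff.2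
      (fun h => (maximalIdeal.isMaximal Q).ne_top (top_le_iff.1 (h ▸ hJm)))
    have : IsLocalRing (Q ⧸ J) := IsLocalRing.of_surjective' (Ideal.Quotient.mk J)
      Ideal.Quotient.mk_surjective
    let θ : Q ⧸ J →+* R := Ideal.Quotient.lift J (algebraMap Q R)
      (fun a ha => (hker a).2 (Ideal.mem_sup_left ha))
    let _ : Algebra (Q ⧸ J) R := θ.toAlgebra
    have hθ : ∀ q : Q, algebraMap (Q ⧸ J) R (Ideal.Quotient.mk J q) = algebraMap Q R q :=
      fun q => rfl
    let _ : Module (Q ⧸ J) M := Module.compHom M θ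
    have hsm : ∀ (q : Q ⧸ J) (m : M), q • m = algebraMap (Q ⧸ J) R q • m := fun q m => rfl
    have : IsScalarTower (Q ⧸ J) R M := ⟨fun q r m => by
      rw [hsm, Algebra.smul_def, mul_smul]⟩
    have : IsScalarTower Q (Q ⧸ J) M := ⟨fun q r m => by
      obtain ⟨r, rfl⟩ := Ideal.Quotient.mk_surjective r
      rw [hsm, hsm, hθ, Algebra.smul_def, Ideal.Quotient.algebraMap_eq, ← map_mul, hθ, map_mul,
        mul_smul, algebraMap_smul]⟩
    have hsurj' : Function.Surjective (algebraMap (Q ⧸ J) R) := fun r => by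
      obtain ⟨q, rfl⟩ := hsurj r
      exact ⟨Ideal.Quotient.mk J q, rfl⟩
    have : Module.Finite (Q ⧸ J) R :=
      Module.Finite.of_surjective (Algebra.linearMap (Q ⧸ J) R) hsurj'
    have : Module.Finite (Q ⧸ J) M := Module.Finite.trans R M
    have hmk : Function.Surjective (algebraMap Q (Q ⧸ J)) := Ideal.Quotient.mk_surjective
    have h1 := ih hreg hrm hmin' (Q ⧸ J) hmk (fun q => Ideal.Quotient.eq_zero_iff_mem)
    have h2 : PS (Q ⧸ J) M = (1 + PowerSeries.X) * PS R M := by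
      refine PS_step M hsurj' (Ideal.Quotient.mk J g) ?_ ?_ ((alg_mem_iff hmk g).2 hgm) ?_
      · intro q
        obtain ⟨q, rfl⟩ := Ideal.Quotient.mk_surjective q
        rw [hθ, hker, Submodule.mem_sup]
        constructor
        · rintro ⟨j, hj, z, hz, rfl⟩
          obtain ⟨a, rfl⟩ := Ideal.mem_span_singleton'.1 hz
          refine ⟨Ideal.Quotient.mk J a, ?_⟩
          rw [map_add, Ideal.Quotient.eq_zero_iff_mem.2 hj, zero_add, map_mul, mul_comm]
        · rintro ⟨y, hy⟩
          obtain ⟨y, rfl⟩ := Ideal.Quotient.mk_surjective y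
          rw [← map_mul, Ideal.Quotient.eq] at hy
          exact ⟨_, hy, g * y, Ideal.mem_span_singleton.2 ⟨y, rfl⟩, by ring⟩
      · intro q hq
        obtain ⟨q, rfl⟩ := Ideal.Quotient.mk_surjective q
        rw [← map_mul, Ideal.Quotient.eq_zero_iff_mem] at hq
        exact Ideal.Quotient.eq_zero_iff_mem.2 (hg q hq)
      · intro h
        have hmm : maximalIdeal (Q ⧸ J) ≤ Ideal.map (Ideal.Quotient.mk J) (maximalIdeal Q) := by
          intro x hx
          obtain ⟨x, rfl⟩ := Ideal.Quotient.mk_surjective x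
          exact Ideal.mem_map_of_mem _ ((alg_mem_iff hmk x).1 hx)
        have h3 := Ideal.pow_right_mono hmm 2 h
        rw [← Ideal.map_pow, Ideal.mem_map_iff_of_surjective _ Ideal.Quotient.mk_surjective] at h3
        obtain ⟨x, hx, hxg⟩ := h3
        rw [Ideal.Quotient.eq] at hxg
        have hxs : x ∈ J ⊔ Ideal.span {g} := by
          have := add_mem (Ideal.mem_sup_left hxg)
            (Ideal.mem_sup_right (S := J) (Ideal.mem_span_singleton_self g))
          rwa [sub_add_cancel] at this
        obtain ⟨z, hz, c, hc, hxe⟩ := hdec x ⟨hxs, hx⟩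
        have h4 : g * (1 - c) ∈ J := by
          have : g * (1 - c) = z - (x - g) := by rw [hxe]; ring
          rw [this]
          exact sub_mem (hmJ hz) hxg
        have h5 := add_mem (hJm (hg _ h4)) hc
        rw [sub_add_cancel] at h5
        exact (Ideal.ne_top_iff_one _).1 (maximalIdeal.isMaximal Q).ne_top h5
    rw [h1, h2, List.length_append, List.length_singleton, pow_succ, mul_assoc]

end BettiAux

/-- **Nagata's equality.** If `f₁, …, fₙ` is a `Q`-regular sequence contained in
the maximal ideal `m` of a Noetherian local ring `Q`, `I = (f₁, …, fₙ)`, `R = Q/I`,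
and `I ∩ m² ⊆ m·I`, then for every finitely generated `R`-module `M` and all `i ≥ 0`,
`β_i^Q(M) = ∑_{j=0}^{min(n,i)} C(n,j) · β_{i−j}^R(M)`, i.e.
`P_M^Q(t) = P_M^R(t)·(1+t)^n`. -/
theorem betti_base_eq_of_regular_sequence_of_minimal
    (Q : Type) [CommRing Q] [IsNoetherianRing Q] [IsLocalRing Q]
    (n : ℕ) (f : Fin n → Q)
    (hreg : RingTheory.Sequence.IsRegular Q (List.ofFn f))
    (hfm : ∀ j, f j ∈ IsLocalRing.maximalIdeal Q)
    (I : Ideal Q) (hI : I = Ideal.span (Set.range f))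
    [IsLocalRing (Q ⧸ I)]
    (hmin : I ⊓ (IsLocalRing.maximalIdeal Q) ^ 2 ≤ IsLocalRing.maximalIdeal Q * I)
    (M : Type) [AddCommGroup M] [Module Q M] [Module (Q ⧸ I) M]
    [IsScalarTower Q (Q ⧸ I) M] [Module.Finite (Q ⧸ I) M]
    (i : ℕ) :
    bettiNumber Q M i =
      ∑ j ∈ Finset.range (min n i + 1),
        Nat.choose n j * bettiNumber (Q ⧸ I) M (i - j) := by
  have hI' : Ideal.ofList (List.ofFn f) = I := by
    rw [hI, Ideal.ofList]
    congr 1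
    ext x
    simp [List.mem_ofFn]
  have h := BettiAux.PS_list Q (List.ofFn f) hreg.toIsWeaklyRegular
    (fun r hr => by
      obtain ⟨j, rfl⟩ := (List.mem_ofFn' f r).1 hr
      exact hfm j)
    (by rw [hI']; exact hmin) (Q ⧸ I) Ideal.Quotient.mk_surjective
    (fun q => by rw [hI']; exact Ideal.Quotient.eq_zero_iff_mem) M
  rw [List.length_ofFn] at h
  have h2 := congrArg (PowerSeries.coeff i) h
  rw [BettiAux.PS, BettiAux.PS, PowerSeries.coeff_mk, BettiAux.coeff_final] at h2
  exact h2
end
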